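/- Let 0 < r1 ≤ r2 and let n be an integer with 2 ≤ n ≤ 5. Then there exist real numbers ṽ* and ṽ** with 0 < ṽ* ≤ ṽ** such that the isoperimetric profile of T^2 × R^n = S^1_{r1} × S^1_{r2} × R^n satisfies: for every v with 0 < v ≤ ṽ*, I_{T^2×R^n}(v) = I_{S^1_{r1}×R^{n+1}}(v), and for every v ≥ ṽ**, I_{T^2×R^n}(v) = f_n(v). -/

import Mathlib

open MeasureTheory Real ENNReal NNReal

noncomputable section

/-- The flat circle of radius `r` (circumference `2πr`), i.e. `ℝ / (2πr)ℤ`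
with the quotient (arc-length) metric. -/
abbrev Circ (r : ℝ) : Type := AddCircle (2 * Real.pi * r)

/-- `d`-dimensional Hausdorff (Riemannian) measure of a subset of a metric space. -/
noncomputable def haus (X : Type*) [EMetricSpace X] (d : ℕ) (s : Set X) : ℝ≥0∞ :=
  letI : MeasurableSpace X := borel X
  haveI : BorelSpace X := ⟨rfl⟩
  (MeasureTheory.Measure.hausdorffMeasure (d : ℝ) : Measure X) s

/-- A closed region is the closure of an open set. -/
def IsClosedRegion {X : Type*} [TopologicalSpace X] (U : Set X) : Prop :=
  ∃ V : Set X, IsOpen V ∧ U = closure V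

/-- The isoperimetric profile of an `m`-dimensional space `X`:
the infimum of the `(m-1)`-dimensional boundary measures of closed regions
of `m`-dimensional measure `v`. -/
noncomputable def isoProfile (X : Type*) [EMetricSpace X] (m : ℕ) (v : ℝ≥0∞) : ℝ≥0∞ :=
  ⨅ (U : Set X) (_ : IsClosedRegion U ∧ haus X m U = v), haus X (m - 1) (frontier U)

/-- An isoperimetric region in the `m`-dimensional space `X`. -/
def IsIsoRegion (X : Type*) [EMetricSpace X] (m : ℕ) (Ω : Set X) : Prop :=
  IsClosedRegion Ω ∧ haus X (m - 1) (frontier Ω) = isoProfile X m (haus X m Ω)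

/-- Euclidean `n`-space. -/
abbrev EucSp (n : ℕ) : Type := EuclideanSpace ℝ (Fin n)

/-- The Riemannian product `S¹_r × ℝ^m` (with the `ℓ²` product metric). -/
abbrev S1R (r : ℝ) (m : ℕ) : Type := WithLp 2 (Circ r × EucSp m)

/-- The Riemannian product `S¹_{r1} × S¹_{r2} × ℝ^n = T² × ℝ^n`. -/
abbrev T2R (r1 r2 : ℝ) (n : ℕ) : Type := WithLp 2 (Circ r1 × S1R r2 n)

/-- first circle coordinate of a point of `T² × ℝ^n` -/
def t2fst {r1 r2 : ℝ} {n : ℕ} (p : T2R r1 r2 n) : Circ r1 :=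
  (WithLp.equiv 2 (Circ r1 × S1R r2 n) p).1

/-- second circle coordinate of a point of `T² × ℝ^n` -/
def t2snd {r1 r2 : ℝ} {n : ℕ} (p : T2R r1 r2 n) : Circ r2 :=
  (WithLp.equiv 2 (Circ r2 × EucSp n) ((WithLp.equiv 2 (Circ r1 × S1R r2 n) p).2)).1

/-- Euclidean coordinate of a point of `T² × ℝ^n` -/
def t2euc {r1 r2 : ℝ} {n : ℕ} (p : T2R r1 r2 n) : EucSp n :=
  (WithLp.equiv 2 (Circ r2 × EucSp n) ((WithLp.equiv 2 (Circ r1 × S1R r2 n) p).2)).2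

/-- `ω_n`, the `n`-dimensional volume of the unit round sphere `Sⁿ ⊂ ℝ^{n+1}`. -/
noncomputable def omegaS (n : ℕ) : ℝ :=
  (haus (EucSp (n+1)) n (Metric.sphere (0 : EucSp (n+1)) 1)).toReal

/-- `β_n(r) = n^{(n-1)(n+1)} (2πr ω_{n-1})^{n+1} (1+n)^{-n²} ω_n^{-n}`. -/
noncomputable def betaC (n : ℕ) (r : ℝ) : ℝ :=
  (n : ℝ) ^ ((n-1)*(n+1)) * (2 * Real.pi * r * omegaS (n-1)) ^ (n+1) *
    ((1 + (n : ℝ)) ^ (n^2))⁻¹ * ((omegaS n) ^ n)⁻¹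

/-- The isoperimetric profile of `ℝ^m`: `I_{ℝ^m}(v) = m^{(m-1)/m} ω_{m-1}^{1/m} v^{(m-1)/m}`. -/
noncomputable def eucProfile (m : ℕ) (v : ℝ) : ℝ :=
  (m : ℝ) ^ (((m : ℝ) - 1)/m) * omegaS (m-1) ^ ((1 : ℝ)/m) * v ^ (((m : ℝ) - 1)/m)

/-- The region `S¹_{r1} × S¹_{r2} × B^n_R` in `T² × ℝ^n`. -/
def tball (r1 r2 : ℝ) (n : ℕ) (R : ℝ) : Set (T2R r1 r2 n) :=
  {p | ‖t2euc p‖ ≤ R}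

/-- `f_n(v) = V^{n+1}(∂(S¹_{r1} × S¹_{r2} × B^n_R))`, where `R > 0` is such that
`V^{n+2}(S¹_{r1} × S¹_{r2} × B^n_R) = v`. -/
noncomputable def fA (r1 r2 : ℝ) (n : ℕ) (v : ℝ≥0∞) : ℝ≥0∞ :=
  ⨅ (R : ℝ) (_ : 0 < R ∧ haus (T2R r1 r2 n) (n+2) (tball r1 r2 n R) = v),
    haus (T2R r1 r2 n) (n+1) (frontier (tball r1 r2 n R))

/-- The slice function `F₁(t) = V^{n+1}(Ω ∩ ({t} × S¹_{r2} × ℝ^n))`. -/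
noncomputable def sliceF1 {r1 r2 : ℝ} {n : ℕ} (Ω : Set (T2R r1 r2 n)) (t : Circ r1) : ℝ≥0∞ :=
  haus (T2R r1 r2 n) (n+1) (Ω ∩ {p | t2fst p = t})

/-- The slice function `F₂(s) = V^{n+1}(Ω ∩ (S¹_{r1} × {s} × ℝ^n))`. -/
noncomputable def sliceF2 {r1 r2 : ℝ} {n : ℕ} (Ω : Set (T2R r1 r2 n)) (s : Circ r2) : ℝ≥0∞ :=
  haus (T2R r1 r2 n) (n+1) (Ω ∩ {p | t2snd p = s})

/-- `θ_m`, the minimum (infimum) of the slice function `F₁`. -/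
noncomputable def thetaMin {r1 r2 : ℝ} {n : ℕ} (Ω : Set (T2R r1 r2 n)) : ℝ≥0∞ :=
  ⨅ t : Circ r1, sliceF1 Ω t

/-- `θ_M`, the maximum (supremum) of the slice function `F₁`. -/
noncomputable def thetaMax {r1 r2 : ℝ} {n : ℕ} (Ω : Set (T2R r1 r2 n)) : ℝ≥0∞ :=
  ⨆ t : Circ r1, sliceF1 Ω t

/-- `σ_m`, the minimum (infimum) of the slice function `F₂`. -/
noncomputable def sigmaMin {r1 r2 : ℝ} {n : ℕ} (Ω : Set (T2R r1 r2 n)) : ℝ≥0∞ :=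
  ⨅ s : Circ r2, sliceF2 Ω s

/-- `σ_M`, the maximum (supremum) of the slice function `F₂`. -/
noncomputable def sigmaMax {r1 r2 : ℝ} {n : ℕ} (Ω : Set (T2R r1 r2 n)) : ℝ≥0∞ :=
  ⨆ s : Circ r2, sliceF2 Ω s

/-- The region `S¹_r × B^m_R` in `S¹_r × ℝ^m`. -/
def s1ball (r : ℝ) (m : ℕ) (R : ℝ) : Set (S1R r m) :=
  {p | ‖(WithLp.equiv 2 (Circ r × EucSp m) p).2‖ ≤ R}

section

open Filter Topology Set
set_option linter.unusedSectionVars false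

/-- Test functions on a covering space: `C¹`, periodic, with bounded support near `D`. -/
structure IsAdmissible {V : Type*} [NormedAddCommGroup V] [NormedSpace ℝ V]
    (D Λ : Set V) (g : V → ℝ) : Prop where
  contDiff : ContDiff ℝ 1 g
  periodic : ∀ l ∈ Λ, ∀ x, g (x + l) = g x
  support : ∀ r : ℝ, ∃ R : ℝ, ∀ x ∈ D, ∀ b, ‖b‖ ≤ r → R < ‖x‖ → g (x + b) = 0

/-- A relaxed isoperimetric inequality with profile `Ψ`: periodic sets with fundamental piece
`E ∩ D` of volume `v` have relaxed perimeter at least `Ψ v`. -/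
def RelaxedIso {V : Type*} [NormedAddCommGroup V] [NormedSpace ℝ V] [MeasureSpace V]
    (D Λ : Set V) (Ψ : ℝ → ℝ) : Prop :=
  ∀ (E : Set V) (g : ℕ → V → ℝ) (P : ℝ≥0∞), MeasurableSet E → volume (E ∩ D) ≠ ∞ →
    (∀ k, IsAdmissible D Λ (g k)) →
    Tendsto (fun k => ∫⁻ x in D, ‖g k x - E.indicator 1 x‖ₑ) atTop (𝓝 0) →
    (∀ k, ∫⁻ x in D, ‖fderiv ℝ (g k) x‖ₑ ≤ P) →
    ENNReal.ofReal (Ψ (volume.real (E ∩ D))) ≤ P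

/-- On the one-dimensional piece `I`, twice the oscillation of a function is at most its
total variation. -/
def OscillationBound (I Λ : Set ℝ) : Prop :=
  ∀ h : ℝ → ℝ, ContDiff ℝ 1 h → (∀ l ∈ Λ, ∀ t, h (t + l) = h t) →
    (∃ R c, ∀ t ∈ I, R < |t| → h t = c) → ∀ t₁ ∈ I, ∀ t₂ ∈ I,
      2 * ‖h t₁ - h t₂‖ₑ ≤ ∫⁻ t in I, ‖deriv h t‖ₑ

lemma enorm_sub_le_lintegral_deriv {h : ℝ → ℝ} (hh : ContDiff ℝ 1 h) {a b : ℝ} (hab : a ≤ b) :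
    ‖h b - h a‖ₑ ≤ ∫⁻ t in Ioc a b, ‖deriv h t‖ₑ := by
  have hc : Continuous (deriv h) := hh.continuous_deriv le_rfl
  rw [← intervalIntegral.integral_deriv_eq_sub
    (fun x _ => hh.differentiable one_ne_zero x) (hc.intervalIntegrable _ _),
    intervalIntegral.integral_of_le hab]
  exact enorm_integral_le_lintegral_enorm _

lemma two_mul_enorm_sub_le {h : ℝ → ℝ} (hh : ContDiff ℝ 1 h) {a b s t : ℝ}
    (hab : h a = h b) (has : a ≤ s) (hst : s ≤ t) (htb : t ≤ b) :
    2 * ‖h s - h t‖ₑ ≤ ∫⁻ u in Ioc a b, ‖deriv h u‖ₑ := by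
  have h1 := enorm_sub_le_lintegral_deriv hh has
  have h2 := enorm_sub_le_lintegral_deriv hh hst
  have h3 := enorm_sub_le_lintegral_deriv hh htb
  have e : ∫⁻ u in Ioc a b, ‖deriv h u‖ₑ = (∫⁻ u in Ioc a s, ‖deriv h u‖ₑ) +
      (∫⁻ u in Ioc s t, ‖deriv h u‖ₑ) + ∫⁻ u in Ioc t b, ‖deriv h u‖ₑ := by
    rw [← Ioc_union_Ioc_eq_Ioc (has.trans hst) htb, ← Ioc_union_Ioc_eq_Ioc has hst,
      lintegral_union measurableSet_Ioc, lintegral_union measurableSet_Ioc]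
    · exact Ioc_disjoint_Ioc_of_le le_rfl
    · rw [Ioc_union_Ioc_eq_Ioc has hst]; exact Ioc_disjoint_Ioc_of_le le_rfl
  have h4 : ‖h s - h t‖ₑ ≤ ‖h s - h a‖ₑ + ‖h b - h t‖ₑ := by
    have : h s - h t = (h s - h a) + (h b - h t) := by rw [hab]; ring
    rw [this]; exact enorm_add_le _ _
  have h5 : ‖h s - h t‖ₑ = ‖h t - h s‖ₑ := by rw [← enorm_neg, neg_sub]
  rw [e, two_mul]
  calc _ ≤ (‖h s - h a‖ₑ + ‖h b - h t‖ₑ) + ‖h t - h s‖ₑ := by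
        rw [← h5]; gcongr
    _ = ‖h s - h a‖ₑ + ‖h t - h s‖ₑ + ‖h b - h t‖ₑ := by ring
    _ ≤ _ := by gcongr

lemma oscillationBound_Ico {L : ℝ} : OscillationBound (Ico 0 L) {L} := by
  intro h hh hper _ t₁ h₁ t₂ h₂
  have h0 : h 0 = h L := by simpa using (hper L rfl 0).symm
  rw [setLIntegral_congr (Ico_ae_eq_Ioc)]
  rcases le_total t₁ t₂ with h12 | h12
  · exact two_mul_enorm_sub_le hh h0 h₁.1 h12 h₂.2.le
  · rw [← enorm_neg, neg_sub]
    exact two_mul_enorm_sub_le hh h0 h₂.1 h12 h₁.2.le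

lemma oscillationBound_univ : OscillationBound univ ∅ := by
  rintro h hh - ⟨R, c, hR⟩ t₁ - t₂ -
  set S := |R| + |t₁| + |t₂| + 1
  have a1 := abs_nonneg t₁
  have a2 := abs_nonneg t₂
  have a3 := le_abs_self R
  have a4 := abs_nonneg R
  have hS : R < |S| := by rw [abs_of_pos (by positivity)]; simp only [S]; linarith
  have h0 : h (-S) = h S := by
    rw [hR S trivial hS, hR (-S) trivial (by rwa [abs_neg])]
  have b1 := neg_abs_le t₁
  have b2 := neg_abs_le t₂
  have b3 := le_abs_self t₁
  have b4 := le_abs_self t₂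
  refine le_trans ?_ (lintegral_mono_set (subset_univ (Ioc (-S) S)))
  rcases le_total t₁ t₂ with h12 | h12
  · exact two_mul_enorm_sub_le hh h0 (by simp only [S]; linarith) h12 (by simp only [S]; linarith)
  · rw [← enorm_neg, neg_sub]
    exact two_mul_enorm_sub_le hh h0 (by simp only [S]; linarith) h12 (by simp only [S]; linarith)

/-- The `ℓ²` product `ℝ × V`. -/
abbrev LineProd (V : Type*) : Type _ := WithLp 2 (ℝ × V)

/-- The product of a fundamental domain with a piece of the line. -/
def prodDom {V : Type*} (I : Set ℝ) (D : Set V) : Set (LineProd V) := {p | p.fst ∈ I ∧ p.snd ∈ D}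

/-- Periods of a product. -/
def prodPer {V : Type*} [Zero V] (Λt : Set ℝ) (Λ : Set V) : Set (LineProd V) :=
  {p | (p.fst ∈ Λt ∧ p.snd = 0) ∨ (p.fst = 0 ∧ p.snd ∈ Λ)}

section Slice

variable {V : Type*} [NormedAddCommGroup V] [InnerProductSpace ℝ V]

lemma lineProd_norm_le (t : ℝ) (x : V) : ‖(WithLp.toLp 2 (t, x) : LineProd V)‖ ≤ |t| + ‖x‖ := by
  have : (WithLp.toLp 2 (t, x) : LineProd V) = WithLp.toLp 2 (t, 0) + WithLp.toLp 2 (0, x) := by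
    rw [← WithLp.toLp_add]; simp
  rw [this]
  refine (norm_add_le _ _).trans ?_
  rw [WithLp.norm_toLp_fst, WithLp.norm_toLp_snd]
  simp

lemma norm_snd_le_lineProd (t : ℝ) (x : V) : ‖x‖ ≤ ‖(WithLp.toLp 2 (t, x) : LineProd V)‖ := by
  have := WithLp.prod_norm_sq_eq_of_L2 (WithLp.toLp 2 (t, x) : LineProd V)
  change _ = ‖t‖ ^ 2 + ‖x‖ ^ 2 at this
  exact abs_le_of_sq_le_sq' (by nlinarith [sq_nonneg ‖t‖]) (norm_nonneg _) |>.2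

lemma norm_fst_le_lineProd (t : ℝ) (x : V) : |t| ≤ ‖(WithLp.toLp 2 (t, x) : LineProd V)‖ := by
  have := WithLp.prod_norm_sq_eq_of_L2 (WithLp.toLp 2 (t, x) : LineProd V)
  change _ = ‖t‖ ^ 2 + ‖x‖ ^ 2 at this
  exact abs_le_of_sq_le_sq' (by rw [← Real.norm_eq_abs]; nlinarith [sq_nonneg ‖x‖])
    (norm_nonneg _) |>.2

/-- inclusion of a slice direction -/
def lineInr (V : Type*) [NormedAddCommGroup V] [InnerProductSpace ℝ V] : V →L[ℝ] LineProd V :=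
  (WithLp.prodContinuousLinearEquiv 2 ℝ ℝ V).symm.toContinuousLinearMap.comp
    (ContinuousLinearMap.inr ℝ ℝ V)

@[simp] lemma lineInr_apply (x : V) : lineInr V x = WithLp.toLp 2 (0, x) := rfl

/-- inclusion of the line -/
def lineInl (V : Type*) [NormedAddCommGroup V] [InnerProductSpace ℝ V] : ℝ →L[ℝ] LineProd V :=
  (WithLp.prodContinuousLinearEquiv 2 ℝ ℝ V).symm.toContinuousLinearMap.comp
    (ContinuousLinearMap.inl ℝ ℝ V)

@[simp] lemma lineInl_apply (t : ℝ) : lineInl V t = WithLp.toLp 2 (t, 0) := rfl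

lemma toLp_eq_inl_add_inr (t : ℝ) (x : V) :
    (WithLp.toLp 2 (t, x) : LineProd V) = lineInl V t + lineInr V x := by
  simp [← WithLp.toLp_add]

lemma hasFDerivAt_slice {g : LineProd V → ℝ} (hg : ContDiff ℝ 1 g) (t : ℝ) (x : V) :
    HasFDerivAt (fun x => g (WithLp.toLp 2 (t, x)))
      ((fderiv ℝ g (WithLp.toLp 2 (t, x))).comp (lineInr V)) x := by
  have h1 : HasFDerivAt (fun x : V => (WithLp.toLp 2 (t, x) : LineProd V)) (lineInr V) x := by
    simp_rw [toLp_eq_inl_add_inr]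
    exact (lineInr V).hasFDerivAt.const_add _
  exact (hg.differentiable one_ne_zero _).hasFDerivAt.comp x h1

lemma hasDerivAt_line {g : LineProd V → ℝ} (hg : ContDiff ℝ 1 g) (t : ℝ) (x : V) :
    HasDerivAt (fun t => g (WithLp.toLp 2 (t, x)))
      (fderiv ℝ g (WithLp.toLp 2 (t, x)) (lineInl V 1)) t := by
  have h1 : HasDerivAt (fun t : ℝ => (WithLp.toLp 2 (t, x) : LineProd V)) (lineInl V 1) t := by
    simp_rw [toLp_eq_inl_add_inr]
    exact (lineInl V).hasDerivAt.add_const _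
  exact (hg.differentiable one_ne_zero _).hasFDerivAt.comp_hasDerivAt t h1

lemma contDiff_slice {g : LineProd V → ℝ} (hg : ContDiff ℝ 1 g) (t : ℝ) :
    ContDiff ℝ 1 (fun x : V => g (WithLp.toLp 2 (t, x))) := by
  simp_rw [toLp_eq_inl_add_inr]
  exact hg.comp (contDiff_const.add (lineInr V).contDiff)

lemma slice_norm_bound (φ : LineProd V →L[ℝ] ℝ) {α σ : ℝ} (hα : 0 ≤ α) (hσ : 0 ≤ σ)
    (h : α ^ 2 + σ ^ 2 ≤ 1) : α * ‖φ (lineInl V 1)‖ + σ * ‖φ.comp (lineInr V)‖ ≤ ‖φ‖ := by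
  have key : ∀ x : V, σ * ‖φ (lineInr V x)‖ + α * ‖φ (lineInl V 1)‖ * ‖x‖ ≤ ‖φ‖ * ‖x‖ := by
    intro x
    obtain ⟨s, hs, hs'⟩ : ∃ s : ℝ, |s| ≤ 1 ∧ s * φ (lineInl V 1) = ‖φ (lineInl V 1)‖ := by
      rcases le_total 0 (φ (lineInl V 1)) with h | h
      · exact ⟨1, by simp, by simp only [one_mul, Real.norm_eq_abs]; rw [abs_of_nonneg h]⟩
      · exact ⟨-1, by simp, by simp only [Real.norm_eq_abs]; rw [abs_of_nonpos h]; ring⟩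
    obtain ⟨s', hs2, hs2'⟩ : ∃ s : ℝ, |s| ≤ 1 ∧ s * φ (lineInr V x) = ‖φ (lineInr V x)‖ := by
      rcases le_total 0 (φ (lineInr V x)) with h | h
      · exact ⟨1, by simp, by simp only [one_mul, Real.norm_eq_abs]; rw [abs_of_nonneg h]⟩
      · exact ⟨-1, by simp, by simp only [Real.norm_eq_abs]; rw [abs_of_nonpos h]; ring⟩
    set w := lineInl V (α * s * ‖x‖) + lineInr V ((σ * s') • x)
    have hw : φ w = σ * ‖φ (lineInr V x)‖ + α * ‖φ (lineInl V 1)‖ * ‖x‖ := by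
      have : lineInl V (α * s * ‖x‖) = (α * s * ‖x‖) • lineInl V 1 := by
        rw [← map_smul]; simp
      simp only [w]
      rw [map_add, this, map_smul, map_smul, map_smul, smul_eq_mul, smul_eq_mul, ← hs', ← hs2']
      ring
    have hwn : ‖w‖ ≤ ‖x‖ := by
      have := WithLp.prod_norm_sq_eq_of_L2 w
      refine abs_le_of_sq_le_sq' ?_ (norm_nonneg _) |>.2
      rw [this]
      have e1 : w.fst = α * s * ‖x‖ := by simp [w]
      have e2 : w.snd = (σ * s') • x := by simp [w]
      rw [e1, e2, norm_smul, Real.norm_eq_abs, Real.norm_eq_abs, mul_pow, sq_abs, sq_abs]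
      have q1 : s ^ 2 ≤ 1 := by rw [← sq_abs]; nlinarith [abs_nonneg s]
      have q2 : s' ^ 2 ≤ 1 := by rw [← sq_abs]; nlinarith [abs_nonneg s']
      have : α ^ 2 * s ^ 2 + σ ^ 2 * s' ^ 2 ≤ 1 := by
        nlinarith [mul_le_mul_of_nonneg_left q1 (sq_nonneg α),
          mul_le_mul_of_nonneg_left q2 (sq_nonneg σ)]
      calc _ = (α ^ 2 * s ^ 2 + σ ^ 2 * s' ^ 2) * ‖x‖ ^ 2 := by ring
        _ ≤ 1 * ‖x‖ ^ 2 := by gcongr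
        _ = _ := one_mul _
    rw [← hw]
    calc φ w ≤ ‖φ w‖ := le_abs_self _
      _ ≤ ‖φ‖ * ‖w‖ := φ.le_opNorm _
      _ ≤ _ := by gcongr
  have hC : 0 ≤ ‖φ‖ - α * ‖φ (lineInl V 1)‖ := by
    have h1 : ‖lineInl V 1‖ = 1 := by simp [WithLp.norm_toLp_fst]
    have h2 := φ.le_opNorm (lineInl V 1)
    rw [h1, mul_one] at h2
    have : α ≤ 1 := by nlinarith [sq_nonneg σ]
    nlinarith [norm_nonneg (φ (lineInl V 1))]
  have : ‖σ • φ.comp (lineInr V)‖ ≤ ‖φ‖ - α * ‖φ (lineInl V 1)‖ := by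
    refine ContinuousLinearMap.opNorm_le_bound _ hC fun x => ?_
    have := key x
    simp only [_root_.smul_apply, ContinuousLinearMap.comp_apply, norm_smul,
      Real.norm_eq_abs σ, abs_of_nonneg hσ] at this ⊢
    linarith
  rw [norm_smul, Real.norm_eq_abs, abs_of_nonneg hσ] at this
  linarith

lemma IsAdmissible.slice {I Λt : Set ℝ} {D Λ : Set V} {g : LineProd V → ℝ} (h0 : (0 : ℝ) ∈ I)
    (hg : IsAdmissible (prodDom I D) (prodPer Λt Λ) g) (t : ℝ) :
    IsAdmissible D Λ (fun x => g (WithLp.toLp 2 (t, x))) where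
  contDiff := contDiff_slice hg.contDiff t
  periodic l hl x := by
    have := hg.periodic (WithLp.toLp 2 (0, l)) (Or.inr ⟨rfl, hl⟩) (WithLp.toLp 2 (t, x))
    rw [← WithLp.toLp_add] at this
    simpa using this
  support r := by
    obtain ⟨R, hR⟩ := hg.support (|t| + r)
    refine ⟨R, fun x hx b hb hxR => ?_⟩
    have := hR (WithLp.toLp 2 (0, x)) ⟨h0, hx⟩ (WithLp.toLp 2 (t, b))
      ((lineProd_norm_le t b).trans (by linarith)) (hxR.trans_le (norm_snd_le_lineProd _ _))
    rw [← WithLp.toLp_add] at this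
    simpa using this

/-- uniform version of the support condition for slices -/
lemma IsAdmissible.slice_support {I Λt : Set ℝ} {D Λ : Set V} {g : LineProd V → ℝ}
    (h0 : (0 : ℝ) ∈ I) (hg : IsAdmissible (prodDom I D) (prodPer Λt Λ) g) (T : ℝ) :
    ∃ R, ∀ t, |t| ≤ T → ∀ x ∈ D, R < ‖x‖ → g (WithLp.toLp 2 (t, x)) = 0 := by
  obtain ⟨R, hR⟩ := hg.support T
  refine ⟨R, fun t ht x hx hxR => ?_⟩
  have := hR (WithLp.toLp 2 (0, x)) ⟨h0, hx⟩ (WithLp.toLp 2 (t, 0))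
      ((lineProd_norm_le t 0).trans (by simpa)) (hxR.trans_le (norm_snd_le_lineProd _ _))
  rw [← WithLp.toLp_add] at this
  simpa using this

end Slice

section SliceIntegral

variable {V : Type*} [NormedAddCommGroup V] [InnerProductSpace ℝ V] [FiniteDimensional ℝ V]
  [MeasurableSpace V] [BorelSpace V]

lemma integrable_indicator_closedBall (D : Set V) (R C : ℝ) :
    Integrable ((Metric.closedBall (0 : V) R).indicator fun _ => C) (volume.restrict D) := by
  rw [integrable_indicator_iff Metric.isClosed_closedBall.measurableSet]
  refine integrableOn_const (ne_of_lt ?_)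
  exact (Measure.restrict_apply_le _ _).trans_lt measure_closedBall_lt_top

lemma integrableOn_of_bounded_support {D : Set V} (hD : MeasurableSet D) {f : V → ℝ}
    (hf : Continuous f) {R : ℝ} (h : ∀ x ∈ D, R < ‖x‖ → f x = 0) : IntegrableOn f D := by
  obtain ⟨C, hC⟩ := (isCompact_closedBall (0 : V) R).exists_bound_of_continuousOn hf.continuousOn
  refine (integrable_indicator_closedBall D R C).mono' hf.aestronglyMeasurable ?_
  refine (ae_restrict_iff' hD).2 (Eventually.of_forall fun x hx => ?_)
  by_cases hxR : x ∈ Metric.closedBall (0 : V) R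
  · rw [indicator_of_mem hxR]; exact hC x hxR
  · rw [indicator_of_notMem hxR, h x hx (by simpa using hxR)]; simp

lemma IsAdmissible.integrableOn {D Λ : Set V} (hD : MeasurableSet D) {g : V → ℝ}
    (hg : IsAdmissible D Λ g) : IntegrableOn g D := by
  obtain ⟨R, hR⟩ := hg.support 0
  exact integrableOn_of_bounded_support hD hg.contDiff.continuous
    (fun x hx h => by simpa using hR x hx 0 (by simp) h)

lemma continuous_toLp_line (x : V) : Continuous fun t : ℝ => (WithLp.toLp 2 (t, x) : LineProd V) := by
  simp_rw [toLp_eq_inl_add_inr]; fun_prop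

variable {I Λt : Set ℝ} {D Λ : Set V} {g : LineProd V → ℝ}

/-- the derivative in the line direction, in a form suited to dominated convergence -/
lemma IsAdmissible.line_deriv_bound (h0 : (0 : ℝ) ∈ I)
    (hg : IsAdmissible (prodDom I D) (prodPer Λt Λ) g) (T : ℝ) :
    ∃ R C, ∀ t, |t| < T → ∀ x ∈ D, ‖fderiv ℝ g (WithLp.toLp 2 (t, x)) (lineInl V 1)‖ ≤
      (Metric.closedBall (0 : V) R).indicator (fun _ => C) x := by
  obtain ⟨R, hR⟩ := hg.slice_support h0 T
  have hc : Continuous fun p : ℝ × V => fderiv ℝ g (WithLp.toLp 2 p) (lineInl V 1) := by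
    have h1 := hg.contDiff.continuous_fderiv one_ne_zero
    have h2 : Continuous fun p : ℝ × V => (WithLp.toLp 2 p : LineProd V) :=
      WithLp.prod_continuous_toLp 2 ℝ V
    exact (h1.comp h2).clm_apply continuous_const
  obtain ⟨C, hC⟩ := ((isCompact_Icc (a := -T) (b := T)).prod
    (isCompact_closedBall (0 : V) R)).exists_bound_of_continuousOn hc.continuousOn
  refine ⟨R, C, fun t ht x hx => ?_⟩
  by_cases hxR : x ∈ Metric.closedBall (0 : V) R
  · rw [indicator_of_mem hxR]
    exact hC (t, x) ⟨abs_le.1 ht.le, hxR⟩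
  · rw [indicator_of_notMem hxR]
    have e : (fun t => g (WithLp.toLp 2 (t, x))) =ᶠ[𝓝 t] fun _ => 0 := by
      filter_upwards [(isOpen_lt continuous_abs continuous_const).mem_nhds ht] with s hs
      exact hR s (le_of_lt hs) x hx (by simpa using hxR)
    have := ((hasDerivAt_line hg.contDiff t x).congr_of_eventuallyEq e.symm).unique
      (hasDerivAt_const t (0 : ℝ))
    rw [this]; simp

lemma IsAdmissible.hasDerivAt_integral (hD : MeasurableSet D) (h0 : (0 : ℝ) ∈ I)
    (hg : IsAdmissible (prodDom I D) (prodPer Λt Λ) g) (t : ℝ) :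
    HasDerivAt (fun t => ∫ x in D, g (WithLp.toLp 2 (t, x)))
      (∫ x in D, fderiv ℝ g (WithLp.toLp 2 (t, x)) (lineInl V 1)) t := by
  obtain ⟨R, C, hRC⟩ := hg.line_deriv_bound h0 (|t| + 1)
  have hc : Continuous fun x : V => fderiv ℝ g (WithLp.toLp 2 (t, x)) (lineInl V 1) := by
    have h1 := hg.contDiff.continuous_fderiv one_ne_zero
    have h2 : Continuous fun x : V => (WithLp.toLp 2 (t, x) : LineProd V) := by
      simp_rw [toLp_eq_inl_add_inr]; fun_prop
    exact (h1.comp h2).clm_apply continuous_const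
  refine (hasDerivAt_integral_of_dominated_loc_of_deriv_le
    (F := fun t x => g (WithLp.toLp 2 (t, x)))
    (F' := fun t x => fderiv ℝ g (WithLp.toLp 2 (t, x)) (lineInl V 1))
    ((isOpen_lt continuous_abs continuous_const).mem_nhds (lt_add_one |t|))
    (Eventually.of_forall fun s => (contDiff_slice hg.contDiff s).continuous.aestronglyMeasurable)
    ((hg.slice h0 t).integrableOn hD) hc.aestronglyMeasurable
    (bound := (Metric.closedBall (0 : V) R).indicator fun _ => C) ?_
    (integrable_indicator_closedBall D R C) ?_).2
  · exact (ae_restrict_iff' hD).2 (Eventually.of_forall fun x hx s hs => hRC s hs x hx)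
  · exact Eventually.of_forall fun x s _ => hasDerivAt_line hg.contDiff s x

lemma IsAdmissible.contDiff_integral (hD : MeasurableSet D) (h0 : (0 : ℝ) ∈ I)
    (hg : IsAdmissible (prodDom I D) (prodPer Λt Λ) g) :
    ContDiff ℝ 1 (fun t => ∫ x in D, g (WithLp.toLp 2 (t, x))) := by
  rw [contDiff_one_iff_deriv]
  refine ⟨fun t => (hg.hasDerivAt_integral hD h0 t).differentiableAt, ?_⟩
  have : deriv (fun t => ∫ x in D, g (WithLp.toLp 2 (t, x))) =
      fun t => ∫ x in D, fderiv ℝ g (WithLp.toLp 2 (t, x)) (lineInl V 1) :=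
    funext fun t => (hg.hasDerivAt_integral hD h0 t).deriv
  rw [this, continuous_iff_continuousAt]
  intro t
  obtain ⟨R, C, hRC⟩ := hg.line_deriv_bound h0 (|t| + 1)
  have h1 := hg.contDiff.continuous_fderiv one_ne_zero
  refine continuousAt_of_dominated (bound := (Metric.closedBall (0 : V) R).indicator fun _ => C)
    (Eventually.of_forall fun s => ?_) ?_ (integrable_indicator_closedBall D R C)
    (Eventually.of_forall fun x => ?_)
  · have h2 : Continuous fun x : V => (WithLp.toLp 2 (s, x) : LineProd V) := by
      simp_rw [toLp_eq_inl_add_inr]; fun_prop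
    exact ((h1.comp h2).clm_apply continuous_const).aestronglyMeasurable
  · filter_upwards [(isOpen_lt continuous_abs continuous_const).mem_nhds (lt_add_one |t|)] with s hs
    exact (ae_restrict_iff' hD).2 (Eventually.of_forall fun x hx => hRC s hs x hx)
  · exact ((h1.comp (continuous_toLp_line x)).clm_apply continuous_const).continuousAt

end SliceIntegral

section SliceInequality

variable {V : Type*} [NormedAddCommGroup V] [InnerProductSpace ℝ V] [FiniteDimensional ℝ V]
  [MeasurableSpace V] [BorelSpace V]

lemma measurable_toLp_pair : Measurable fun p : ℝ × V => (WithLp.toLp 2 p : LineProd V) :=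
  (WithLp.prod_continuous_toLp 2 ℝ V).measurable

lemma measurableSet_prodDom {I : Set ℝ} {D : Set V} (hI : MeasurableSet I) (hD : MeasurableSet D) :
    MeasurableSet (prodDom I D) := by
  have h1 : Measurable fun p : LineProd V => p.fst :=
    (continuous_fst.comp (WithLp.prod_continuous_ofLp 2 ℝ V)).measurable
  have h2 : Measurable fun p : LineProd V => p.snd :=
    (continuous_snd.comp (WithLp.prod_continuous_ofLp 2 ℝ V)).measurable
  exact (h1 hI).inter (h2 hD)

lemma lintegral_prodDom {I : Set ℝ} {D : Set V} (hI : MeasurableSet I) (hD : MeasurableSet D)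
    {f : LineProd V → ℝ≥0∞} (hf : Measurable f) :
    ∫⁻ p in prodDom I D, f p = ∫⁻ t in I, ∫⁻ x in D, f (WithLp.toLp 2 (t, x)) := by
  have hmp := WithLp.volume_preserving_toLp (U := ℝ) (V := V)
  rw [← hmp.setLIntegral_comp_preimage (measurableSet_prodDom hI hD) hf]
  have : (WithLp.toLp 2 : ℝ × V → LineProd V) ⁻¹' prodDom I D = I ×ˢ D := rfl
  rw [this, Measure.volume_eq_prod, ← Measure.prod_restrict, lintegral_prod]
  exact (hf.comp measurable_toLp_pair).aemeasurable

lemma measurable_slice_lintegral {D : Set V} 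
    {f : LineProd V → ℝ≥0∞} (hf : Measurable f) :
    Measurable fun t => ∫⁻ x in D, f (WithLp.toLp 2 (t, x)) :=
  (hf.comp measurable_toLp_pair).lintegral_prod_right'

variable {I Λt : Set ℝ} {D Λ : Set V} {g : LineProd V → ℝ}

lemma measurable_slice_fderiv (hg : ContDiff ℝ 1 g) :
    Measurable fun t => ∫⁻ x in D, ‖fderiv ℝ (fun x => g (WithLp.toLp 2 (t, x))) x‖ₑ := by
  have : ∀ t x, fderiv ℝ (fun x => g (WithLp.toLp 2 (t, x))) x =
    (fderiv ℝ g (WithLp.toLp 2 (t, x))).comp (lineInr V) := fun t x =>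
    (hasFDerivAt_slice hg t x).fderiv
  simp_rw [this]
  refine measurable_slice_lintegral (f := fun p => ‖(fderiv ℝ g p).comp (lineInr V)‖ₑ) ?_
  have h1 := hg.continuous_fderiv one_ne_zero
  exact (h1.clm_comp continuous_const).enorm.measurable

lemma IsAdmissible.slice_inequality (hI : MeasurableSet I) (hD : MeasurableSet D)
    (h0 : (0 : ℝ) ∈ I) (hosc : OscillationBound I Λt)
    (hg : IsAdmissible (prodDom I D) (prodPer Λt Λ) g) {α σ : ℝ → ℝ} (hα : Continuous α)
    (hα0 : ∀ a, 0 ≤ α a) (hσ0 : ∀ a, 0 ≤ σ a)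
    (h1 : ∀ a, α a ^ 2 + σ a ^ 2 ≤ 1) {t₁ t₂ : ℝ} (ht₁ : t₁ ∈ I) (ht₂ : t₂ ∈ I) :
    2 * ‖∫ a in (∫ x in D, g (WithLp.toLp 2 (t₁, x)))..(∫ x in D, g (WithLp.toLp 2 (t₂, x))),
        α a‖ₑ +
      ∫⁻ t in I, ENNReal.ofReal (σ (∫ x in D, g (WithLp.toLp 2 (t, x)))) *
        ∫⁻ x in D, ‖fderiv ℝ (fun x => g (WithLp.toLp 2 (t, x))) x‖ₑ
      ≤ ∫⁻ p in prodDom I D, ‖fderiv ℝ g p‖ₑ := by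
  set A : ℝ → ℝ := fun t => ∫ x in D, g (WithLp.toLp 2 (t, x)) with hA
  have hAc : ContDiff ℝ 1 A := hg.contDiff_integral hD h0
  set h : ℝ → ℝ := fun t => ∫ a in (0 : ℝ)..A t, α a with hh
  have hprim : ∀ y, HasDerivAt (fun y => ∫ a in (0 : ℝ)..y, α a) (α y) y := fun y =>
    intervalIntegral.integral_hasDerivAt_right (hα.intervalIntegrable _ _)
      (hα.stronglyMeasurableAtFilter _ _) hα.continuousAt
  have hprimc : ContDiff ℝ 1 (fun y => ∫ a in (0 : ℝ)..y, α a) := by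
    rw [contDiff_one_iff_deriv]
    refine ⟨fun y => (hprim y).differentiableAt, ?_⟩
    rw [show deriv (fun y => ∫ a in (0 : ℝ)..y, α a) = α from funext fun y => (hprim y).deriv]
    exact hα
  have hhc : ContDiff ℝ 1 h := hprimc.comp hAc
  have hderiv : ∀ t, deriv h t =
      α (A t) * ∫ x in D, fderiv ℝ g (WithLp.toLp 2 (t, x)) (lineInl V 1) := fun t =>
    ((hprim (A t)).comp t (hg.hasDerivAt_integral hD h0 t)).deriv
  have hosc' := hosc h hhc (by
    intro l hl t
    have : A (t + l) = A t := by
      simp only [hA]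
      congr 1; ext x
      have := hg.periodic (WithLp.toLp 2 (l, 0)) (Or.inl ⟨hl, rfl⟩) (WithLp.toLp 2 (t, x))
      rw [← WithLp.toLp_add] at this
      simpa using this
    simp only [hh, this]) (by
    obtain ⟨R, hR⟩ := hg.support 0
    refine ⟨R, 0, fun t ht htR => ?_⟩
    have : A t = 0 := by
      refine setIntegral_eq_zero_of_forall_eq_zero fun x hx => ?_
      simpa using hR (WithLp.toLp 2 (t, x)) ⟨ht, hx⟩ 0 (by simp)
        (htR.trans_le (norm_fst_le_lineProd _ _))
    simp [hh, this]) t₂ ht₂ t₁ ht₁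
  have e1 : ‖∫ a in A t₁..A t₂, α a‖ₑ = ‖h t₂ - h t₁‖ₑ := by
    congr 1
    simp only [hh]
    rw [intervalIntegral.integral_interval_sub_left] <;> exact hα.intervalIntegrable _ _
  rw [e1]
  have hmeas : Measurable fun p => ‖fderiv ℝ g p‖ₑ :=
    (hg.contDiff.continuous_fderiv one_ne_zero).enorm.measurable
  rw [lintegral_prodDom hI hD hmeas]
  calc _ ≤ (∫⁻ t in I, ‖deriv h t‖ₑ) + ∫⁻ t in I, ENNReal.ofReal (σ (A t)) *
        ∫⁻ x in D, ‖fderiv ℝ (fun x => g (WithLp.toLp 2 (t, x))) x‖ₑ := by gcongr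
    _ = ∫⁻ t in I, (‖deriv h t‖ₑ + ENNReal.ofReal (σ (A t)) *
        ∫⁻ x in D, ‖fderiv ℝ (fun x => g (WithLp.toLp 2 (t, x))) x‖ₑ) := by
      rw [lintegral_add_left]
      exact (hhc.continuous_deriv le_rfl).enorm.measurable
    _ ≤ _ := by
      refine lintegral_mono fun t => ?_
      have c1 : Continuous fun x : V => (WithLp.toLp 2 (t, x) : LineProd V) := by
        simp_rw [toLp_eq_inl_add_inr]; fun_prop
      have c2 := (hg.contDiff.continuous_fderiv one_ne_zero).comp c1
      have m1 : Measurable fun x : V => ‖fderiv ℝ g (WithLp.toLp 2 (t, x)) (lineInl V 1)‖ₑ :=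
        (c2.clm_apply continuous_const).enorm.measurable
      calc _ ≤ ENNReal.ofReal (α (A t)) *
            (∫⁻ x in D, ‖fderiv ℝ g (WithLp.toLp 2 (t, x)) (lineInl V 1)‖ₑ) +
            ENNReal.ofReal (σ (A t)) *
            ∫⁻ x in D, ‖fderiv ℝ (fun x => g (WithLp.toLp 2 (t, x))) x‖ₑ := by
            gcongr
            rw [hderiv, enorm_mul, Real.enorm_of_nonneg (hα0 _)]
            gcongr
            exact enorm_integral_le_lintegral_enorm _
        _ = ∫⁻ x in D, (ENNReal.ofReal (α (A t)) *
              ‖fderiv ℝ g (WithLp.toLp 2 (t, x)) (lineInl V 1)‖ₑ +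
              ENNReal.ofReal (σ (A t)) *
              ‖fderiv ℝ (fun x => g (WithLp.toLp 2 (t, x))) x‖ₑ) := by
            rw [lintegral_add_left (m1.const_mul _), lintegral_const_mul _ m1,
              lintegral_const_mul']
            exact ofReal_ne_top
        _ ≤ _ := by
            refine lintegral_mono fun x => ?_
            rw [(hasFDerivAt_slice hg.contDiff t x).fderiv]
            have := slice_norm_bound (fderiv ℝ g (WithLp.toLp 2 (t, x))) (hα0 (A t)) (hσ0 (A t))
              (h1 _)
            rw [← ofReal_norm, ← ofReal_norm, ← ofReal_norm,
              ← ENNReal.ofReal_mul (hα0 _), ← ENNReal.ofReal_mul (hσ0 _),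
              ← ENNReal.ofReal_add (mul_nonneg (hα0 _) (norm_nonneg _))
                (mul_nonneg (hσ0 _) (norm_nonneg _))]
            exact ENNReal.ofReal_le_ofReal this

end SliceInequality

lemma exists_strictMono_tendsto_ae_zero {X : Type*} [MeasurableSpace X] {μ : Measure X}
    {d : ℕ → X → ℝ≥0∞} (hd : ∀ k, AEMeasurable (d k) μ)
    (h : Tendsto (fun k => ∫⁻ x, d k x ∂μ) atTop (𝓝 0)) :
    ∃ φ : ℕ → ℕ, StrictMono φ ∧ ∀ᵐ x ∂μ, Tendsto (fun k => d (φ k) x) atTop (𝓝 0) := by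
  obtain ⟨φ, hφ, hle⟩ := extraction_forall_of_eventually
    (P := fun n k => ∫⁻ x, d k x ∂μ < (2⁻¹ : ℝ≥0∞) ^ n) (fun n =>
      h.eventually_lt_const (ENNReal.pow_pos (by simp) n))
  refine ⟨φ, hφ, ?_⟩
  have : ∫⁻ x, ∑' k, d (φ k) x ∂μ ≠ ∞ := by
    rw [lintegral_tsum fun k => hd _]
    refine ne_top_of_le_ne_top ?_ (ENNReal.tsum_le_tsum fun k => (hle k).le)
    rw [ENNReal.tsum_geometric]; simp
  filter_upwards [ae_lt_top' (AEMeasurable.tsum fun k => hd _) this] with x hx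
  exact ENNReal.tendsto_atTop_zero_of_tsum_ne_top hx.ne

section Slicing

variable {V : Type*} [NormedAddCommGroup V] [InnerProductSpace ℝ V] [FiniteDimensional ℝ V]
  [MeasurableSpace V] [BorelSpace V]

lemma RelaxedIso.le_liminf {D Λ : Set V} {Ψ : ℝ → ℝ} (h : RelaxedIso D Λ Ψ) {E : Set V}
    {g : ℕ → V → ℝ} (hE : MeasurableSet E) (hfin : volume (E ∩ D) ≠ ∞)
    (hg : ∀ k, IsAdmissible D Λ (g k))
    (hconv : Tendsto (fun k => ∫⁻ x in D, ‖g k x - E.indicator 1 x‖ₑ) atTop (𝓝 0)) :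
    ENNReal.ofReal (Ψ (volume.real (E ∩ D))) ≤
      liminf (fun k => ∫⁻ x in D, ‖fderiv ℝ (g k) x‖ₑ) atTop := by
  refine le_of_forall_gt_imp_ge_of_dense fun P hP => ?_
  have := frequently_lt_of_liminf_lt (by isBoundedDefault) hP
  obtain ⟨φ, hφ, hle⟩ := extraction_of_frequently_atTop this
  exact h E (fun k => g (φ k)) P hE hfin (fun k => hg _) (hconv.comp hφ.tendsto_atTop)
    fun k => (hle k).le

variable {I Λt : Set ℝ} {D Λ : Set V}

/-- volume of slices -/
def sliceVol (D : Set V) (E : Set (LineProd V)) (t : ℝ) : ℝ :=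
  volume.real ({x | WithLp.toLp 2 (t, x) ∈ E} ∩ D)

lemma measurable_sliceVol {E : Set (LineProd V)} (hE : MeasurableSet E) :
    Measurable (sliceVol D E) := by
  have := measurable_slice_lintegral (D := D) (f := E.indicator 1)
    (measurable_one.indicator hE)
  convert Measurable.ennreal_toReal this using 1
  ext t
  have hm : MeasurableSet {x : V | WithLp.toLp 2 (t, x) ∈ E} :=
    (measurable_toLp_pair.comp measurable_prodMk_left) hE
  rw [sliceVol, Measure.real, ← Measure.restrict_apply hm, ← lintegral_indicator_one hm]
  rfl

lemma volume_slice_lintegral (hI : MeasurableSet I) (hD : MeasurableSet D)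
    {E : Set (LineProd V)} (hE : MeasurableSet E) :
    volume (E ∩ prodDom I D) = ∫⁻ t in I, volume ({x | WithLp.toLp 2 (t, x) ∈ E} ∩ D) := by
  rw [← Measure.restrict_apply hE, ← lintegral_indicator_one hE, lintegral_prodDom hI hD
    (measurable_one.indicator hE)]
  refine lintegral_congr fun t => ?_
  have hm : MeasurableSet {x : V | WithLp.toLp 2 (t, x) ∈ E} :=
    (measurable_toLp_pair.comp measurable_prodMk_left) hE
  rw [← Measure.restrict_apply hm, ← lintegral_indicator_one hm]
  rfl

theorem RelaxedIso.slicing (hI : MeasurableSet I) (hD : MeasurableSet D)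
    (h0 : (0 : ℝ) ∈ I) (hosc : OscillationBound I Λt) {Ψ : ℝ → ℝ} 
    (hiso : RelaxedIso D Λ Ψ) {E : Set (LineProd V)} (hE : MeasurableSet E)
    (hfin : volume (E ∩ prodDom I D) ≠ ∞) {g : ℕ → LineProd V → ℝ}
    (hg : ∀ k, IsAdmissible (prodDom I D) (prodPer Λt Λ) (g k))
    (hconv : Tendsto (fun k => ∫⁻ x in prodDom I D, ‖g k x - E.indicator 1 x‖ₑ) atTop (𝓝 0))
    {P : ℝ≥0∞} (hP : ∀ k, ∫⁻ x in prodDom I D, ‖fderiv ℝ (g k) x‖ₑ ≤ P) :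
    ∃ T ⊆ I, (∀ᵐ t ∂volume.restrict I, t ∈ T) ∧ ∀ α σ : ℝ → ℝ, Continuous α → Continuous σ →
      (∀ a, 0 ≤ α a) → (∀ a, 0 ≤ σ a) → (∀ a, α a ^ 2 + σ a ^ 2 ≤ 1) → ∀ t₁ ∈ T, ∀ t₂ ∈ T,
      2 * ‖∫ a in (sliceVol D E t₁)..(sliceVol D E t₂), α a‖ₑ +
        ∫⁻ t in I, ENNReal.ofReal (σ (sliceVol D E t) * Ψ (sliceVol D E t)) ≤ P := by
  have hme : Measurable fun p => E.indicator (1 : LineProd V → ℝ) p := measurable_one.indicator hE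
  have hmd : ∀ k, Measurable fun p => ‖g k p - E.indicator 1 p‖ₑ := fun k =>
    ((hg k).contDiff.continuous.measurable.sub hme).enorm
  set d : ℕ → ℝ → ℝ≥0∞ := fun k t => ∫⁻ x in D,
    ‖g k (WithLp.toLp 2 (t, x)) - E.indicator 1 (WithLp.toLp 2 (t, x))‖ₑ with hd
  have hdm : ∀ k, Measurable (d k) := fun k => measurable_slice_lintegral (hmd k)
  obtain ⟨φ, hφ, hae⟩ := exists_strictMono_tendsto_ae_zero (μ := volume.restrict I)
    (d := d) (fun k => (hdm k).aemeasurable) (by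
      refine hconv.congr fun k => ?_
      rw [lintegral_prodDom hI hD (hmd k)])
  have hm : ∀ t, MeasurableSet {x : V | WithLp.toLp 2 (t, x) ∈ E} := fun t =>
    (measurable_toLp_pair.comp measurable_prodMk_left) hE
  have hvol : ∀ᵐ t ∂volume.restrict I, volume ({x | WithLp.toLp 2 (t, x) ∈ E} ∩ D) ≠ ∞ := by
    have hmv : Measurable fun t => volume ({x | WithLp.toLp 2 (t, x) ∈ E} ∩ D) := by
      convert measurable_slice_lintegral (D := D) (f := E.indicator 1)
        (measurable_one.indicator hE) using 1
      ext t
      rw [← Measure.restrict_apply (hm t), ← lintegral_indicator_one (hm t)]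
      rfl
    have := ae_lt_top hmv (volume_slice_lintegral hI hD hE ▸ hfin)
    exact this.mono fun t ht => ht.ne
  set T : Set ℝ := {t | t ∈ I ∧ Tendsto (fun k => d (φ k) t) atTop (𝓝 0) ∧
    volume ({x | WithLp.toLp 2 (t, x) ∈ E} ∩ D) ≠ ∞}
  have hTae : ∀ᵐ t ∂volume.restrict I, t ∈ T := by
    filter_upwards [hae, hvol, ae_restrict_mem hI] with t h1 h2 h3 using ⟨h3, h1, h2⟩
  set A := sliceVol D E with hA
  set a : ℕ → ℝ → ℝ := fun k t => ∫ x in D, g (φ k) (WithLp.toLp 2 (t, x)) with ha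
  have haA : ∀ t ∈ T, Tendsto (fun k => a k t) atTop (𝓝 (A t)) := by
    rintro t ⟨-, h1, h2⟩
    rw [tendsto_iff_edist_tendsto_0]
    refine tendsto_of_tendsto_of_tendsto_of_le_of_le tendsto_const_nhds h1 (fun _ => zero_le)
      fun k => ?_
    have : A t = ∫ x in D, E.indicator 1 (WithLp.toLp 2 (t, x) : LineProd V) := by
      have e : (fun x : V => E.indicator (1 : LineProd V → ℝ) (WithLp.toLp 2 (t, x))) =
        ({x : V | WithLp.toLp 2 (t, x) ∈ E}.indicator fun _ => 1) := rfl
      rw [e, integral_indicator_const _ (hm t)]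
      simp [hA, sliceVol, measureReal_restrict_apply (hm t)]
    simp only [edist_eq_enorm_sub, this, ha]
    rw [← integral_sub (((hg _).slice h0 t).integrableOn hD)]
    · exact enorm_integral_le_lintegral_enorm _
    · have e : (fun x : V => E.indicator (1 : LineProd V → ℝ) (WithLp.toLp 2 (t, x))) =
        ({x : V | WithLp.toLp 2 (t, x) ∈ E}.indicator fun _ => 1) := rfl
      rw [e, integrable_indicator_iff (hm t)]
      refine integrableOn_const ?_
      rwa [Measure.restrict_apply (hm t)]
  refine ⟨T, fun t ht => ht.1, hTae, ?_⟩
  intro α σ hα hσ hα0 hσ0 h1 t₁ ht₁ t₂ ht₂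
  set q : ℕ → ℝ → ℝ≥0∞ := fun k t => ∫⁻ x in D,
    ‖fderiv ℝ (fun x => g (φ k) (WithLp.toLp 2 (t, x))) x‖ₑ with hq
  have hqm : ∀ k, Measurable (q k) := fun k => measurable_slice_fderiv (hg _).contDiff
  have ham : ∀ k, Measurable (a k) := fun k =>
    ((hg (φ k)).contDiff_integral hD h0).continuous.measurable
  have key : ∀ k, 2 * ‖∫ a in (a k t₁)..(a k t₂), α a‖ₑ +
      ∫⁻ t in I, ENNReal.ofReal (σ (a k t)) * q k t ≤ P := fun k =>
    ((hg (φ k)).slice_inequality hI hD h0 hosc hα hα0 hσ0 h1 ht₁.1 ht₂.1).trans (hP _)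
  have hu : Tendsto (fun k => 2 * ‖∫ a in (a k t₁)..(a k t₂), α a‖ₑ) atTop
      (𝓝 (2 * ‖∫ a in (A t₁)..(A t₂), α a‖ₑ)) := by
    refine ENNReal.Tendsto.const_mul ?_ (Or.inr (by simp))
    refine (continuous_enorm.tendsto _).comp ?_
    have e : ∀ x y : ℝ, ∫ a in x..y, α a = (∫ a in (0 : ℝ)..y, α a) - ∫ a in (0 : ℝ)..x, α a :=
      fun x y => (intervalIntegral.integral_interval_sub_left (hα.intervalIntegrable _ _)
        (hα.intervalIntegrable _ _)).symm
    have c : Continuous fun y => ∫ a in (0 : ℝ)..y, α a :=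
      intervalIntegral.continuous_primitive (fun _ _ => hα.intervalIntegrable _ _) 0
    rw [e (A t₁) (A t₂)]
    refine Tendsto.congr (fun k => (e (a k t₁) (a k t₂)).symm) ?_
    exact ((c.tendsto _).comp (haA t₂ ht₂)).sub ((c.tendsto _).comp (haA t₁ ht₁))
  have hv : ∫⁻ t in I, ENNReal.ofReal (σ (A t) * Ψ (A t)) ≤
      liminf (fun k => ∫⁻ t in I, ENNReal.ofReal (σ (a k t)) * q k t) atTop := by
    refine le_trans ?_ (lintegral_liminf_le fun k =>
      ((hσ.measurable.comp (ham k)).ennreal_ofReal.mul (hqm k)))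
    refine lintegral_mono_ae ?_
    filter_upwards [hTae] with t ht
    rw [ENNReal.ofReal_mul (hσ0 _)]
    have l1 : liminf (fun k => ENNReal.ofReal (σ (a k t))) atTop = ENNReal.ofReal (σ (A t)) :=
      Tendsto.liminf_eq (ENNReal.tendsto_ofReal ((hσ.tendsto _).comp (haA t ht)))
    have l2 : ENNReal.ofReal (Ψ (A t)) ≤ liminf (fun k => q k t) atTop :=
      hiso.le_liminf (g := fun k x => g (φ k) (WithLp.toLp 2 (t, x))) (hm t) ht.2.2
        (fun k => (hg _).slice h0 t) ht.2.1
    calc _ ≤ liminf (fun k => ENNReal.ofReal (σ (a k t))) atTop * liminf (fun k => q k t) atTop := by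
          rw [l1]; gcongr
      _ ≤ _ := ENNReal.le_liminf_mul
  have hu_le : 2 * ‖∫ a in (A t₁)..(A t₂), α a‖ₑ ≤ P :=
    le_of_tendsto hu (Eventually.of_forall fun k => le_self_add.trans (key k))
  rcases eq_or_ne P ∞ with rfl | hPtop
  · exact le_top
  have hv2 : liminf (fun k => ∫⁻ t in I, ENNReal.ofReal (σ (a k t)) * q k t) atTop ≤
      P - 2 * ‖∫ a in (A t₁)..(A t₂), α a‖ₑ := by
    rw [← (ENNReal.Tendsto.sub tendsto_const_nhds hu (Or.inl hPtop)).liminf_eq]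
    refine liminf_le_liminf (Eventually.of_forall fun k => ?_)
    refine ENNReal.le_sub_of_add_le_left ?_ (key k)
    exact ENNReal.mul_ne_top (by simp) enorm_ne_top
  calc _ ≤ 2 * ‖∫ a in (A t₁)..(A t₂), α a‖ₑ + (P - 2 * ‖∫ a in (A t₁)..(A t₂), α a‖ₑ) := by
        gcongr; exact hv.trans hv2
    _ = P := add_tsub_cancel_of_le hu_le

end Slicing

/-- One-dimensional data produced by slicing: a function `A` with integral `v` and
(essential) range in `[m₀, M]`, satisfying the slicing inequality with right-hand side `P`. -/
structure SliceData (I : Set ℝ) (Ψ : ℝ → ℝ) (A : ℝ → ℝ) (v P m₀ M : ℝ) : Prop where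
  nonneg : 0 ≤ m₀
  le : m₀ ≤ M
  mem : ∀ᵐ t ∂volume.restrict I, A t ∈ Icc m₀ M
  integrable : IntegrableOn A I
  integral_eq : ∫ t in I, A t = v
  measurable : Measurable A
  ineq : ∀ α σ : ℝ → ℝ, Continuous α → Continuous σ →
      (∀ a, 0 ≤ α a) → (∀ a, 0 ≤ σ a) → (∀ a, α a ^ 2 + σ a ^ 2 ≤ 1) →
      IntegrableOn (fun t => σ (A t) * Ψ (A t)) I ∧
      2 * (∫ a in m₀..M, α a) + ∫ t in I, σ (A t) * Ψ (A t) ≤ P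

section

variable {V : Type*} [NormedAddCommGroup V] [InnerProductSpace ℝ V] [FiniteDimensional ℝ V]
  [MeasurableSpace V] [BorelSpace V] {I Λt : Set ℝ} {D Λ : Set V}

theorem RelaxedIso.sliceData (hI : MeasurableSet I) (hI0 : volume I ≠ 0) (hD : MeasurableSet D)
    (h0 : (0 : ℝ) ∈ I) (hosc : OscillationBound I Λt) {Ψ : ℝ → ℝ} (hΨ : ∀ a, 0 ≤ Ψ a)
    (hΨm : Measurable Ψ)
    (hiso : RelaxedIso D Λ Ψ) {E : Set (LineProd V)} (hE : MeasurableSet E)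
    (hfin : volume (E ∩ prodDom I D) ≠ ∞) {g : ℕ → LineProd V → ℝ}
    (hg : ∀ k, IsAdmissible (prodDom I D) (prodPer Λt Λ) (g k))
    (hconv : Tendsto (fun k => ∫⁻ x in prodDom I D, ‖g k x - E.indicator 1 x‖ₑ) atTop (𝓝 0))
    {P : ℝ≥0∞} (hPtop : P ≠ ∞)
    (hP : ∀ k, ∫⁻ x in prodDom I D, ‖fderiv ℝ (g k) x‖ₑ ≤ P) :
    ∃ m₀ M, SliceData I Ψ (sliceVol D E) (volume.real (E ∩ prodDom I D)) P.toReal m₀ M := by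
  obtain ⟨T, hTI, hTae, hT⟩ := hiso.slicing hI hD h0 hosc hE hfin hg hconv hP
  set A := sliceVol D E with hA
  have hAm : Measurable A := measurable_sliceVol hE
  have hA0 : ∀ t, 0 ≤ A t := fun t => measureReal_nonneg
  obtain ⟨τ, hτ⟩ : T.Nonempty := by
    by_contra hne
    rw [not_nonempty_iff_eq_empty] at hne
    rw [hne] at hTae
    have : volume.restrict I univ = 0 := by
      rw [ae_iff] at hTae; simpa using hTae
    exact hI0 (by simpa using this)
  have hosc2 : ∀ t₁ ∈ T, ∀ t₂ ∈ T, 2 * |A t₁ - A t₂| ≤ P.toReal := by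
    intro t₁ h₁ t₂ h₂
    have := hT (fun _ => 1) (fun _ => 0) continuous_const continuous_const (by simp) (by simp)
      (by simp) t₂ h₂ t₁ h₁
    simp only [intervalIntegral.integral_const, smul_eq_mul, mul_one, zero_mul,
      ENNReal.ofReal_zero, lintegral_zero, add_zero] at this
    have h2 := ENNReal.toReal_mono hPtop this
    rwa [ENNReal.toReal_mul, toReal_enorm, Real.norm_eq_abs] at h2
  have hbdd : BddAbove (A '' T) := ⟨A τ + P.toReal, by
    rintro _ ⟨t, ht, rfl⟩
    have h3 := hosc2 t ht τ hτ
    have := le_abs_self (A t - A τ)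
    have := abs_nonneg (A t - A τ)
    linarith⟩
  have hbdd' : BddBelow (A '' T) := ⟨0, by rintro _ ⟨t, ht, rfl⟩; exact hA0 t⟩
  have hne : (A '' T).Nonempty := ⟨_, τ, hτ, rfl⟩
  have hmem : ∀ t ∈ T, A t ∈ Icc (sInf (A '' T)) (sSup (A '' T)) := fun t ht =>
    ⟨csInf_le hbdd' ⟨t, ht, rfl⟩, le_csSup hbdd ⟨t, ht, rfl⟩⟩
  obtain ⟨x, -, hx, hxT⟩ := exists_seq_tendsto_sInf hne hbdd'
  obtain ⟨y, -, hy, hyT⟩ := exists_seq_tendsto_sSup hne hbdd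
  have hlin : ∫⁻ t in I, ENNReal.ofReal (A t) = volume (E ∩ prodDom I D) := by
    rw [volume_slice_lintegral hI hD hE]
    have hmv : Measurable fun t => volume ({x | WithLp.toLp 2 (t, x) ∈ E} ∩ D) := by
      have hm : ∀ t, MeasurableSet {x : V | WithLp.toLp 2 (t, x) ∈ E} := fun t =>
        (measurable_toLp_pair.comp measurable_prodMk_left) hE
      convert measurable_slice_lintegral (D := D) (f := E.indicator 1)
        (measurable_one.indicator hE) using 1
      ext t
      rw [← Measure.restrict_apply (hm t), ← lintegral_indicator_one (hm t)]
      rfl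
    refine lintegral_congr_ae ?_
    have := ae_lt_top hmv (volume_slice_lintegral hI hD hE ▸ hfin)
    filter_upwards [this] with t ht
    exact ENNReal.ofReal_toReal ht.ne
  refine ⟨sInf (A '' T), sSup (A '' T), ?_, ?_, ?_, ?_, ?_, hAm, ?_⟩
  · exact le_csInf hne (by rintro _ ⟨t, ht, rfl⟩; exact hA0 t)
  · exact (hmem τ hτ).1.trans (hmem τ hτ).2
  · filter_upwards [hTae] with t ht using hmem t ht
  · rw [IntegrableOn, ← lintegral_ofReal_ne_top_iff_integrable hAm.aestronglyMeasurable
      (Eventually.of_forall hA0), hlin]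
    exact hfin
  · rw [integral_eq_lintegral_of_nonneg_ae (Eventually.of_forall hA0) hAm.aestronglyMeasurable,
      hlin]; rfl
  intro α σ hα hσ hα0 hσ0 h1
  have e : ∀ x y : ℝ, ∫ a in x..y, α a = (∫ a in (0 : ℝ)..y, α a) - ∫ a in (0 : ℝ)..x, α a :=
      fun x y => (intervalIntegral.integral_interval_sub_left (hα.intervalIntegrable _ _)
        (hα.intervalIntegrable _ _)).symm
  have c : Continuous fun y => ∫ a in (0 : ℝ)..y, α a :=
    intervalIntegral.continuous_primitive (fun _ _ => hα.intervalIntegrable _ _) 0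
  have hlim : Tendsto (fun k => 2 * (∫ a in (x k)..(y k), α a)) atTop
      (𝓝 (2 * ∫ a in (sInf (A '' T))..(sSup (A '' T)), α a)) := by
    refine Tendsto.const_mul _ ?_
    rw [e]
    refine Tendsto.congr (fun k => (e (x k) (y k)).symm) ?_
    exact ((c.tendsto _).comp hy).sub ((c.tendsto _).comp hx)
  have hmeas : Measurable fun t => σ (A t) * Ψ (A t) :=
    (hσ.measurable.comp hAm).mul (hΨm.comp hAm)
  have hnn : ∀ t, 0 ≤ σ (A t) * Ψ (A t) := fun t => mul_nonneg (hσ0 _) (hΨ _)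
  have hint : ∫⁻ t in I, ENNReal.ofReal (σ (A t) * Ψ (A t)) ≠ ∞ :=
    ne_top_of_le_ne_top hPtop (le_add_self.trans (hT α σ hα hσ hα0 hσ0 h1 τ hτ τ hτ))
  refine ⟨?_, ?_⟩
  · rw [IntegrableOn, ← lintegral_ofReal_ne_top_iff_integrable hmeas.aestronglyMeasurable
      (Eventually.of_forall hnn)]
    exact hint
  rw [integral_eq_lintegral_of_nonneg_ae (Eventually.of_forall hnn) hmeas.aestronglyMeasurable]
  refine le_of_tendsto (hlim.add_const _) (Eventually.of_forall fun k => ?_)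
  obtain ⟨t₁, h₁, e₁⟩ := hxT k
  obtain ⟨t₂, h₂, e₂⟩ := hyT k
  have := ENNReal.toReal_mono hPtop (hT α σ hα hσ hα0 hσ0 h1 t₁ h₁ t₂ h₂)
  rw [ENNReal.toReal_add (ENNReal.mul_ne_top (by simp) enorm_ne_top) hint,
    ENNReal.toReal_mul, toReal_enorm, Real.norm_eq_abs, e₁, e₂] at this
  refine le_trans ?_ this
  rw [ENNReal.toReal_ofNat]
  have := le_abs_self (∫ a in (x k)..(y k), α a)
  linarith

end

/-- The volume of the unit ball of dimension `N`. -/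
def ballConst (N : ℕ) : ℝ := √π ^ N / Real.Gamma (N / 2 + 1)

lemma ballConst_pos (N : ℕ) : 0 < ballConst N := by
  have := Real.pi_pos
  exact div_pos (by positivity) (Real.Gamma_pos_of_pos (by positivity))

lemma volume_real_ball_one (E : Type*) [NormedAddCommGroup E] [InnerProductSpace ℝ E]
    [FiniteDimensional ℝ E] [MeasurableSpace E] [BorelSpace E] [Nontrivial E] :
    volume.real (Metric.ball (0 : E) 1) = ballConst (Module.finrank ℝ E) := by
  rw [Measure.real, InnerProductSpace.volume_ball]
  simp only [ENNReal.ofReal_one, one_pow, one_mul]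
  exact ENNReal.toReal_ofReal (ballConst_pos _).le

lemma ballConst_one : ballConst 1 = 2 := by
  have : Real.Gamma ((1 : ℕ) / 2 + 1) = √π / 2 := by
    rw [Real.Gamma_add_one (by norm_num)]
    push_cast
    rw [Real.Gamma_one_half_eq]; ring
  rw [ballConst, this]
  have := Real.pi_pos
  field_simp

lemma finrank_lineProd (E : Type*) [NormedAddCommGroup E] [InnerProductSpace ℝ E]
    [FiniteDimensional ℝ E] :
    Module.finrank ℝ (LineProd E) = Module.finrank ℝ E + 1 := by
  rw [(WithLp.linearEquiv 2 ℝ (ℝ × E)).finrank_eq, Module.finrank_prod]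
  simp [add_comm]

/-- the profile of the spherical cap, as a function of the enclosed volume -/
def capFn (m : ℕ) (u : ℝ) : ℝ := √(1 - (u ^ (1 / (m : ℝ))) ^ 2)

lemma ballConst_succ {m : ℕ} (hm : 1 ≤ m) :
    ballConst (m + 1) = 2 * ballConst m * ∫ u in Ioi (0 : ℝ), capFn m u := by
  have hnt : Nonempty (Fin m) := ⟨⟨0, hm⟩⟩
  have h1 := volume_real_ball_one (LineProd (EucSp m))
  rw [finrank_lineProd, finrank_euclideanSpace_fin] at h1
  rw [← h1]
  have h2 := volume_real_ball_one (EucSp m)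
  rw [finrank_euclideanSpace_fin] at h2
  have hmp := WithLp.volume_preserving_toLp (U := ℝ) (V := EucSp m)
  have e1 : volume (Metric.ball (0 : LineProd (EucSp m)) 1) =
      ∫⁻ x : EucSp m, ENNReal.ofReal (2 * √(1 - ‖x‖ ^ 2)) := by
    rw [← hmp.measure_preimage measurableSet_ball.nullMeasurableSet, Measure.volume_eq_prod,
      Measure.prod_apply_symm (measurable_toLp_pair measurableSet_ball)]
    refine lintegral_congr fun x => ?_
    have : (fun t : ℝ => (t, x)) ⁻¹' ((WithLp.toLp 2) ⁻¹'
        Metric.ball (0 : LineProd (EucSp m)) 1) = Ioo (-√(1 - ‖x‖ ^ 2)) (√(1 - ‖x‖ ^ 2)) := by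
      ext t
      have h := WithLp.prod_norm_sq_eq_of_L2 (WithLp.toLp 2 (t, x) : LineProd (EucSp m))
      change _ = ‖t‖ ^ 2 + ‖x‖ ^ 2 at h
      rw [Real.norm_eq_abs, sq_abs] at h
      simp only [mem_preimage, Metric.mem_ball, dist_zero_right, mem_Ioo]
      rw [← Real.sq_lt, lt_sub_iff_add_lt, ← h, sq_lt_one_iff₀ (norm_nonneg _)]
    rw [this, Real.volume_Ioo]
    congr 1; ring
  have e2 : volume.real (Metric.ball (0 : LineProd (EucSp m)) 1) =
      ∫ x : EucSp m, 2 * √(1 - ‖x‖ ^ 2) := by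
    rw [integral_eq_lintegral_of_nonneg_ae (Eventually.of_forall fun x => by positivity)
      (by fun_prop), ← e1]; rfl
  rw [e2, integral_const_mul, integral_fun_norm_addHaar volume (fun y => √(1 - y ^ 2)), h2,
    finrank_euclideanSpace_fin]
  have hm0 : (0 : ℝ) < m := by exact_mod_cast hm
  rw [← integral_comp_rpow_Ioi_of_pos hm0 (g := capFn m), nsmul_eq_mul, smul_eq_mul]
  have : ∫ x in Ioi (0 : ℝ), ((m : ℝ) * x ^ ((m : ℝ) - 1)) • capFn m (x ^ (m : ℝ)) =
      ∫ x in Ioi (0 : ℝ), (m : ℝ) * (x ^ (m - 1) • √(1 - x ^ 2)) := by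
    refine setIntegral_congr_fun measurableSet_Ioi fun x hx => ?_
    have hx' : (0 : ℝ) < x := hx
    simp only [smul_eq_mul, capFn]
    rw [← rpow_mul hx'.le, mul_one_div_cancel hm0.ne', Real.rpow_one, mul_assoc]
    congr 2
    rw [show (m : ℝ) - 1 = ((m - 1 : ℕ) : ℝ) by rw [Nat.cast_sub hm]; simp, Real.rpow_natCast]
  rw [this, integral_const_mul]
  ring

/-- The Euclidean isoperimetric profile in dimension `N`. -/
def eucIso (N : ℕ) (v : ℝ) : ℝ :=
  if 0 < v then N * ballConst N ^ (1 / (N : ℝ)) * v ^ (((N : ℝ) - 1) / N) else 0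

lemma eucIso_of_pos {N : ℕ} {v : ℝ} (h : 0 < v) :
    eucIso N v = N * ballConst N ^ (1 / (N : ℝ)) * v ^ (((N : ℝ) - 1) / N) := if_pos h

lemma eucIso_of_nonpos {N : ℕ} {v : ℝ} (h : v ≤ 0) : eucIso N v = 0 := if_neg h.not_gt

lemma eucIso_nonneg (N : ℕ) (v : ℝ) : 0 ≤ eucIso N v := by
  unfold eucIso
  have := ballConst_pos N
  split_ifs <;> positivity

lemma measurable_eucIso (N : ℕ) : Measurable (eucIso N) := by
  unfold eucIso
  exact Measurable.ite measurableSet_Ioi (by fun_prop) measurable_const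

/-- the radius of the `m`-ball of volume `a` -/
def ballRadius (m : ℕ) (a : ℝ) : ℝ := (max a 0 / ballConst m) ^ (1 / (m : ℝ))

lemma continuous_ballRadius {m : ℕ} : Continuous (ballRadius m) := by
  unfold ballRadius
  exact Continuous.rpow_const (by fun_prop) (fun x => Or.inr (by positivity))

lemma ballRadius_nonneg (m : ℕ) (a : ℝ) : 0 ≤ ballRadius m a := by
  unfold ballRadius
  have := ballConst_pos m
  positivity

lemma ballRadius_pos {m : ℕ} {a : ℝ} (h : 0 < a) : 0 < ballRadius m a := by
  unfold ballRadius
  have := ballConst_pos m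
  have : 0 < max a 0 := lt_max_of_lt_left h
  positivity

lemma ballRadius_mono {m : ℕ} : Monotone (ballRadius m) := by
  intro a b h
  unfold ballRadius
  have := ballConst_pos m
  gcongr

lemma ballConst_mul_ballRadius_pow {m : ℕ} (hm : 1 ≤ m) {a : ℝ} (ha : 0 ≤ a) :
    ballConst m * ballRadius m a ^ m = a := by
  have hb := ballConst_pos m
  unfold ballRadius
  rw [max_eq_left ha, ← Real.rpow_natCast, ← rpow_mul (by positivity), one_div,
    inv_mul_cancel₀ (by positivity), Real.rpow_one]
  field_simp

lemma eucIso_eq_radius {m : ℕ} (hm : 1 ≤ m) {a : ℝ} (ha : 0 < a) :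
    eucIso m a = m * ballConst m * ballRadius m a ^ (m - 1) := by
  have hb := ballConst_pos m
  have hm0 : (0 : ℝ) < m := by exact_mod_cast hm
  rw [eucIso_of_pos ha]
  unfold ballRadius
  rw [max_eq_left ha.le, ← Real.rpow_natCast, ← rpow_mul (by positivity), Nat.cast_sub hm,
    div_rpow ha.le hb.le]
  have e : ballConst m ^ (1 / (m : ℝ)) * ballConst m ^ (((m : ℝ) - 1) / m) = ballConst m := by
    rw [← rpow_add hb, ← add_div]
    simp [hm0.ne']
  have : ballConst m ^ (((m : ℝ) - 1) / m) ≠ 0 := (rpow_pos_of_pos hb _).ne'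
  rw [show (1 / (m : ℝ) * ((m : ℝ) - ((1 : ℕ) : ℝ))) = ((m : ℝ) - 1) / m by push_cast; ring,
    mul_div_assoc', eq_div_iff this]
  linear_combination (m : ℝ) * a ^ (((m : ℝ) - 1) / m) * e

lemma eucIso_mul_radius {m : ℕ} (hm : 1 ≤ m) {a : ℝ} (ha : 0 ≤ a) :
    eucIso m a * ballRadius m a = m * a := by
  rcases ha.eq_or_lt with rfl | ha'
  · rw [eucIso_of_nonpos le_rfl]; simp
  · rw [eucIso_eq_radius hm ha', mul_assoc, ← pow_succ, Nat.sub_add_cancel hm, mul_assoc,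
      ballConst_mul_ballRadius_pow hm ha]

/-- weighted AM-GM in the form used to optimise over the radius -/
lemma eucIso_succ_le {m : ℕ} (hm : 1 ≤ m) {v ρ : ℝ} (hv : 0 < v) (hρ : 0 < ρ) :
    eucIso (m + 1) v ≤ m * v / ρ + ballConst (m + 1) * ρ ^ m := by
  have hb := ballConst_pos (m + 1)
  have hm0 : (0 : ℝ) < m := by exact_mod_cast hm
  rw [eucIso_of_pos hv]
  have h := Real.geom_mean_le_arith_mean2_weighted (w₁ := m / (m + 1)) (w₂ := 1 / (m + 1))
    (p₁ := (m + 1) * v / ρ) (p₂ := (m + 1) * ballConst (m + 1) * ρ ^ m) (by positivity)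
    (by positivity) (by positivity) (by positivity) (by field_simp)
  have e2 : (m : ℝ) / (m + 1) * ((m + 1) * v / ρ) + 1 / (m + 1) *
      ((m + 1) * ballConst (m + 1) * ρ ^ m) = m * v / ρ + ballConst (m + 1) * ρ ^ m := by
    field_simp
  rw [e2] at h
  refine le_trans (le_of_eq ?_) h
  rw [div_rpow (by positivity) hρ.le, mul_rpow (by positivity) hv.le,
    mul_rpow (by positivity) (by positivity), mul_rpow (by positivity) hb.le]
  rw [← Real.rpow_natCast ρ m, ← rpow_mul hρ.le, mul_one_div]
  have e3 : ((m : ℝ) + 1) ^ ((m : ℝ) / (m + 1)) * ((m : ℝ) + 1) ^ (1 / ((m : ℝ) + 1)) = m + 1 := by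
    rw [← rpow_add (by positivity), ← add_div, div_self (by positivity), Real.rpow_one]
  push_cast
  rw [add_sub_cancel_right]
  have : ρ ^ ((m : ℝ) / (m + 1)) ≠ 0 := (rpow_pos_of_pos hρ _).ne'
  field_simp
  linear_combination -e3

section

variable {V W : Type*} [NormedAddCommGroup V] [InnerProductSpace ℝ V] [FiniteDimensional ℝ V]
  [MeasurableSpace V] [BorelSpace V] {I Λt : Set ℝ} {D Λ : Set V}
  [NormedAddCommGroup W] [InnerProductSpace ℝ W] [FiniteDimensional ℝ W]
  [MeasurableSpace W] [BorelSpace W]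

theorem RelaxedIso.prod (hI : MeasurableSet I) (hI0 : volume I ≠ 0) (hD : MeasurableSet D)
    (h0 : (0 : ℝ) ∈ I) (hosc : OscillationBound I Λt) {Ψ Φ : ℝ → ℝ} (hΨ : ∀ a, 0 ≤ Ψ a)
    (hΨm : Measurable Ψ) (hiso : RelaxedIso D Λ Ψ)
    (hΦ : ∀ A v P m₀ M, SliceData I Ψ A v P m₀ M → Φ v ≤ P) :
    RelaxedIso (prodDom I D) (prodPer Λt Λ) Φ := by
  intro E g P hE hfin hg hconv hP
  by_cases hPtop : P = ∞
  · rw [hPtop]; exact le_top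
  obtain ⟨m₀, M, h⟩ := hiso.sliceData hI hI0 hD h0 hosc hΨ hΨm hE hfin hg hconv hPtop hP
  exact ENNReal.ofReal_le_of_le_toReal (hΦ _ _ _ _ _ h)

lemma RelaxedIso.mono {Ψ Φ : ℝ → ℝ} (h : RelaxedIso D Λ Ψ) (hle : ∀ v, Φ v ≤ Ψ v) :
    RelaxedIso D Λ Φ := fun E g P hE hfin hg hconv hP =>
  (ENNReal.ofReal_le_ofReal (hle _)).trans (h E g P hE hfin hg hconv hP)

lemma prodDom_univ : prodDom (univ : Set ℝ) (univ : Set V) = univ := by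
  ext; simp [prodDom]

lemma prodPer_empty : prodPer (∅ : Set ℝ) (∅ : Set V) = ∅ := by
  ext; simp [prodPer]

lemma IsAdmissible.comp_isometry {g : V → ℝ} (hg : IsAdmissible univ ∅ g) (e : W ≃ₗᵢ[ℝ] V) :
    IsAdmissible univ ∅ (g ∘ e) where
  contDiff := hg.contDiff.comp e.contDiff
  periodic := by simp
  support r := by
    obtain ⟨R, hR⟩ := hg.support r
    refine ⟨R, fun x _ b hb hx => ?_⟩
    simp only [Function.comp, map_add]
    exact hR _ trivial _ (by rwa [e.norm_map]) (by rwa [e.norm_map])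

lemma RelaxedIso.of_isometry {Ψ : ℝ → ℝ} (h : RelaxedIso (univ : Set V) ∅ Ψ)
    (e : W ≃ₗᵢ[ℝ] V) : RelaxedIso (univ : Set W) ∅ Ψ := by
  intro E g P hE hfin hg hconv hP
  have hmp := e.symm.measurePreserving
  have hme := e.symm.toHomeomorph.measurableEmbedding
  have hvol : volume (e.symm ⁻¹' E) = volume E := hmp.measure_preimage hE.nullMeasurableSet
  have key := h (e.symm ⁻¹' E) (fun k => g k ∘ e.symm) P (e.symm.continuous.measurable hE)
    (by rw [inter_univ] at hfin ⊢; rwa [hvol]) (fun k => (hg k).comp_isometry e.symm) ?_ ?_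
  · simp only [inter_univ, Measure.real, hvol] at key ⊢
    exact key
  · simp only [setLIntegral_univ] at hconv ⊢
    convert hconv using 2 with k
    exact hmp.lintegral_comp_emb hme (fun x => ‖g k x - E.indicator 1 x‖ₑ)
  · intro k
    simp only [setLIntegral_univ] at hP ⊢
    refine le_of_eq_of_le ?_ (hP k)
    rw [← hmp.lintegral_comp_emb hme (fun x => ‖fderiv ℝ (g k) x‖ₑ)]
    refine lintegral_congr fun x => ?_
    have : fderiv ℝ (g k ∘ e.symm) x = (fderiv ℝ (g k) (e.symm x)).comp
        (e.symm.toContinuousLinearEquiv : V →L[ℝ] W) :=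
      e.symm.toContinuousLinearEquiv.comp_right_fderiv
    rw [this, ← ofReal_norm, ← ofReal_norm]
    congr 1
    exact ContinuousLinearMap.opNorm_comp_linearIsometryEquiv _ e.symm

end

/-- the isometry `ℝ^{m+1} ≃ ℝ × ℝ^m` -/
def eucSuccIsometry (m : ℕ) : EucSp (m + 1) ≃ₗᵢ[ℝ] LineProd (EucSp m) :=
  ((stdOrthonormalBasis ℝ (LineProd (EucSp m))).reindex
    (finCongr (by rw [finrank_lineProd, finrank_euclideanSpace_fin]))).repr.symm

lemma SliceData.min_eq_zero {Ψ A : ℝ → ℝ} {v P m₀ M : ℝ} (h : SliceData univ Ψ A v P m₀ M) :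
    m₀ = 0 := by
  by_contra hne
  have hpos : 0 < m₀ := lt_of_le_of_ne h.nonneg (Ne.symm hne)
  have h1 : IntegrableOn (fun _ : ℝ => m₀) univ := by
    refine h.integrable.mono' aestronglyMeasurable_const ?_
    filter_upwards [h.mem] with t ht
    rw [Real.norm_of_nonneg hpos.le]; exact ht.1
  rw [integrableOn_const_iff] at h1
  simp [hne] at h1

lemma SliceData.max_pos {I : Set ℝ} {Ψ A : ℝ → ℝ} {v P m₀ M : ℝ} (h : SliceData I Ψ A v P m₀ M)
    (hv : 0 < v) : 0 < M := by
  by_contra! hM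
  have : ∫ t in I, A t ≤ 0 := by
    refine integral_nonpos_of_ae ?_
    filter_upwards [h.mem] with t ht using ht.2.trans hM
  rw [h.integral_eq] at this
  linarith

lemma SliceData.two_mul_le {I : Set ℝ} {Ψ A : ℝ → ℝ} {v P m₀ M : ℝ}
    (h : SliceData I Ψ A v P m₀ M) : 2 * (M - m₀) ≤ P := by
  have := (h.ineq (fun _ => 1) (fun _ => 0) continuous_const continuous_const (by simp) (by simp)
    (by simp)).2
  simpa using this

lemma integral_cap {m : ℕ} (hm : 1 ≤ m) {M : ℝ} (hM : 0 < M) :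
    2 * ∫ a in (0 : ℝ)..M, √(1 - (ballRadius m a / ballRadius m M) ^ 2) =
      ballConst (m + 1) * ballRadius m M ^ m := by
  have hm0 : (0 : ℝ) < m := by exact_mod_cast hm
  have hb := ballConst_pos m
  have h1 : ∫ u in Ioi (0 : ℝ), capFn m u = ∫ u in (0 : ℝ)..1, capFn m u := by
    rw [intervalIntegral.integral_of_le zero_le_one]
    refine setIntegral_eq_of_subset_of_forall_sdiff_eq_zero measurableSet_Ioi Ioc_subset_Ioi_self ?_
    rintro u ⟨hu, hu'⟩
    have hu0 : (0 : ℝ) < u := hu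
    have hu1 : 1 < u := by
      by_contra! hle; exact hu' ⟨hu0, hle⟩
    refine Real.sqrt_eq_zero_of_nonpos ?_
    have : 1 ≤ u ^ (1 / (m : ℝ)) := Real.one_le_rpow hu1.le (by positivity)
    nlinarith
  have h2 := intervalIntegral.mul_integral_comp_mul_left
    (f := fun a => √(1 - (ballRadius m a / ballRadius m M) ^ 2)) (a := 0) (b := 1) M
  rw [mul_zero, mul_one] at h2
  rw [← h2, ballConst_succ hm, h1]
  have h3 : ∫ x in (0 : ℝ)..1, √(1 - (ballRadius m (M * x) / ballRadius m M) ^ 2) =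
      ∫ u in (0 : ℝ)..1, capFn m u := by
    refine intervalIntegral.integral_congr fun u hu => ?_
    rw [uIcc_of_le zero_le_one] at hu
    simp only [capFn]
    congr 3
    have hM0 := hM.le
    unfold ballRadius
    rw [max_eq_left (mul_nonneg hM.le hu.1), max_eq_left hM.le, ← div_rpow (by have := hu.1; positivity) (by positivity)]
    congr 1
    field_simp
  rw [h3]
  have := ballConst_mul_ballRadius_pow hm hM.le
  linear_combination -2 * (∫ u in (0 : ℝ)..1, capFn m u) * this

lemma cap_sq_add_sq_le (u : ℝ) : √(1 - u ^ 2) ^ 2 + (min 1 u) ^ 2 ≤ 1 ∨ u < 0 := by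
  rcases lt_or_ge u 0 with h | h
  · exact Or.inr h
  left
  rcases le_total u 1 with h1 | h1
  · rw [Real.sq_sqrt (by nlinarith), min_eq_right h1]; linarith
  · rw [Real.sqrt_eq_zero_of_nonpos (by nlinarith), min_eq_left h1]; norm_num

theorem SliceData.eucIso_le {m : ℕ} (hm : 1 ≤ m) {A : ℝ → ℝ} {v P m₀ M : ℝ}
    (h : SliceData univ (eucIso m) A v P m₀ M) (hv : 0 < v) : eucIso (m + 1) v ≤ P := by
  have hM := h.max_pos hv
  obtain rfl := h.min_eq_zero
  set ρ := ballRadius m M with hρ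
  have hρ0 : 0 < ρ := ballRadius_pos hM
  have hc : Continuous (ballRadius m) := continuous_ballRadius
  have key := (h.ineq (fun a => √(1 - (ballRadius m a / ρ) ^ 2))
    (fun a => min 1 (ballRadius m a / ρ)) (by fun_prop) (by fun_prop)
    (fun a => Real.sqrt_nonneg _)
    (fun a => le_min zero_le_one (div_nonneg (ballRadius_nonneg _ _) hρ0.le))
    (fun a => (cap_sq_add_sq_le _).resolve_right
      (not_lt.mpr (div_nonneg (ballRadius_nonneg _ _) hρ0.le)))).2
  rw [integral_cap hm hM, ← hρ] at key
  have e : ∫ t in univ, min 1 (ballRadius m (A t) / ρ) * eucIso m (A t) =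
      ∫ t in univ, m / ρ * A t := by
    refine integral_congr_ae ?_
    filter_upwards [h.mem] with t ht
    have h1 : ballRadius m (A t) / ρ ≤ 1 := by
      rw [div_le_one hρ0]; exact ballRadius_mono ht.2
    rw [min_eq_right h1]
    have := eucIso_mul_radius hm ht.1
    field_simp
    linear_combination this
  rw [e, integral_const_mul, h.integral_eq] at key
  have := eucIso_succ_le hm hv hρ0
  calc _ ≤ _ := this
    _ = _ := by ring
    _ ≤ P := key

theorem relaxedIso_eucSp_one : RelaxedIso (univ : Set (EucSp 1)) ∅ (eucIso 1) := by
  refine RelaxedIso.of_isometry ?_ (eucSuccIsometry 0)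
  rw [← prodDom_univ, ← prodPer_empty]
  intro E g P hE hfin hg hconv hP
  by_cases hPtop : P = ∞
  · rw [hPtop]; exact le_top
  have hiso : RelaxedIso (univ : Set (EucSp 0)) ∅ (fun _ => 0) := by
    intro E g P _ _ _ _ _
    simp
  obtain ⟨m₀, M, h⟩ := hiso.sliceData MeasurableSet.univ (by simp) MeasurableSet.univ trivial
    oscillationBound_univ (fun _ => le_rfl) measurable_const hE hfin hg hconv hPtop hP
  refine ENNReal.ofReal_le_of_le_toReal ?_
  rcases le_or_gt (volume.real (E ∩ prodDom univ univ)) 0 with hv | hv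
  · rw [eucIso_of_nonpos hv]; exact ENNReal.toReal_nonneg
  obtain rfl := h.min_eq_zero
  have hM := h.max_pos hv
  have hval : ∀ t, sliceVol univ E t = 0 ∨ sliceVol univ E t = 1 := by
    intro t
    unfold sliceVol
    rcases Subsingleton.eq_empty_or_singleton
      (s := {x : EucSp 0 | (WithLp.toLp 2 (t, x) : LineProd (EucSp 0)) ∈ E} ∩ univ)
      Set.subsingleton_of_subsingleton with h0 | ⟨x, hx⟩
    · left; rw [h0]; simp
    · right
      rw [hx, volume_euclideanSpace_eq_dirac]
      simp [Subsingleton.elim x 0, Measure.real]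
  have hM1 : 1 ≤ M := by
    by_contra! hlt
    have : ∫ t in univ, sliceVol univ E t = 0 := by
      refine integral_eq_zero_of_ae ?_
      filter_upwards [h.mem] with t ht
      rcases hval t with h0 | h1
      · exact h0
      · rw [h1] at ht; exact absurd ht.2 (not_le.mpr hlt)
    rw [h.integral_eq] at this
    exact hv.ne' this
  rw [eucIso_of_pos hv, ballConst_one]
  have := h.two_mul_le
  norm_num
  linarith

theorem relaxedIso_eucSp {N : ℕ} (hN : 1 ≤ N) : RelaxedIso (univ : Set (EucSp N)) ∅ (eucIso N) := by
  induction N, hN using Nat.le_induction with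
  | base => exact relaxedIso_eucSp_one
  | succ m hm ih =>
    refine RelaxedIso.of_isometry ?_ (eucSuccIsometry m)
    rw [← prodDom_univ, ← prodPer_empty]
    refine ih.prod MeasurableSet.univ (by simp) MeasurableSet.univ trivial
      oscillationBound_univ (eucIso_nonneg m) (measurable_eucIso m) ?_
    intro A v P m₀ M h
    rcases le_or_gt v 0 with hv | hv
    · rw [eucIso_of_nonpos hv]
      have := h.two_mul_le
      have := h.le
      linarith
    · exact h.eucIso_le hm hv

/-- the Euclidean profile truncated to volumes at most `c` -/
def smallIso (m : ℕ) (c a : ℝ) : ℝ := if a ≤ c then eucIso m a else 0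

lemma smallIso_nonneg (m : ℕ) (c a : ℝ) : 0 ≤ smallIso m c a := by
  unfold smallIso; split_ifs
  · exact eucIso_nonneg m a
  · exact le_rfl

lemma measurable_smallIso (m : ℕ) (c : ℝ) : Measurable (smallIso m c) :=
  Measurable.ite measurableSet_Iic (measurable_eucIso m) measurable_const

lemma smallIso_of_le {m : ℕ} {c a : ℝ} (h : a ≤ c) : smallIso m c a = eucIso m a := if_pos h

lemma smallIso_le (m : ℕ) (c a : ℝ) : smallIso m c a ≤ eucIso m a := by
  unfold smallIso; split_ifs
  · exact le_rfl
  · exact eucIso_nonneg m a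

/-- the field used to gain from a positive minimal slice -/
def gainFn (m : ℕ) (m₀ ρ a : ℝ) : ℝ :=
  (ballRadius m m₀ / ballRadius m (max a m₀)) ^ (m - 1) / 4 *
    max 0 (min 1 (2 - 4 * (ballRadius m a / ρ)))

lemma gainFn_spec {m : ℕ} {m₀ ρ : ℝ} (hm₀ : 0 < m₀) :
    Continuous (gainFn m m₀ ρ) ∧ (∀ a, 0 ≤ gainFn m m₀ ρ a) ∧
    (∀ a, gainFn m m₀ ρ a ≤ (ballRadius m m₀ / ballRadius m (max a m₀)) ^ (m - 1) / 4) ∧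
    (∀ a, gainFn m m₀ ρ a ≤ 1 / 4) ∧
    (∀ a, 1 / 2 ≤ ballRadius m a / ρ → gainFn m m₀ ρ a = 0) := by
  have hc : Continuous (ballRadius m) := continuous_ballRadius
  have hpos : ∀ a, 0 < ballRadius m (max a m₀) := fun a => ballRadius_pos (lt_max_of_lt_right hm₀)
  have h1 : ∀ a, ballRadius m m₀ / ballRadius m (max a m₀) ≤ 1 := fun a => by
    rw [div_le_one (hpos a)]; exact ballRadius_mono (le_max_right _ _)
  have h2 : ∀ a, 0 ≤ (ballRadius m m₀ / ballRadius m (max a m₀)) := fun a =>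
    div_nonneg (ballRadius_nonneg _ _) (hpos a).le
  have h3 : ∀ a, max 0 (min 1 (2 - 4 * (ballRadius m a / ρ))) ≤ 1 := fun a =>
    max_le zero_le_one (min_le_left _ _)
  have h4 : ∀ a, gainFn m m₀ ρ a ≤ (ballRadius m m₀ / ballRadius m (max a m₀)) ^ (m - 1) / 4 :=
    fun a => mul_le_of_le_one_right (by have := h2 a; positivity) (h3 a)
  refine ⟨?_, fun a => ?_, h4, fun a => ?_, fun a ha => ?_⟩
  · unfold gainFn
    refine Continuous.mul (Continuous.div_const (Continuous.pow (Continuous.div continuous_const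
      (by fun_prop) fun a => (hpos a).ne') _) _) (by fun_prop)
  · have := h2 a
    unfold gainFn; positivity
  · refine (h4 a).trans ?_
    have := pow_le_one₀ (n := m - 1) (h2 a) (h1 a)
    linarith
  · unfold gainFn
    have h5 : max 0 (min 1 (2 - 4 * (ballRadius m a / ρ))) = 0 :=
      max_eq_left ((min_le_right _ _).trans (by linarith))
    rw [h5, mul_zero]

lemma integral_gainFn_le {m : ℕ} (hm : 1 ≤ m) {m₀ M : ℝ} (hm₀ : 0 < m₀) (hM : m₀ ≤ M) :
    ∫ a in m₀..M, gainFn m m₀ (ballRadius m M) a ≤ eucIso m m₀ / 4 * ballRadius m M := by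
  have hm0 : (0 : ℝ) < m := by exact_mod_cast hm
  have hb := ballConst_pos m
  have hM0 : 0 < M := hm₀.trans_le hM
  obtain ⟨hc, h0, hle, -, -⟩ := gainFn_spec (m := m) (ρ := ballRadius m M) hm₀
  have hne : (0 : ℝ) ∉ uIcc m₀ M := by
    rw [uIcc_of_le hM]; exact fun h => absurd h.1 (not_le.mpr hm₀)
  have hpt : ∀ a ∈ Icc m₀ M, gainFn m m₀ (ballRadius m M) a ≤
      eucIso m m₀ / 4 * (1 / m * (1 / ballConst m) ^ (1 / (m : ℝ))) * a ^ (1 / (m : ℝ) - 1) := by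
    intro a ha
    have ha0 : 0 < a := hm₀.trans_le ha.1
    refine (hle a).trans (le_of_eq ?_)
    rw [max_eq_left ha.1, div_pow]
    have e1 := eucIso_eq_radius hm hm₀
    have e2 := eucIso_eq_radius hm ha0
    have e3 := eucIso_mul_radius hm ha0.le
    have e4 : ballRadius m a = (1 / ballConst m) ^ (1 / (m : ℝ)) * a ^ (1 / (m : ℝ) - 1) * a := by
      rw [mul_assoc, ← Real.rpow_add_one ha0.ne', sub_add_cancel, ← mul_rpow (by positivity) ha0.le]
      unfold ballRadius
      rw [max_eq_left ha0.le]
      congr 1; ring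
    have hra := ballRadius_pos (m := m) ha0
    rw [e1]
    have e5 : 1 = ballConst m * ballRadius m a ^ (m - 1) *
        ((1 / ballConst m) ^ (1 / (m : ℝ)) * a ^ (1 / (m : ℝ) - 1)) := by
      have : m * a * ((ballConst m * ballRadius m a ^ (m - 1) *
        ((1 / ballConst m) ^ (1 / (m : ℝ)) * a ^ (1 / (m : ℝ) - 1)))) = m * a * 1 := by
        rw [e2] at e3
        linear_combination e3 - m * ballConst m * ballRadius m a ^ (m - 1) * e4
      exact (mul_left_cancel₀ (by positivity) this).symm
    have hra' : ballRadius m a ^ (m - 1) ≠ 0 := by positivity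
    rw [div_div, div_eq_iff (by positivity)]
    field_simp at e5 ⊢
    linear_combination (ballRadius m m₀ ^ (m - 1)) * e5
  have hint : IntervalIntegrable (fun a : ℝ => eucIso m m₀ / 4 *
      (1 / m * (1 / ballConst m) ^ (1 / (m : ℝ))) * a ^ (1 / (m : ℝ) - 1)) volume m₀ M :=
    (intervalIntegral.intervalIntegrable_rpow (Or.inr hne)).const_mul _
  refine (intervalIntegral.integral_mono_on hM (hc.intervalIntegrable _ _) hint hpt).trans ?_
  have hexp : (-1 : ℝ) < 1 / (m : ℝ) - 1 := by
    have : 0 < 1 / (m : ℝ) := by positivity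
    linarith
  rw [intervalIntegral.integral_const_mul, integral_rpow (Or.inl hexp), sub_add_cancel, mul_assoc]
  have hp := eucIso_nonneg m m₀
  refine mul_le_mul_of_nonneg_left ?_ (by positivity)
  have e6 : ballRadius m M = (1 / ballConst m) ^ (1 / (m : ℝ)) * M ^ (1 / (m : ℝ)) := by
    unfold ballRadius
    rw [max_eq_left hM0.le, ← mul_rpow (by positivity) hM0.le]
    congr 1; ring
  rw [e6]
  have : 0 ≤ (1 / ballConst m) ^ (1 / (m : ℝ)) * m₀ ^ (1 / (m : ℝ)) := by positivity
  have e7 : 1 / (m : ℝ) * (1 / ballConst m) ^ (1 / (m : ℝ)) *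
      ((M ^ (1 / (m : ℝ)) - m₀ ^ (1 / (m : ℝ))) / (1 / m)) =
      (1 / ballConst m) ^ (1 / (m : ℝ)) * M ^ (1 / (m : ℝ)) -
        (1 / ballConst m) ^ (1 / (m : ℝ)) * m₀ ^ (1 / (m : ℝ)) := by
    field_simp
  rw [e7]
  linarith

lemma gain_sq_add_sq_le {u w : ℝ} (hu : 0 ≤ u) (hw0 : 0 ≤ w) (hw : w ≤ 1 / 4)
    (h : 1 / 2 ≤ u → w = 0) :
    0 ≤ √(1 - u ^ 2) - w ∧ (√(1 - u ^ 2) - w) ^ 2 + (min 1 u + w) ^ 2 ≤ 1 := by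
  rcases le_or_gt (1 / 2) u with h1 | h1
  · rw [h h1]
    simp only [sub_zero, add_zero]
    exact ⟨Real.sqrt_nonneg _, (cap_sq_add_sq_le u).resolve_right hu.not_gt⟩
  · have h2 : (0.86 : ℝ) ≤ √(1 - u ^ 2) := Real.le_sqrt_of_sq_le (by nlinarith)
    have h3 : √(1 - u ^ 2) ^ 2 = 1 - u ^ 2 := Real.sq_sqrt (by nlinarith)
    rw [min_eq_right (by linarith)]
    refine ⟨by linarith, ?_⟩
    nlinarith

theorem SliceData.eucIso_le_of_small {m : ℕ} (hm : 1 ≤ m) {L c x : ℝ} (hL : 0 < L) (hx : 0 < x)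
    {A : ℝ → ℝ} {P m₀ M C : ℝ}
    (h : SliceData (Ico 0 L) (smallIso m c) A (x ^ (m + 1)) P m₀ M)
    (hC : C = (m + 1) * ballConst (m + 1) ^ (1 / ((m : ℝ) + 1)) + 1)
    (h1 : 2 * x ≤ L) (h2 : C * x ^ m ≤ c) (h3 : C / ballConst (m + 1) * x ^ m ≤ (L / 20) ^ m)
    (h4 : 4 ^ m / ballConst m * (C / m) ^ m * x ≤ L / 2) :
    eucIso (m + 1) (x ^ (m + 1)) ≤ P := by
  by_contra! hlt
  have hm0 : (0 : ℝ) < m := by exact_mod_cast hm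
  have hm1 : (1 : ℝ) ≤ m := by exact_mod_cast hm
  have hb := ballConst_pos m
  have hbN := ballConst_pos (m + 1)
  have hv : 0 < x ^ (m + 1) := by positivity
  have hM := h.max_pos hv
  have hP0 : eucIso (m + 1) (x ^ (m + 1)) = (C - 1) * x ^ m := by
    rw [eucIso_of_pos hv, hC, ← Real.rpow_natCast x (m + 1), ← rpow_mul hx.le]
    push_cast
    rw [add_sub_cancel_right, add_sub_cancel_right, mul_div_cancel₀ _ (by positivity),
      Real.rpow_natCast]
  have hC1 : 1 ≤ C := by rw [hC]; have : 0 ≤ ((m : ℝ) + 1) * ballConst (m + 1) ^ (1 / ((m : ℝ) + 1)) := by positivity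
                         linarith
  have hvolI : volume.real (Ico 0 L) = L := by simp [hL.le]
  have hm0L : m₀ * L ≤ x ^ (m + 1) := by
    rw [← h.integral_eq]
    have : ∫ t in Ico 0 L, m₀ ≤ ∫ t in Ico 0 L, A t := by
      refine setIntegral_mono_ae_restrict (by simp) h.integrable ?_
      filter_upwards [h.mem] with t ht using ht.1
    rw [setIntegral_const, hvolI, smul_eq_mul] at this
    linarith
  have h2m0 : 2 * m₀ ≤ x ^ m := by
    have hxm : 0 < x ^ m := by positivity
    have : 2 * (m₀ * L) ≤ x ^ m * L := by
      calc 2 * (m₀ * L) ≤ 2 * x ^ (m + 1) := by linarith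
        _ = x ^ m * (2 * x) := by ring
        _ ≤ _ := by gcongr
    nlinarith
  have hMc : M ≤ c := by
    have := h.two_mul_le
    rw [hP0] at hlt
    have hxm : 0 < x ^ m := by positivity
    nlinarith
  set ρ := ballRadius m M with hρ
  have hρ0 : 0 < ρ := ballRadius_pos hM
  have hc : Continuous (ballRadius m) := continuous_ballRadius
  have hu0 : ∀ a, 0 ≤ ballRadius m a / ρ := fun a => div_nonneg (ballRadius_nonneg _ _) hρ0.le
  have hAe : ∀ᵐ t ∂volume.restrict (Ico 0 L), min 1 (ballRadius m (A t) / ρ) *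
      smallIso m c (A t) = m / ρ * A t := by
    filter_upwards [h.mem] with t ht
    have h1 : ballRadius m (A t) / ρ ≤ 1 := by
      rw [div_le_one hρ0]; exact ballRadius_mono ht.2
    rw [min_eq_right h1, smallIso_of_le (ht.2.trans hMc)]
    have := eucIso_mul_radius hm (h.nonneg.trans ht.1)
    field_simp
    linear_combination this
  have hcapc : Continuous fun a => √(1 - (ballRadius m a / ρ) ^ 2) := by fun_prop
  have hcap : ballConst (m + 1) * ρ ^ m - 2 * m₀ ≤
      2 * ∫ a in m₀..M, √(1 - (ballRadius m a / ρ) ^ 2) := by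
    rw [← integral_cap hm hM, ← intervalIntegral.integral_add_adjacent_intervals
      (hcapc.intervalIntegrable 0 m₀) (hcapc.intervalIntegrable m₀ M)]
    have : ∫ a in (0 : ℝ)..m₀, √(1 - (ballRadius m a / ρ) ^ 2) ≤ ∫ a in (0 : ℝ)..m₀, (1 : ℝ) := by
      refine intervalIntegral.integral_mono_on h.nonneg (hcapc.intervalIntegrable _ _)
        (by simp) fun a _ => ?_
      have := sq_nonneg (ballRadius m a / ρ)
      exact Real.sqrt_le_iff.2 ⟨zero_le_one, by linarith⟩
    rw [intervalIntegral.integral_const, smul_eq_mul, sub_zero, mul_one] at this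
    linarith
  have key := (h.ineq (fun a => √(1 - (ballRadius m a / ρ) ^ 2))
    (fun a => min 1 (ballRadius m a / ρ)) (by fun_prop) (by fun_prop)
    (fun a => Real.sqrt_nonneg _) (fun a => le_min zero_le_one (hu0 a))
    (fun a => (cap_sq_add_sq_le _).resolve_right (hu0 a).not_gt)).2
  rw [integral_congr_ae hAe, integral_const_mul, h.integral_eq] at key
  have hopt := eucIso_succ_le hm hv hρ0
  have hopt' : m / ρ * x ^ (m + 1) = m * x ^ (m + 1) / ρ := by ring
  rw [hopt'] at key
  rcases h.nonneg.eq_or_lt with hz | hm₀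
  · rw [← hz] at hcap key; linarith
  -- two-sided bounds for `ρ`
  have hsum : m * x ^ (m + 1) / ρ + ballConst (m + 1) * ρ ^ m ≤ C * x ^ m := by
    rw [hP0] at hlt
    linarith
  have hρlow : m / C * x ≤ ρ := by
    have e : m * x ^ (m + 1) / ρ ≤ C * x ^ m := by
      have : 0 ≤ ballConst (m + 1) * ρ ^ m := by positivity
      linarith
    rw [div_le_iff₀ hρ0] at e
    rw [div_mul_eq_mul_div, div_le_iff₀ (by linarith)]
    have hxm : 0 < x ^ m := by positivity
    refine le_of_mul_le_mul_left ?_ hxm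
    calc x ^ m * (m * x) = m * x ^ (m + 1) := by ring
      _ ≤ _ := e
      _ = _ := by ring
  have hρup : 20 * ρ ≤ L := by
    have e : ballConst (m + 1) * ρ ^ m ≤ C * x ^ m := by
      have : 0 ≤ m * x ^ (m + 1) / ρ := by positivity
      linarith
    have : ρ ^ m ≤ (L / 20) ^ m := by
      refine le_trans ?_ h3
      rw [div_mul_eq_mul_div, le_div_iff₀ hbN]; linarith
    have := le_of_pow_le_pow_left₀ (by omega) (by positivity) this
    linarith
  -- the improved test fields
  obtain ⟨wc, w0, -, w4, wz⟩ := gainFn_spec (m := m) (ρ := ρ) hm₀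
  have hsq := fun a => gain_sq_add_sq_le (hu0 a) (w0 a) (w4 a) (wz a)
  obtain ⟨hint, key2⟩ := h.ineq (fun a => √(1 - (ballRadius m a / ρ) ^ 2) - gainFn m m₀ ρ a)
    (fun a => min 1 (ballRadius m a / ρ) + gainFn m m₀ ρ a) (by fun_prop) (by fun_prop)
    (fun a => (hsq a).1) (fun a => add_nonneg (le_min zero_le_one (hu0 a)) (w0 a))
    (fun a => (hsq a).2)
  rw [intervalIntegral.integral_sub (hcapc.intervalIntegrable _ _) (wc.intervalIntegrable _ _)]
    at key2
  have hgain := integral_gainFn_le hm hm₀ h.le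
  rw [← hρ] at hgain
  set c0 := eucIso m m₀ / 4 with hc0
  have hc0pos : 0 < c0 := by
    have := eucIso_eq_radius hm hm₀
    have h5 := ballRadius_pos (m := m) hm₀
    rw [hc0, this]; positivity
  have hm0c : m₀ ≤ 4 * c0 * ρ := by
    have e := eucIso_mul_radius hm hm₀.le
    have h5 : ballRadius m m₀ ≤ ρ := ballRadius_mono h.le
    have : eucIso m m₀ * ballRadius m m₀ ≤ eucIso m m₀ * ρ :=
      mul_le_mul_of_nonneg_left h5 (eucIso_nonneg _ _)
    rw [hc0]; nlinarith
  set G : Set ℝ := {t | ballRadius m (A t) / ρ ≤ 1 / 4} with hG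
  have hGm : MeasurableSet G :=
    measurableSet_le ((hc.measurable.comp h.measurable).div_const _) measurable_const
  have hA0 : ∀ᵐ t ∂volume.restrict (Ico 0 L), 0 ≤ A t := by
    filter_upwards [h.mem] with t ht using h.nonneg.trans ht.1
  have hGvol : L / 2 ≤ volume.real (G ∩ Ico 0 L) := by
    have hmk : ballConst m * (ρ / 4) ^ m * volume.real (Ico 0 L ∩ Gᶜ) ≤ x ^ (m + 1) := by
      have e1 : ∫ t in Ico 0 L ∩ Gᶜ, ballConst m * (ρ / 4) ^ m ≤ ∫ t in Ico 0 L ∩ Gᶜ, A t := by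
        refine setIntegral_mono_on_ae ?_ (h.integrable.mono_set inter_subset_left)
          (measurableSet_Ico.inter hGm.compl) ?_
        · refine integrableOn_const ?_
          exact ((measure_mono inter_subset_left).trans_lt (by simp)).ne
        · have h5 := (ae_restrict_iff' measurableSet_Ico).1 hA0
          filter_upwards [h5] with t ht htG
          have h6 : ρ / 4 ≤ ballRadius m (A t) := by
            have : ¬ (ballRadius m (A t) / ρ ≤ 1 / 4) := htG.2
            rw [div_le_iff₀ hρ0] at this
            linarith
          rw [← ballConst_mul_ballRadius_pow hm (ht htG.1)]
          gcongr
      have e2 : ∫ t in Ico 0 L ∩ Gᶜ, A t ≤ ∫ t in Ico 0 L, A t :=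
        setIntegral_mono_set h.integrable hA0 inter_subset_left.eventuallyLE
      rw [setIntegral_const, smul_eq_mul] at e1
      rw [h.integral_eq] at e2
      linarith
    have hsplit : volume.real (Ico 0 L ∩ G) + volume.real (Ico 0 L ∩ Gᶜ) = L := by
      have := measureReal_inter_add_sdiff (μ := volume) (s := Ico 0 L) hGm (by simp)
      rwa [Set.sdiff_eq, hvolI] at this
    rw [inter_comm G]
    have hbad : volume.real (Ico 0 L ∩ Gᶜ) ≤ L / 2 := by
      refine le_trans ?_ h4
      have h5 : (m / C * x) ^ m ≤ ρ ^ m := by gcongr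
      have hxm : 0 < ballConst m * (m / C * x / 4) ^ m := by positivity
      refine le_of_mul_le_mul_left ?_ hxm
      calc ballConst m * (m / C * x / 4) ^ m * volume.real (Ico 0 L ∩ Gᶜ)
          ≤ ballConst m * (ρ / 4) ^ m * volume.real (Ico 0 L ∩ Gᶜ) := by gcongr
        _ ≤ x ^ (m + 1) := hmk
        _ = _ := by
          rw [div_pow, mul_pow, div_pow, div_pow, pow_succ]
          field_simp
    linarith
  have hlow : m * x ^ (m + 1) / ρ + c0 * volume.real (G ∩ Ico 0 L) ≤
      ∫ t in Ico 0 L, (min 1 (ballRadius m (A t) / ρ) + gainFn m m₀ ρ (A t)) *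
        smallIso m c (A t) := by
    have e1 : ∫ t in Ico 0 L, (m / ρ * A t + G.indicator (fun _ => c0) t) =
        m * x ^ (m + 1) / ρ + c0 * volume.real (G ∩ Ico 0 L) := by
      rw [integral_add (h.integrable.const_mul _) ((integrable_indicator_iff hGm).2 ?_),
        integral_const_mul, h.integral_eq, integral_indicator hGm, setIntegral_const,
        Measure.real, Measure.restrict_apply hGm, smul_eq_mul, hopt']
      · rw [Measure.real]; ring
      · exact integrableOn_const (by
          rw [Measure.restrict_apply hGm]
          exact ((measure_mono inter_subset_right).trans_lt (by simp)).ne)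
    rw [← e1]
    refine integral_mono_ae ?_ hint ?_
    · refine (h.integrable.const_mul _).add ((integrable_indicator_iff hGm).2 ?_)
      exact integrableOn_const (by
          rw [Measure.restrict_apply hGm]
          exact ((measure_mono inter_subset_right).trans_lt (by simp)).ne)
    · filter_upwards [h.mem, hAe] with t ht hte
      rw [add_mul, hte]
      refine add_le_add le_rfl ?_
      by_cases htG : t ∈ G
      · rw [indicator_of_mem htG]
        have htG' : ballRadius m (A t) / ρ ≤ 1 / 4 := htG
        have hAt : 0 < A t := hm₀.trans_le ht.1
        rw [smallIso_of_le (ht.2.trans hMc), gainFn, min_eq_left (by linarith), max_eq_right zero_le_one,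
          max_eq_left ht.1, eucIso_eq_radius hm hAt, hc0, eucIso_eq_radius hm hm₀, div_pow]
        have h5 := ballRadius_pos (m := m) hAt
        refine le_of_eq ?_
        field_simp
      · rw [indicator_of_notMem htG]
        exact mul_nonneg (w0 _) (smallIso_nonneg _ _ _)
  have : c0 * (L / 2) ≤ c0 * volume.real (G ∩ Ico 0 L) := by gcongr
  nlinarith

theorem RelaxedIso.circle_small {V : Type*} [NormedAddCommGroup V] [InnerProductSpace ℝ V]
    [FiniteDimensional ℝ V] [MeasurableSpace V] [BorelSpace V] {D Λ : Set V} {m : ℕ} (hm : 1 ≤ m)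
    {c L : ℝ} (hc : 0 < c) (hL : 0 < L) (hD : MeasurableSet D)
    (h : RelaxedIso D Λ (smallIso m c)) :
    ∃ c' > 0, RelaxedIso (prodDom (Ico 0 L) D) (prodPer {L} Λ) (smallIso (m + 1) c') := by
  have hb := ballConst_pos m
  have hbN := ballConst_pos (m + 1)
  set C := (m + 1) * ballConst (m + 1) ^ (1 / ((m : ℝ) + 1)) + 1 with hC
  have hm0 : m ≠ 0 := by omega
  have lim : ∀ {f : ℝ → ℝ} {b : ℝ}, Continuous f → f 0 = 0 → 0 < b → ∀ᶠ x in 𝓝 0, f x ≤ b := by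
    intro f b hf h0 hb
    have : Tendsto f (𝓝 0) (𝓝 0) := by simpa [h0] using hf.tendsto 0
    exact (this.eventually_lt_const hb).mono fun x hx => hx.le
  have hev : ∀ᶠ x in 𝓝 (0 : ℝ), 2 * x ≤ L ∧ C * x ^ m ≤ c ∧
      C / ballConst (m + 1) * x ^ m ≤ (L / 20) ^ m ∧
      4 ^ m / ballConst m * (C / m) ^ m * x ≤ L / 2 :=
    (lim (by fun_prop) (by simp) hL).and ((lim (by fun_prop) (by simp [hm0]) hc).and
      ((lim (by fun_prop) (by simp [hm0]) (by positivity)).and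
        (lim (by fun_prop) (by simp) (by positivity))))
  have ht : Tendsto (fun v : ℝ => v ^ (1 / ((m : ℝ) + 1))) (𝓝 0) (𝓝 0) := by
    have : ContinuousAt (fun v : ℝ => v ^ (1 / ((m : ℝ) + 1))) 0 :=
      Real.continuousAt_rpow_const _ _ (Or.inr (by positivity))
    have h2 := this.tendsto
    rwa [Real.zero_rpow (by positivity)] at h2
  obtain ⟨δ, hδ, hδ'⟩ := Metric.eventually_nhds_iff.1 (ht.eventually hev)
  refine ⟨δ / 2, by positivity, h.prod measurableSet_Ico (by simpa using hL) hD (by simpa using hL)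
    oscillationBound_Ico (smallIso_nonneg m c) (measurable_smallIso m c) ?_⟩
  intro A v P m₀ M hs
  have hP : 0 ≤ P := by
    have := hs.two_mul_le
    have := hs.le
    linarith
  unfold smallIso
  split_ifs with hvd
  swap
  · exact hP
  rcases le_or_gt v 0 with hv | hv
  · rwa [eucIso_of_nonpos hv]
  obtain ⟨h1, h2, h3, h4⟩ := hδ' (y := v) (by
    rw [Real.dist_eq, sub_zero, abs_of_pos hv]; linarith)
  have hvx : (v ^ (1 / ((m : ℝ) + 1))) ^ (m + 1) = v := by
    rw [← Real.rpow_natCast, ← rpow_mul hv.le]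
    push_cast
    rw [one_div, inv_mul_cancel₀ (by positivity), Real.rpow_one]
  rw [← hvx] at hs ⊢
  exact hs.eucIso_le_of_small hm hL (by positivity) hC h1 h2 h3 h4

/-- the profile `κ a ^ β` truncated to volumes at least `c` -/
def largeIso (β κ c a : ℝ) : ℝ := if c ≤ a then κ * (max a 0) ^ β else 0

lemma largeIso_nonneg {β κ : ℝ} (hκ : 0 ≤ κ) (c a : ℝ) : 0 ≤ largeIso β κ c a := by
  unfold largeIso; split_ifs
  · positivity
  · exact le_rfl

lemma measurable_largeIso (β κ c : ℝ) : Measurable (largeIso β κ c) :=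
  Measurable.ite measurableSet_Ici (by fun_prop) measurable_const

lemma le_one_add_rpow {β z : ℝ} (h0 : 0 ≤ β) (h1 : β ≤ 1) (hz : |z| ≤ 1 / 2) :
    1 + β * z - z ^ 2 / 2 ≤ (1 + z) ^ β := by
  obtain ⟨hz1, hz2⟩ := abs_le.1 hz
  have hpos : 0 < 1 + z := by linarith
  have hb := rpow_one_add_le_one_add_mul_self (s := z) (p := 1 - β) (by linarith) (by linarith)
    (by linarith)
  have hd : 1 / 2 ≤ 1 + (1 - β) * z := by nlinarith
  have e : (1 + z) ^ β * (1 + z) ^ (1 - β) = 1 + z := by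
    rw [← rpow_add hpos]; simp
  have hp : 0 < (1 + z) ^ β := rpow_pos_of_pos hpos _
  have h2 : 1 + z ≤ (1 + z) ^ β * (1 + (1 - β) * z) := by
    rw [← e]
    nth_rewrite 2 [e]
    gcongr
  refine le_of_mul_le_mul_right (le_trans ?_ h2) (by linarith : (0 : ℝ) < 1 + (1 - β) * z)
  have h3 : 0 ≤ z ^ 2 := sq_nonneg z
  have h4 : β * (1 - β) ≤ 1 / 4 := by nlinarith [sq_nonneg (β - 1 / 2)]
  nlinarith [mul_nonneg h3 (by linarith : 0 ≤ 1 / 4 - β * (1 - β)),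
    mul_nonneg h3 (by linarith : 0 ≤ 1 + (1 - β) * z - 1 / 2)]

theorem SliceData.le_of_large {β κ c L v P m₀ M : ℝ} {A : ℝ → ℝ} (hβ0 : 0 ≤ β) (hβ1 : β ≤ 1)
    (hκ : 0 ≤ κ) (hc : 0 < c) (hL : 0 < L) (h : SliceData (Ico 0 L) (largeIso β κ c) A v P m₀ M)
    (h1 : 2 * c ≤ v / L) (h2 : L * (κ * (v / L) ^ β) ≤ v / L) :
    L * (κ * (v / L) ^ β) ≤ P := by
  set a := v / L with ha
  have ha0 : 0 < a := by linarith
  have hva : v = a * L := by rw [ha]; field_simp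
  have hvolI : volume.real (Ico 0 L) = L := by simp [hL.le]
  have hfin : IsFiniteMeasure (volume.restrict (Ico 0 L)) := ⟨by simp⟩
  set p := κ * a ^ β with hp
  have hp0 : 0 ≤ p := by positivity
  have hM : a ≤ M := by
    have : ∫ t in Ico 0 L, A t ≤ ∫ t in Ico 0 L, M := by
      refine integral_mono_ae h.integrable (integrable_const _) ?_
      filter_upwards [h.mem] with t ht using ht.2
    rw [setIntegral_const, hvolI, smul_eq_mul, h.integral_eq, hva] at this
    nlinarith
  have hm : m₀ ≤ a := by
    have : ∫ t in Ico 0 L, m₀ ≤ ∫ t in Ico 0 L, A t := by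
      refine integral_mono_ae (integrable_const _) h.integrable ?_
      filter_upwards [h.mem] with t ht using ht.1
    rw [setIntegral_const, hvolI, smul_eq_mul, h.integral_eq, hva] at this
    nlinarith
  rcases le_or_gt (a / 2) (M - m₀) with hW | hW
  · have := h.two_mul_le
    linarith
  set W := (M - m₀) / a with hWdef
  have hW0 : 0 ≤ W := div_nonneg (by linarith) ha0.le
  have hW1 : W ≤ 1 / 2 := by rw [hWdef, div_le_iff₀ ha0]; linarith
  have hWa : M - m₀ = W * a := by rw [hWdef]; field_simp
  have hWsq : W ^ 2 ≤ 1 / 4 := by nlinarith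
  obtain ⟨hint, key⟩ := h.ineq (fun _ => W) (fun _ => 1 - W ^ 2) continuous_const continuous_const
    (fun _ => hW0) (fun _ => by nlinarith) (fun _ => by nlinarith [mul_nonneg (sq_nonneg W) (sub_nonneg.2 hWsq)])
  rw [intervalIntegral.integral_const, smul_eq_mul, hWa] at key
  have hpt : ∀ᵐ t ∂volume.restrict (Ico 0 L),
      (1 - W ^ 2) * (p * (1 - W ^ 2 / 2) + p * β / a * (A t - a)) ≤
        (1 - W ^ 2) * largeIso β κ c (A t) := by
    filter_upwards [h.mem] with t ht
    refine mul_le_mul_of_nonneg_left ?_ (by nlinarith)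
    have hA : a / 2 ≤ A t := by linarith [ht.1]
    rw [largeIso, if_pos (by linarith), max_eq_left (by linarith)]
    set z := (A t - a) / a with hz
    have hzW : |z| ≤ W := by
      rw [hz, hWdef, abs_div, abs_of_pos ha0]
      gcongr
      rw [abs_le]
      constructor
      · linarith [ht.1]
      · linarith [ht.2]
    have hAz : A t = a * (1 + z) := by rw [hz]; field_simp; ring
    have hb := le_one_add_rpow hβ0 hβ1 (hzW.trans hW1)
    have hz1 := abs_le.1 (hzW.trans hW1)
    rw [hAz, mul_rpow ha0.le (by linarith), ← mul_assoc, ← hp]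
    have hz2 : z ^ 2 ≤ W ^ 2 := sq_le_sq' (abs_le.1 hzW).1 (abs_le.1 hzW).2
    calc p * (1 - W ^ 2 / 2) + p * β / a * (a * (1 + z) - a)
        = p * (1 + β * z - W ^ 2 / 2) := by field_simp; ring
      _ ≤ p * (1 + β * z - z ^ 2 / 2) := by gcongr
      _ ≤ _ := by gcongr
  have hi1 : Integrable (fun t => A t - a) (volume.restrict (Ico 0 L)) :=
    h.integrable.sub (integrable_const _)
  have hlow := integral_mono_ae (((integrable_const _).add (hi1.const_mul _)).const_mul _) hint hpt
  rw [integral_const_mul, integral_add' (integrable_const _) (hi1.const_mul _), setIntegral_const,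
    integral_const_mul, integral_sub h.integrable (integrable_const _), setIntegral_const, hvolI,
    h.integral_eq, smul_eq_mul, smul_eq_mul, hva, mul_comm a L, sub_self, mul_zero, add_zero] at hlow
  have h5 : 0 ≤ L * p := by positivity
  have h6 : 0 ≤ W ^ 2 := sq_nonneg W
  have h7 : L * p * W ^ 2 ≤ a * W ^ 2 := by gcongr
  nlinarith [mul_nonneg h5 (mul_nonneg h6 h6)]

theorem RelaxedIso.circle_large {V : Type*} [NormedAddCommGroup V] [InnerProductSpace ℝ V]
    [FiniteDimensional ℝ V] [MeasurableSpace V] [BorelSpace V] {D Λ : Set V} {β κ c L : ℝ}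
    (hβ0 : 0 ≤ β) (hβ1 : β < 1) (hκ : 0 ≤ κ) (hc : 0 < c) (hL : 0 < L) (hD : MeasurableSet D)
    (h : RelaxedIso D Λ (largeIso β κ c)) :
    ∃ c' > 0, RelaxedIso (prodDom (Ico 0 L) D) (prodPer {L} Λ)
      (largeIso β (κ * L ^ (1 - β)) c') := by
  obtain ⟨x₀, hx₀⟩ := (((_root_.tendsto_rpow_atTop (y := 1 - β) (by linarith)).eventually_ge_atTop
    (L * κ)).and (eventually_ge_atTop (2 * c))).exists_forall_of_atTop
  refine ⟨max (x₀ * L) 1, by positivity, h.prod measurableSet_Ico (by simpa using hL) hD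
    (by simpa using hL) oscillationBound_Ico (largeIso_nonneg hκ c)
    (measurable_largeIso β κ c) ?_⟩
  intro A v P m₀ M hs
  have hP : 0 ≤ P := by
    have := hs.two_mul_le
    have := hs.le
    linarith
  unfold largeIso
  split_ifs with hv
  swap
  · exact hP
  have hv0 : 0 < v := lt_of_lt_of_le (by norm_num) ((le_max_right _ _).trans hv)
  have hx : x₀ ≤ v / L := by rw [le_div_iff₀ hL]; exact (le_max_left _ _).trans hv
  obtain ⟨h1, h2⟩ := hx₀ _ hx
  have hvL : 0 < v / L := by positivity
  have e : (v / L) ^ (1 - β) * (v / L) ^ β = v / L := by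
    rw [← rpow_add hvL]; simp
  have h3 : L * (κ * (v / L) ^ β) ≤ v / L := by
    have := rpow_nonneg hvL.le β
    nlinarith
  refine le_trans (le_of_eq ?_) (hs.le_of_large hβ0 hβ1.le hκ hc hL h2 h3)
  rw [max_eq_left hv0.le, div_rpow hv0.le hL.le, rpow_sub hL, Real.rpow_one]
  ring

lemma relaxedIso_cylinder_small {m : ℕ} (hm : 1 ≤ m) {L : ℝ} (hL : 0 < L) :
    ∃ c > 0, RelaxedIso (prodDom (Ico 0 L) (univ : Set (EucSp m))) (prodPer {L} ∅)
      (smallIso (m + 1) c) :=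
  RelaxedIso.circle_small hm one_pos hL MeasurableSet.univ
    ((relaxedIso_eucSp hm).mono (smallIso_le m 1))

lemma relaxedIso_torus_small {n : ℕ} (hn : 1 ≤ n) {L₁ L₂ : ℝ} (h₁ : 0 < L₁) (h₂ : 0 < L₂) :
    ∃ c > 0, RelaxedIso (prodDom (Ico 0 L₁) (prodDom (Ico 0 L₂) (univ : Set (EucSp n))))
      (prodPer {L₁} (prodPer {L₂} ∅)) (smallIso (n + 2) c) := by
  obtain ⟨c, hc, h⟩ := relaxedIso_cylinder_small hn h₂
  exact RelaxedIso.circle_small (by lia) hc h₁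
    (measurableSet_prodDom measurableSet_Ico MeasurableSet.univ) h

lemma largeIso_le_eucIso (n : ℕ) (v : ℝ) :
    largeIso ((n - 1) / n) (n * ballConst n ^ (1 / n : ℝ)) 1 v ≤ eucIso n v := by
  unfold largeIso
  split_ifs with h
  · rw [eucIso_of_pos (by linarith), max_eq_left (by linarith)]
  · exact eucIso_nonneg n v

lemma relaxedIso_torus_large {n : ℕ} (hn : 1 ≤ n) {L₁ L₂ : ℝ} (h₁ : 0 < L₁) (h₂ : 0 < L₂) :
    ∃ c > 0, RelaxedIso (prodDom (Ico 0 L₁) (prodDom (Ico 0 L₂) (univ : Set (EucSp n))))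
      (prodPer {L₁} (prodPer {L₂} ∅)) (largeIso ((n - 1) / n)
        (n * ballConst n ^ (1 / n : ℝ) * L₂ ^ (1 - ((n - 1) / n : ℝ)) *
          L₁ ^ (1 - ((n - 1) / n : ℝ))) c) := by
  have hn0 : (1 : ℝ) ≤ n := by exact_mod_cast hn
  have hβ0 : (0 : ℝ) ≤ (n - 1) / n := div_nonneg (by linarith) (by linarith)
  have hβ1 : ((n : ℝ) - 1) / n < 1 := by rw [div_lt_one (by linarith)]; linarith
  have hκ : (0 : ℝ) ≤ n * ballConst n ^ (1 / n : ℝ) := by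
    have := (ballConst_pos n).le; positivity
  obtain ⟨c, hc, h⟩ := RelaxedIso.circle_large hβ0 hβ1 hκ one_pos h₂ MeasurableSet.univ
    ((relaxedIso_eucSp hn).mono (largeIso_le_eucIso n))
  exact RelaxedIso.circle_large hβ0 hβ1 (by positivity) hc h₁
    (measurableSet_prodDom measurableSet_Ico MeasurableSet.univ) h

lemma exists_small_partition {V : Type*} [PseudoMetricSpace V] [TopologicalSpace.SeparableSpace V]
    [MeasurableSpace V] [OpensMeasurableSpace V] {ε : ℝ} (hε : 0 < ε) :
    ∃ B : ℕ → Set V, (∀ i, MeasurableSet (B i)) ∧ Pairwise (fun i j => Disjoint (B i) (B j)) ∧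
      ⋃ i, B i = univ ∧ ∀ i, ∀ x ∈ B i, ∀ y ∈ B i, dist x y < ε := by
  rcases isEmpty_or_nonempty V with hV | hV
  · exact ⟨fun _ => ∅, by simp, fun i j _ => by simp, by ext x; exact (hV.false x).elim, by simp⟩
  set u := TopologicalSpace.denseSeq V
  refine ⟨disjointed fun i => Metric.ball (u i) (ε / 2),
    fun i => MeasurableSet.disjointed (fun _ => Metric.isOpen_ball.measurableSet) i,
    disjoint_disjointed _, ?_, ?_⟩
  · rw [iUnion_disjointed, eq_univ_iff_forall]
    intro x
    obtain ⟨i, hi⟩ := (TopologicalSpace.denseRange_denseSeq V).exists_dist_lt x (half_pos hε)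
    exact mem_iUnion.mpr ⟨i, hi⟩
  · intro i x hx y hy
    have hx' := disjointed_subset _ i hx
    have hy' := disjointed_subset _ i hy
    have := dist_triangle_right x y (u i)
    simp only [Metric.mem_ball] at hx' hy'
    linarith

section Lift

variable {V Y : Type*} [MetricSpace V] [CompleteSpace V] [TopologicalSpace.SeparableSpace V]
  [MeasurableSpace V] [BorelSpace V] [EMetricSpace Y] [MeasurableSpace Y] [BorelSpace Y]

/-- Hausdorff measure is preserved by a locally isometric map which is injective on the set. -/
lemma hausdorffMeasure_image_of_local_isometry {p : V → Y} (hp : Continuous p) {δ : ℝ} (hδ : 0 < δ)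
    (hiso : ∀ x y, dist x y < δ → edist (p x) (p y) = edist x y) {d : ℝ} (hd : 0 ≤ d)
    {A : Set V} (hA : MeasurableSet A) (hinj : InjOn p A) : μH[d] (p '' A) = μH[d] A := by
  obtain ⟨B, hBm, hBd, hBu, hB⟩ := exists_small_partition (V := V) hδ
  have hA' : A = ⋃ i, A ∩ B i := by rw [← inter_iUnion, hBu, inter_univ]
  have hpiece : ∀ i, μH[d] (p '' (A ∩ B i)) = μH[d] (A ∩ B i) := by
    intro i
    have h1 : Isometry (fun x : ↥(A ∩ B i) => p x) := fun x y =>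
      hiso x y (hB i _ x.2.2 _ y.2.2)
    have h2 : Isometry (Subtype.val : ↥(A ∩ B i) → V) := isometry_subtype_coe
    have e1 := h1.hausdorffMeasure_image (Or.inl hd) univ
    have e2 := h2.hausdorffMeasure_image (Or.inl hd) univ
    rw [image_univ, ← image_eq_range] at e1
    rw [image_univ, Subtype.range_coe] at e2
    rw [e1, e2]
  have hm : ∀ i, MeasurableSet (A ∩ B i) := fun i => hA.inter (hBm i)
  have hdis : Pairwise (fun i j => Disjoint (A ∩ B i) (A ∩ B j)) := fun i j hij =>
    (hBd hij).mono inter_subset_right inter_subset_right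
  have hpol : PolishSpace V := by
    have := UniformSpace.secondCountable_of_separable V
    infer_instance
  conv_lhs => rw [hA']
  rw [image_iUnion, measure_iUnion]
  · conv_rhs => rw [hA', measure_iUnion hdis hm]
    exact tsum_congr hpiece
  · intro i j hij
    exact (hdis hij).image hinj inter_subset_left inter_subset_left
  · exact fun i => (hm i).image_of_continuousOn_injOn hp.continuousOn
      (hinj.mono inter_subset_left)

end Lift

section Sweep

variable {V : Type*} [NormedAddCommGroup V] [InnerProductSpace ℝ V] [FiniteDimensional ℝ V]
  [MeasurableSpace V] [BorelSpace V]

/-- The points from which `A` is reached by a translation by `s • e` with `0 ≤ s ≤ h`. -/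
def sweep (A : Set V) (e : V) (h : ℝ) : Set V := {x | ∃ s ∈ Icc 0 h, x + s • e ∈ A}

lemma sweep_iUnion {ι : Type*} (A : ι → Set V) (e : V) (h : ℝ) :
    sweep (⋃ i, A i) e h = ⋃ i, sweep (A i) e h := by
  ext x; simp only [sweep, mem_ofPred_eq, mem_iUnion]; tauto

lemma volume_slab_le {m : ℕ} (hV : Module.finrank ℝ V = m + 1) {e : V} (he : ‖e‖ = 1)
    (a b : ℝ) (A : Set V) :
    volume {x | inner ℝ e x ∈ Icc a b ∧
      (ℝ ∙ e)ᗮ.orthogonalProjectionOnto x ∈ (ℝ ∙ e)ᗮ.orthogonalProjectionOnto '' A} ≤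
      ENNReal.ofReal (b - a) * μHE[m] A := by
  set K := ℝ ∙ e
  have he0 : e ≠ 0 := by rintro rfl; simp at he
  have hfr : Module.finrank ℝ Kᗮ = m := by
    have : Fact (Module.finrank ℝ V = m + 1) := ⟨hV⟩
    exact Submodule.finrank_orthogonal_span_singleton he0
  have hmp := K.measurePreserving_measurableEquivProd (0 : V)
  rw [InnerProductSpace.euclideanHausdorffMeasure_eq_volume] at hmp
  set T := Kᗮ.orthogonalProjectionOnto '' A
  let φ := LinearIsometryEquiv.toSpanUnitSingleton (𝕜 := ℝ) e he
  have hset : {x | inner ℝ e x ∈ Icc a b ∧ Kᗮ.orthogonalProjectionOnto x ∈ T} ⊆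
      K.measurableEquivProd (0 : V) ⁻¹' ((φ.symm ⁻¹' Icc a b) ×ˢ toMeasurable volume T) := by
    rintro x ⟨h1, h2⟩
    simp only [mem_preimage, Submodule.measurableEquivProd_apply, vsub_eq_sub, sub_zero]
    refine ⟨?_, subset_toMeasurable _ _ h2⟩
    have : K.orthogonalProjectionOnto x = φ (inner ℝ e x) := by
      apply Subtype.ext
      rw [LinearIsometryEquiv.toSpanUnitSingleton_apply]
      exact Submodule.starProjection_unit_singleton ℝ he x
    change φ.symm (K.orthogonalProjectionOnto x) ∈ Icc a b
    rw [this, φ.symm_apply_apply]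
    exact h1
  have hm1 : MeasurableSet (φ.symm ⁻¹' Icc a b) :=
    φ.symm.continuous.measurable measurableSet_Icc
  refine (measure_mono hset).trans ?_
  rw [hmp.measure_preimage (hm1.prod (measurableSet_toMeasurable _ _)).nullMeasurableSet,
    Measure.volume_eq_prod, Measure.prod_prod, measure_toMeasurable,
    φ.symm.measurePreserving.measure_preimage measurableSet_Icc.nullMeasurableSet,
    Real.volume_Icc]
  gcongr
  rw [← InnerProductSpace.euclideanHausdorffMeasure_eq_volume, hfr,
    Measure.euclideanHausdorffMeasure_def, Measure.euclideanHausdorffMeasure_def,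
    Measure.smul_apply, Measure.smul_apply]
  gcongr
  exact hausdorffMeasure_orthogonalProjectionOnto_le _ _ _ (Nat.cast_nonneg m)

lemma volume_sweep_small_le {m : ℕ} (hV : Module.finrank ℝ V = m + 1) {e : V} (he : ‖e‖ = 1)
    {h ε : ℝ} (A : Set V) (hA : ∀ x ∈ A, ∀ y ∈ A, dist x y < ε) :
    volume (sweep A e h) ≤ ENNReal.ofReal (h + 2 * ε) * μHE[m] A := by
  rcases A.eq_empty_or_nonempty with rfl | ⟨y, hy⟩
  · simp [sweep]
  have hsub : sweep A e h ⊆ {x | inner ℝ e x ∈ Icc (inner ℝ e y - h - ε) (inner ℝ e y + ε) ∧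
      (ℝ ∙ e)ᗮ.orthogonalProjectionOnto x ∈ (ℝ ∙ e)ᗮ.orthogonalProjectionOnto '' A} := by
    rintro x ⟨s, hs, hx⟩
    refine ⟨?_, x + s • e, hx, ?_⟩
    · have h1 : |inner ℝ e (x + s • e - y)| ≤ ε := by
        refine (abs_real_inner_le_norm _ _).trans ?_
        rw [he, one_mul, ← dist_eq_norm]
        exact (hA _ hx _ hy).le
      rw [inner_sub_right, inner_add_right, inner_smul_right, real_inner_self_eq_norm_sq, he,
        abs_le] at h1
      constructor <;> linarith [hs.1, hs.2, h1.1, h1.2]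
    · rw [map_add, map_smul]
      have : (ℝ ∙ e)ᗮ.orthogonalProjectionOnto e = 0 :=
        Submodule.orthogonalProjectionOnto_orthogonal_apply_eq_zero
          (Submodule.mem_span_singleton_self e)
      rw [this, smul_zero, add_zero]
  refine (measure_mono hsub).trans ((volume_slab_le hV he _ _ A).trans (le_of_eq ?_))
  congr 2; ring

lemma volume_sweep_le {m : ℕ} (hV : Module.finrank ℝ V = m + 1) {e : V} (he : ‖e‖ = 1)
    {h : ℝ} (hh : 0 < h) {A : Set V} (hA : MeasurableSet A) :
    volume (sweep A e h) ≤ ENNReal.ofReal h * μHE[m] A := by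
  by_cases hfin : μHE[m] A = ∞
  · rw [hfin, ENNReal.mul_top (by simpa using hh)]; exact le_top
  have key : ∀ ε > 0, volume (sweep A e h) ≤ ENNReal.ofReal (h + 2 * ε) * μHE[m] A := by
    intro ε hε
    obtain ⟨B, hBm, hBd, hBu, hB⟩ := exists_small_partition (V := V) hε
    have hA' : A = ⋃ i, A ∩ B i := by rw [← inter_iUnion, hBu, inter_univ]
    have hm : ∀ i, MeasurableSet (A ∩ B i) := fun i => hA.inter (hBm i)
    have hdis : Pairwise (fun i j => Disjoint (A ∩ B i) (A ∩ B j)) := fun i j hij =>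
      (hBd hij).mono inter_subset_right inter_subset_right
    have hs : sweep A e h = ⋃ i, sweep (A ∩ B i) e h := by rw [← sweep_iUnion, ← hA']
    rw [hs]
    refine (measure_iUnion_le _).trans ?_
    have hAs : μHE[m] A = ∑' i, μHE[m] (A ∩ B i) := by
      conv_lhs => rw [hA', measure_iUnion hdis hm]
    rw [hAs, ← ENNReal.tsum_mul_left]
    exact ENNReal.tsum_le_tsum fun i => volume_sweep_small_le hV he _
      fun x hx y hy => hB i x hx.2 y hy.2
  have ht : Tendsto (fun ε : ℝ => ENNReal.ofReal (h + 2 * ε) * μHE[m] A) (𝓝[>] 0)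
      (𝓝 (ENNReal.ofReal (h + 2 * 0) * μHE[m] A)) := by
    refine Tendsto.mono_left ?_ nhdsWithin_le_nhds
    refine ENNReal.Tendsto.mul_const ?_ (Or.inr hfin)
    exact (ENNReal.continuous_ofReal.comp (by fun_prop)).tendsto 0
  rw [mul_zero, add_zero] at ht
  exact ge_of_tendsto ht (eventually_mem_nhdsWithin.mono fun ε hε => key ε hε)

end Sweep

lemma IsPreconnected.exists_mem_frontier {X : Type*} [TopologicalSpace X] {s A : Set X}
    (hs : IsPreconnected s) {x y : X} (hx : x ∈ s) (hy : y ∈ s) (hxA : x ∈ A) (hyA : y ∉ A) :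
    ∃ z ∈ s, z ∈ frontier A := by
  by_contra! h
  have hcov : s ⊆ interior A ∪ interior Aᶜ := by
    intro z hz
    by_contra hz'
    rw [mem_union, interior_compl, mem_compl_iff] at hz'
    push Not at hz'
    exact h z hz ⟨hz'.2, hz'.1⟩
  obtain ⟨z, -, h1, h2⟩ := hs _ _ isOpen_interior isOpen_interior hcov
    ⟨x, hx, (hcov hx).resolve_right fun h' => interior_subset h' hxA⟩
    ⟨y, hy, (hcov hy).resolve_left fun h' => hyA (interior_subset h')⟩
  exact interior_subset h2 (interior_subset h1)

section Sweep

variable {V : Type*} [NormedAddCommGroup V] [InnerProductSpace ℝ V] [FiniteDimensional ℝ V]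
  [MeasurableSpace V] [BorelSpace V]

lemma setLIntegral_sweep_small_le {m : ℕ} (hV : Module.finrank ℝ V = m + 1) {e : V} (he : ‖e‖ = 1)
    {h : ℝ} (hh : 0 < h) (hh1 : h ≤ 1) {A : Set V} (hA : MeasurableSet A)
    (hAd : ∀ x ∈ A, ∀ y ∈ A, dist x y < h) {ψ : V → ℝ} {C : ℝ≥0} (hψ : LipschitzWith C ψ)
    {z : V} {r : ℝ} (hsupp : ∀ y, r ≤ dist y z → ψ y = 0) :
    ∫⁻ y in sweep A e h, ENNReal.ofReal (ψ y) ≤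
      ENNReal.ofReal h * ∫⁻ a in A ∩ Metric.closedBall z (r + 2),
        ENNReal.ofReal (ψ a + 2 * C * h) ∂μHE[m] := by
  by_cases hmeet : ∃ y ∈ sweep A e h, dist y z < r
  swap
  · push Not at hmeet
    have : ∫⁻ y in sweep A e h, ENNReal.ofReal (ψ y) ≤ ∫⁻ y in sweep A e h, 0 :=
      setLIntegral_mono measurable_const fun y hy => by rw [hsupp y (hmeet y hy)]; simp
    refine this.trans (by simp)
  obtain ⟨y₀, ⟨s₀, hs₀, ha₀⟩, hy₀⟩ := hmeet
  have hdist : ∀ y s, s ∈ Icc 0 h → ∀ a ∈ A, y + s • e ∈ A → dist y a ≤ 2 * h := by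
    intro y s hs a ha hy
    have h1 := hAd _ hy a ha
    have h2 : dist y (y + s • e) = s := by
      rw [dist_self_add_right, norm_smul, he, mul_one, Real.norm_of_nonneg hs.1]
    have h3 := dist_triangle y (y + s • e) a
    linarith [hs.2]
  have hsub : A ⊆ Metric.closedBall z (r + 2) := by
    intro a ha
    have h1 := hdist _ _ hs₀ a ha ha₀
    have h2 := dist_triangle_left a z y₀
    rw [Metric.mem_closedBall]; linarith
  rw [inter_eq_left.mpr hsub]
  set c : ℝ≥0∞ := ⨅ a ∈ A, ENNReal.ofReal (ψ a + 2 * C * h)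
  have h1 : ∫⁻ y in sweep A e h, ENNReal.ofReal (ψ y) ≤ c * volume (sweep A e h) := by
    rw [← setLIntegral_const]
    refine setLIntegral_mono measurable_const ?_
    rintro y ⟨s, hs, hy⟩
    refine le_iInf₂ fun a ha => ENNReal.ofReal_le_ofReal ?_
    have h2 := hdist y s hs a ha hy
    have h3 := hψ.dist_le_mul y a
    rw [Real.dist_eq] at h3
    have h4 := le_abs_self (ψ y - ψ a)
    have h5 : (C : ℝ) * dist y a ≤ C * (2 * h) := by gcongr
    linarith
  have h2 : c * μHE[m] A ≤ ∫⁻ a in A, ENNReal.ofReal (ψ a + 2 * C * h) ∂μHE[m] := by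
    rw [← setLIntegral_const]
    exact setLIntegral_mono' hA fun a ha => iInf₂_le a ha
  calc _ ≤ c * volume (sweep A e h) := h1
    _ ≤ c * (ENNReal.ofReal h * μHE[m] A) := by gcongr; exact volume_sweep_le hV he hh hA
    _ = ENNReal.ofReal h * (c * μHE[m] A) := by ring
    _ ≤ _ := by gcongr

lemma setLIntegral_sweep_le {m : ℕ} (hV : Module.finrank ℝ V = m + 1) {e : V} (he : ‖e‖ = 1)
    {h : ℝ} (hh : 0 < h) (hh1 : h ≤ 1) {A : Set V} (hA : MeasurableSet A)
    {ψ : V → ℝ} {C : ℝ≥0} (hψ : LipschitzWith C ψ) (hψ0 : ∀ y, 0 ≤ ψ y)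
    {z : V} {r : ℝ} (hsupp : ∀ y, r ≤ dist y z → ψ y = 0) :
    ∫⁻ y in sweep A e h, ENNReal.ofReal (ψ y) ≤
      ENNReal.ofReal h * (∫⁻ a in A, ENNReal.ofReal (ψ a) ∂μHE[m] +
        ENNReal.ofReal (2 * C * h) * μHE[m] (A ∩ Metric.closedBall z (r + 2))) := by
  obtain ⟨B, hBm, hBd, hBu, hB⟩ := exists_small_partition (V := V) hh
  have hA' : A = ⋃ i, A ∩ B i := by rw [← inter_iUnion, hBu, inter_univ]
  have hm : ∀ i, MeasurableSet (A ∩ B i) := fun i => hA.inter (hBm i)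
  have hs : sweep A e h = ⋃ i, sweep (A ∩ B i) e h := by rw [← sweep_iUnion, ← hA']
  have key : ∫⁻ y in sweep A e h, ENNReal.ofReal (ψ y) ≤
      ENNReal.ofReal h * ∫⁻ a in A ∩ Metric.closedBall z (r + 2),
        ENNReal.ofReal (ψ a + 2 * C * h) ∂μHE[m] := by
    have hu : A ∩ Metric.closedBall z (r + 2) = ⋃ i, (A ∩ B i) ∩ Metric.closedBall z (r + 2) := by
      rw [← iUnion_inter, ← hA']
    have hm' : ∀ i, MeasurableSet ((A ∩ B i) ∩ Metric.closedBall z (r + 2)) :=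
      fun i => (hm i).inter Metric.isClosed_closedBall.measurableSet
    have hd' : Pairwise (fun i j => Disjoint ((A ∩ B i) ∩ Metric.closedBall z (r + 2))
        ((A ∩ B j) ∩ Metric.closedBall z (r + 2))) :=
      fun i j hij => (hBd hij).mono (inter_subset_left.trans inter_subset_right)
        (inter_subset_left.trans inter_subset_right)
    rw [hs, hu, lintegral_iUnion hm' hd', ← ENNReal.tsum_mul_left]
    refine (lintegral_iUnion_le _ _).trans (ENNReal.tsum_le_tsum fun i => ?_)
    exact setLIntegral_sweep_small_le hV he hh hh1 (hm i)
      (fun x hx y hy => hB i x hx.2 y hy.2) hψ hsupp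
  refine key.trans ?_
  gcongr
  have e1 : ∀ a, ENNReal.ofReal (ψ a + 2 * C * h) =
      ENNReal.ofReal (ψ a) + ENNReal.ofReal (2 * C * h) := fun a =>
    ENNReal.ofReal_add (hψ0 a) (by positivity)
  simp only [e1]
  rw [lintegral_add_right _ measurable_const, setLIntegral_const]
  gcongr
  exact inter_subset_left

lemma abs_indicator_sub_le {A K : Set V} (hAK : frontier A ⊆ K) (e : V) {h : ℝ} (hh : 0 ≤ h)
    (y : V) : |A.indicator (1 : V → ℝ) (y + h • e) - A.indicator 1 y| ≤
      (sweep K e h).indicator 1 y := by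
  by_cases hiff : y + h • e ∈ A ↔ y ∈ A
  · have : A.indicator (1 : V → ℝ) (y + h • e) = A.indicator 1 y := by
      by_cases hy : y ∈ A
      · rw [indicator_of_mem hy, indicator_of_mem (hiff.mpr hy)]; rfl
      · rw [indicator_of_notMem hy, indicator_of_notMem (mt hiff.mp hy)]
    rw [this, sub_self, abs_zero]
    exact indicator_nonneg (fun _ _ => zero_le_one) _
  have hpc : IsPreconnected ((fun s : ℝ => y + s • e) '' Icc 0 h) :=
    isPreconnected_Icc.image _ (by fun_prop)
  have m0 : y ∈ (fun s : ℝ => y + s • e) '' Icc 0 h := ⟨0, ⟨le_rfl, hh⟩, by simp⟩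
  have mh : y + h • e ∈ (fun s : ℝ => y + s • e) '' Icc 0 h := ⟨h, ⟨hh, le_rfl⟩, rfl⟩
  have hmem : y ∈ sweep K e h := by
    have : ∃ z ∈ (fun s : ℝ => y + s • e) '' Icc 0 h, z ∈ frontier A := by
      by_cases hy : y ∈ A
      · exact hpc.exists_mem_frontier m0 mh hy (by tauto)
      · exact hpc.exists_mem_frontier mh m0 (by tauto) hy
    obtain ⟨_, ⟨s, hs, rfl⟩, hf⟩ := this
    exact ⟨s, hs, hAK hf⟩
  rw [indicator_of_mem hmem]
  by_cases h1 : y ∈ A <;> by_cases h2 : y + h • e ∈ A <;> simp [h1, h2]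

end Sweep

section Smooth

variable {V : Type*} [NormedAddCommGroup V] [InnerProductSpace ℝ V] [FiniteDimensional ℝ V]
  [MeasurableSpace V] [BorelSpace V]

/-- The mollification of the indicator of a set. -/
def mollify (φ : ContDiffBump (0 : V)) (A : Set V) : V → ℝ :=
  convolution (φ.normed volume) (A.indicator (1 : V → ℝ)) (ContinuousLinearMap.lsmul ℝ ℝ) volume

variable (φ : ContDiffBump (0 : V)) {A : Set V}

lemma mollify_apply (A : Set V) (x : V) :
    mollify φ A x = ∫ t, φ.normed volume t * A.indicator 1 (x - t) := rfl

lemma norm_indicator_one_le (A : Set V) (x : V) : ‖A.indicator (1 : V → ℝ) x‖ ≤ 1 := by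
  by_cases h : x ∈ A <;> simp [h]

lemma integrable_mollify (hA : MeasurableSet A) (x : V) :
    Integrable (fun t => φ.normed volume t * A.indicator (1 : V → ℝ) (x - t)) := by
  refine φ.integrable_normed.mul_bdd (c := 1) ?_ ?_
  · have : Measurable (A.indicator (1 : V → ℝ)) := measurable_one.indicator hA
    exact (this.comp (by fun_prop : Measurable fun t => x - t)).aestronglyMeasurable
  · exact ae_of_all _ fun t => norm_indicator_one_le A _

lemma mollify_nonneg (A : Set V) (x : V) : 0 ≤ mollify φ A x :=
  integral_nonneg fun t => mul_nonneg (φ.nonneg_normed t) (indicator_nonneg (by simp) _)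

lemma contDiff_mollify (hA : MeasurableSet A) : ContDiff ℝ 1 (mollify φ A) := by
  refine φ.hasCompactSupport_normed.contDiff_convolution_left _ (φ.contDiff_normed) ?_
  exact (locallyIntegrable_const (1 : ℝ)).indicator hA

lemma mollify_eq_of_notMem_frontier {x : V} (hx : x ∉ frontier A) :
    ∃ r > 0, ∀ φ : ContDiffBump (0 : V), φ.rOut ≤ r → mollify φ A x = A.indicator 1 x := by
  have : ∃ r > 0, ∀ y ∈ Metric.ball x r, A.indicator (1 : V → ℝ) y = A.indicator 1 x := by
    by_cases hxA : x ∈ A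
    · have : x ∈ interior A := by
        by_contra h; exact hx ⟨subset_closure hxA, h⟩
      obtain ⟨r, hr, hb⟩ := Metric.isOpen_iff.mp isOpen_interior x this
      refine ⟨r, hr, fun y hy => ?_⟩
      rw [indicator_of_mem hxA, indicator_of_mem (interior_subset (hb hy))]; rfl
    · have : x ∈ interior Aᶜ := by
        rw [interior_compl]; intro h; exact hx ⟨h, fun h' => hxA (interior_subset h')⟩
      obtain ⟨r, hr, hb⟩ := Metric.isOpen_iff.mp isOpen_interior x this
      refine ⟨r, hr, fun y hy => ?_⟩
      rw [indicator_of_notMem hxA, indicator_of_notMem (interior_subset (hb hy))]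
  obtain ⟨r, hr, hb⟩ := this
  refine ⟨r, hr, fun φ hφ => ?_⟩
  exact φ.normed_convolution_eq_right fun y hy => hb y (Metric.ball_subset_ball hφ hy)

lemma enorm_mollify_sub_le (hA : MeasurableSet A) {K : Set V} (hAK : frontier A ⊆ K) (x e : V)
    {h : ℝ} (hh : 0 ≤ h) : ‖mollify φ A (x + h • e) - mollify φ A x‖ₑ ≤
      ∫⁻ y in sweep K e h, ENNReal.ofReal (φ.normed volume (x - y)) := by
  rw [mollify_apply, mollify_apply, ← integral_sub (integrable_mollify φ hA _)
    (integrable_mollify φ hA _)]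
  refine (enorm_integral_le_lintegral_enorm _).trans ?_
  calc _ ≤ ∫⁻ t, (sweep K e h).indicator
        (fun y => ENNReal.ofReal (φ.normed volume (x - y))) (x - t) := by
        refine lintegral_mono fun t => ?_
        rw [← mul_sub, enorm_mul, Real.enorm_of_nonneg (φ.nonneg_normed t)]
        have h1 := abs_indicator_sub_le hAK e hh (x - t)
        rw [show x - t + h • e = x + h • e - t by abel] at h1
        by_cases hs : x - t ∈ sweep K e h
        · rw [indicator_of_mem hs] at h1 ⊢
          rw [show x - (x - t) = t by abel]
          refine mul_le_of_le_one_right' ?_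
          rw [← ofReal_norm]
          exact ENNReal.ofReal_le_one.mpr h1
        · rw [indicator_of_notMem hs] at h1 ⊢
          rw [abs_nonpos_iff.mp h1]; simp
    _ = ∫⁻ y, (sweep K e h).indicator (fun y => ENNReal.ofReal (φ.normed volume (x - y))) y :=
        lintegral_sub_left_eq_self _ x
    _ ≤ _ := lintegral_indicator_le _ _

lemma enorm_fderiv_mollify_le {m : ℕ} (hV : Module.finrank ℝ V = m + 1) (hA : MeasurableSet A)
    {K : Set V} (hK : MeasurableSet K) (hAK : frontier A ⊆ K)
    (hfin : ∀ r, ∀ z, μHE[m] (K ∩ Metric.closedBall z r) ≠ ∞) (x : V) :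
    ‖fderiv ℝ (mollify φ A) x‖ₑ ≤
      ∫⁻ y in K, ENNReal.ofReal (φ.normed volume (x - y)) ∂μHE[m] := by
  set M := ∫⁻ y in K, ENNReal.ofReal (φ.normed volume (x - y)) ∂μHE[m]
  by_cases hM : M = ∞
  · rw [hM]; exact le_top
  obtain ⟨C, hC⟩ := (φ.contDiff_normed (n := 1) (μ := volume)).lipschitzWith_of_hasCompactSupport
    φ.hasCompactSupport_normed one_ne_zero
  have hψ : LipschitzWith C (fun y => φ.normed volume (x - y)) := by
    intro y z
    refine (hC _ _).trans (le_of_eq ?_)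
    rw [edist_sub_left]
  have hsupp : ∀ y, φ.rOut ≤ dist y x → φ.normed volume (x - y) = 0 := by
    intro y hy
    rw [← Function.notMem_support, φ.support_normed_eq, Metric.mem_ball, dist_zero_right,
      ← dist_eq_norm, dist_comm, not_lt]
    exact hy
  have hdir : ∀ e : V, ‖e‖ = 1 → ‖fderiv ℝ (mollify φ A) x e‖ₑ ≤ M := by
    intro e he
    have hd : HasFDerivAt (mollify φ A) (fderiv ℝ (mollify φ A) x) x :=
      ((contDiff_mollify φ hA).differentiable one_ne_zero x).hasFDerivAt
    have ht := (hd.hasLineDerivAt e).tendsto_slope_zero_right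
    have ht' := (continuous_enorm.tendsto _).comp ht
    set F := μHE[m] (K ∩ Metric.closedBall x (φ.rOut + 2))
    have hlim : Tendsto (fun h : ℝ => M + ENNReal.ofReal (2 * C * h) * F) (𝓝[>] 0) (𝓝 M) := by
      have : Tendsto (fun h : ℝ => M + ENNReal.ofReal (2 * C * h) * F) (𝓝[>] 0)
          (𝓝 (M + ENNReal.ofReal (2 * C * 0) * F)) := by
        refine Tendsto.mono_left ?_ nhdsWithin_le_nhds
        refine tendsto_const_nhds.add (ENNReal.Tendsto.mul_const ?_ (Or.inr (hfin _ _)))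
        exact (ENNReal.continuous_ofReal.comp (by fun_prop)).tendsto 0
      simpa using this
    refine le_of_tendsto_of_tendsto ht' hlim ?_
    filter_upwards [Ioc_mem_nhdsGT (zero_lt_one (α := ℝ))] with h hh
    have h1 := (enorm_mollify_sub_le φ hA hAK x e hh.1.le).trans
      (setLIntegral_sweep_le hV he hh.1 hh.2 hK hψ (fun y => φ.nonneg_normed _) hsupp)
    simp only [Function.comp]
    rw [enorm_smul, enorm_inv hh.1.ne', Real.enorm_of_nonneg hh.1.le, mul_comm,
      ← div_eq_mul_inv]
    exact ENNReal.div_le_of_le_mul' h1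
  rw [← ofReal_norm]
  refine ENNReal.ofReal_le_of_le_toReal ?_
  refine ContinuousLinearMap.opNorm_le_of_unit_norm ENNReal.toReal_nonneg fun e he => ?_
  have := ENNReal.toReal_mono hM (hdir e he)
  rwa [toReal_enorm] at this

/-- Integral of a translated kernel over a fundamental domain. -/
lemma lintegral_lintegral_translate {μ : Measure V} [SFinite μ] {D : Set V} (hD : MeasurableSet D)
    {η : V → ℝ≥0∞} (hη : Measurable η) :
    ∫⁻ x in D, ∫⁻ y, η (x - y) ∂μ = ∫⁻ z, η z * μ {y | z + y ∈ D} := by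
  have hm : Measurable (fun p : V × V => D.indicator (1 : V → ℝ≥0∞) p.1 * η (p.1 - p.2)) :=
    ((measurable_one.indicator hD).comp measurable_fst).mul
      (hη.comp (measurable_fst.sub measurable_snd))
  have hm2 : Measurable (fun p : V × V => D.indicator (1 : V → ℝ≥0∞) (p.2 + p.1) * η p.2) :=
    ((measurable_one.indicator hD).comp (measurable_snd.add measurable_fst)).mul
      (hη.comp measurable_snd)
  rw [← lintegral_indicator hD]
  calc _ = ∫⁻ x, ∫⁻ y, D.indicator (1 : V → ℝ≥0∞) x * η (x - y) ∂μ := by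
        refine lintegral_congr fun x => ?_
        by_cases h : x ∈ D <;> simp [h]
    _ = ∫⁻ y, ∫⁻ x, D.indicator (1 : V → ℝ≥0∞) x * η (x - y) ∂volume ∂μ :=
        lintegral_lintegral_swap hm.aemeasurable
    _ = ∫⁻ y, ∫⁻ z, D.indicator (1 : V → ℝ≥0∞) (z + y) * η z ∂volume ∂μ := by
        refine lintegral_congr fun y => ?_
        rw [← lintegral_add_right_eq_self
          (fun x => D.indicator (1 : V → ℝ≥0∞) x * η (x - y)) y]
        simp
    _ = ∫⁻ z, ∫⁻ y, D.indicator (1 : V → ℝ≥0∞) (z + y) * η z ∂μ :=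
        lintegral_lintegral_swap hm2.aemeasurable
    _ = _ := by
        refine lintegral_congr fun z => ?_
        have hmz : Measurable fun y => D.indicator (1 : V → ℝ≥0∞) (z + y) :=
          (measurable_one.indicator hD).comp (measurable_const_add z)
        rw [lintegral_mul_const _ hmz, mul_comm]
        congr 1
        have : (fun y => D.indicator (1 : V → ℝ≥0∞) (z + y)) =
            ({y | z + y ∈ D}).indicator 1 := by
          ext y; by_cases h : z + y ∈ D <;> simp [h]
        have hms : MeasurableSet {y | z + y ∈ D} := measurable_const_add z hD
        rw [this, lintegral_indicator_one hms]

end Smooth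

/-- A flat covering map with fundamental domain `D`, periods `Λ`, and periodic cutoffs. -/
structure IsFlatCover {V Y : Type*} [NormedAddCommGroup V] [NormedSpace ℝ V] [MeasurableSpace V]
    [EMetricSpace Y] (p : V → Y) (D Λ : Set V) : Prop where
  lipschitz : LipschitzWith 1 p
  isOpenMap : IsOpenMap p
  exists_isometric : ∃ δ : ℝ, 0 < δ ∧ ∀ x y, dist x y < δ → edist (p x) (p y) = edist x y
  measurableSet : MeasurableSet D
  bijOn : ∀ z, BijOn p {y | z + y ∈ D} univ
  periodic : ∀ l ∈ Λ, ∀ x, p (x + l) = p x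
  exists_cutoff : ∃ ζ : ℕ → V → ℝ, ∃ ε : ℕ → ℝ, (∀ k, IsAdmissible D Λ (ζ k)) ∧
    (∀ k x, 0 ≤ ζ k x) ∧ (∀ k x, ζ k x ≤ 1) ∧ (∀ k x, ‖fderiv ℝ (ζ k) x‖ ≤ ε k) ∧
    Tendsto ε atTop (𝓝 0) ∧ ∀ x, Tendsto (fun k => ζ k x) atTop (𝓝 1)

section Aux

variable {V : Type*} [NormedAddCommGroup V] [InnerProductSpace ℝ V] [FiniteDimensional ℝ V]
  [MeasurableSpace V] [BorelSpace V]

lemma measurableSet_translate {D : Set V} (hD : MeasurableSet D) (z : V) :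
    MeasurableSet {y | z + y ∈ D} := measurable_const_add z hD

lemma measurable_ofReal_normed (φ : ContDiffBump (0 : V)) :
    Measurable fun z => ENNReal.ofReal (φ.normed volume z) :=
  ENNReal.measurable_ofReal.comp (φ.contDiff_normed (n := 0)).continuous.measurable

lemma lintegral_ofReal_normed (φ : ContDiffBump (0 : V)) :
    ∫⁻ z, ENNReal.ofReal (φ.normed volume z) = 1 := by
  rw [← ofReal_integral_eq_lintegral_ofReal φ.integrable_normed
    (ae_of_all _ fun z => φ.nonneg_normed z), φ.integral_normed, ENNReal.ofReal_one]

end Aux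

namespace IsFlatCover

variable {V Y : Type*} [NormedAddCommGroup V] [InnerProductSpace ℝ V] [FiniteDimensional ℝ V]
  [MeasurableSpace V] [BorelSpace V] [EMetricSpace Y] [MeasurableSpace Y] [BorelSpace Y]
  {p : V → Y} {D Λ : Set V}

lemma hausdorffMeasure_preimage_inter (hp : IsFlatCover p D Λ) (d : ℕ) {S : Set Y}
    (hS : MeasurableSet S) (z : V) : μHE[d] (p ⁻¹' S ∩ {y | z + y ∈ D}) = μHE[d] S := by
  obtain ⟨δ, hδ, hiso⟩ := hp.exists_isometric
  have hc := hp.lipschitz.continuous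
  have hD : MeasurableSet {y | z + y ∈ D} := measurableSet_translate hp.measurableSet z
  rw [Measure.euclideanHausdorffMeasure_def, Measure.euclideanHausdorffMeasure_def,
    Measure.smul_apply, Measure.smul_apply,
    ← hausdorffMeasure_image_of_local_isometry hc hδ hiso (Nat.cast_nonneg d)
      ((hc.measurable hS).inter hD) ((hp.bijOn z).injOn.mono inter_subset_right),
    image_preimage_inter, (hp.bijOn z).image_eq, inter_univ]

lemma hausdorffMeasure_preimage_inter' (hp : IsFlatCover p D Λ) (d : ℕ) {S : Set Y}
    (hS : MeasurableSet S) : μHE[d] (p ⁻¹' S ∩ D) = μHE[d] S := by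
  simpa using hp.hausdorffMeasure_preimage_inter d hS 0

lemma hausdorffMeasure_preimage_closedBall_ne_top (hp : IsFlatCover p D Λ) (d : ℕ) {S : Set Y}
    (hS : MeasurableSet S) (hfin : μHE[d] S ≠ ∞) (r : ℝ) (z : V) :
    μHE[d] (p ⁻¹' S ∩ Metric.closedBall z r) ≠ ∞ := by
  obtain ⟨δ, hδ, hiso⟩ := hp.exists_isometric
  have hc := hp.lipschitz.continuous
  have hball : ∀ x, μHE[d] (p ⁻¹' S ∩ Metric.ball x (δ / 2)) ≤ μHE[d] S := by
    intro x
    have hd : ∀ a ∈ Metric.ball x (δ / 2), ∀ b ∈ Metric.ball x (δ / 2), dist a b < δ := by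
      intro a ha b hb
      have := dist_triangle_right a b x
      rw [Metric.mem_ball] at ha hb
      linarith
    have hinj : InjOn p (Metric.ball x (δ / 2)) := by
      intro a ha b hb hab
      rw [← edist_eq_zero, ← hiso a b (hd a ha b hb), hab, edist_self]
    rw [Measure.euclideanHausdorffMeasure_def, Measure.euclideanHausdorffMeasure_def,
      Measure.smul_apply, Measure.smul_apply,
      ← hausdorffMeasure_image_of_local_isometry hc hδ hiso (Nat.cast_nonneg d)
        ((hc.measurable hS).inter Metric.isOpen_ball.measurableSet)
        (hinj.mono inter_subset_right)]
    gcongr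
    exact image_subset_iff.mpr inter_subset_left
  have : IsLocallyFiniteMeasure ((μHE[d] : Measure V).restrict (p ⁻¹' S)) := by
    refine ⟨fun x => ⟨Metric.ball x (δ / 2), Metric.ball_mem_nhds x (half_pos hδ), ?_⟩⟩
    rw [Measure.restrict_apply Metric.isOpen_ball.measurableSet, inter_comm]
    exact (hball x).trans_lt hfin.lt_top
  have := (Metric.isBounded_closedBall (x := z) (r := r)).measure_lt_top
    (μ := (μHE[d] : Measure V).restrict (p ⁻¹' S))
  rw [Measure.restrict_apply Metric.isClosed_closedBall.measurableSet, inter_comm] at this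
  exact this.ne

lemma volume_preimage_eq_zero (hp : IsFlatCover p D Λ) {m : ℕ}
    (hV : Module.finrank ℝ V = m + 1) {S : Set Y}
    (hS : MeasurableSet S) (hfin : μHE[m] S ≠ ∞) : volume (p ⁻¹' S) = 0 := by
  have hu : p ⁻¹' S = ⋃ n : ℕ, p ⁻¹' S ∩ Metric.closedBall 0 n := by
    rw [← inter_iUnion, Metric.iUnion_closedBall_nat, inter_univ]
  rw [hu, measure_iUnion_null_iff]
  intro n
  rw [← InnerProductSpace.euclideanHausdorffMeasure_eq_volume, hV]
  exact (Measure.euclideanHausdorffMeasure_zero_or_top (Nat.lt_succ_self m) _).resolve_right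
    (hp.hausdorffMeasure_preimage_closedBall_ne_top m hS hfin n 0)

lemma lintegral_fderiv_mollify_le (hp : IsFlatCover p D Λ) {m : ℕ}
    (hV : Module.finrank ℝ V = m + 1) (φ : ContDiffBump (0 : V)) {U : Set Y}
    (hU : MeasurableSet U) (hfin : μHE[m] (frontier U) ≠ ∞) :
    ∫⁻ x in D, ‖fderiv ℝ (mollify φ (p ⁻¹' U)) x‖ₑ ≤ μHE[m] (frontier U) := by
  have hc := hp.lipschitz.continuous
  have hK : MeasurableSet (p ⁻¹' frontier U) := hc.measurable isClosed_frontier.measurableSet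
  have hfin' := hp.hausdorffMeasure_preimage_closedBall_ne_top m isClosed_frontier.measurableSet
    hfin
  set μ := (μHE[m] : Measure V).restrict (p ⁻¹' frontier U) with hμ
  have : IsLocallyFiniteMeasure μ := by
    refine ⟨fun x => ⟨Metric.closedBall x 1, Metric.closedBall_mem_nhds x one_pos, ?_⟩⟩
    rw [Measure.restrict_apply Metric.isClosed_closedBall.measurableSet, inter_comm]
    exact (hfin' 1 x).lt_top
  calc _ ≤ ∫⁻ x in D, ∫⁻ y, ENNReal.ofReal (φ.normed volume (x - y)) ∂μ :=
        lintegral_mono fun x => enorm_fderiv_mollify_le φ hV (hc.measurable hU) hK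
          (hc.frontier_preimage_subset U) (fun r z => hfin' r z) x
    _ = ∫⁻ z, ENNReal.ofReal (φ.normed volume z) * μ {y | z + y ∈ D} :=
        lintegral_lintegral_translate hp.measurableSet
          (measurable_ofReal_normed φ)
    _ = ∫⁻ z, ENNReal.ofReal (φ.normed volume z) * μHE[m] (frontier U) := by
        refine lintegral_congr fun z => ?_
        rw [hμ, Measure.restrict_apply (measurableSet_translate hp.measurableSet z), inter_comm,
          hp.hausdorffMeasure_preimage_inter m isClosed_frontier.measurableSet]
    _ = _ := by
        rw [lintegral_mul_const' _ _ hfin, lintegral_ofReal_normed, one_mul]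

lemma lintegral_mollify_eq (hp : IsFlatCover p D Λ) {N : ℕ}
    (hV : Module.finrank ℝ V = N) (φ : ContDiffBump (0 : V)) {U : Set Y}
    (hU : MeasurableSet U) :
    ∫⁻ x in D, ENNReal.ofReal (mollify φ (p ⁻¹' U) x) = μHE[N] U := by
  have hc := hp.lipschitz.continuous
  have hm := hc.measurable hU
  have e1 : ∀ x, ENNReal.ofReal (mollify φ (p ⁻¹' U) x) =
      ∫⁻ y, ENNReal.ofReal (φ.normed volume (x - y)) ∂volume.restrict (p ⁻¹' U) := by
    intro x
    rw [mollify_apply, ofReal_integral_eq_lintegral_ofReal (integrable_mollify φ hm x)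
      (ae_of_all _ fun t => mul_nonneg (φ.nonneg_normed t) (indicator_nonneg (by simp) _)),
      ← lintegral_indicator hm, ← lintegral_sub_left_eq_self _ x]
    refine lintegral_congr fun t => ?_
    rw [show x - (x - t) = t by abel]
    by_cases h : t ∈ p ⁻¹' U
    · rw [indicator_of_mem h, indicator_of_mem h]; simp
    · rw [indicator_of_notMem h, indicator_of_notMem h]; simp
  simp only [e1]
  rw [lintegral_lintegral_translate hp.measurableSet
    (measurable_ofReal_normed φ)]
  have : ∀ z, volume.restrict (p ⁻¹' U) {y | z + y ∈ D} = μHE[N] U := by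
    intro z
    rw [Measure.restrict_apply (measurableSet_translate hp.measurableSet z), inter_comm,
      ← InnerProductSpace.euclideanHausdorffMeasure_eq_volume, hV,
      hp.hausdorffMeasure_preimage_inter N hU]
  simp only [this]
  rw [lintegral_mul_const _ (measurable_ofReal_normed φ), lintegral_ofReal_normed, one_mul]

end IsFlatCover

lemma enorm_sub_add_le {a b : ℝ} (ha : 0 ≤ a) (hb : 0 ≤ b) :
    ‖a - b‖ₑ + ENNReal.ofReal b ≤ ENNReal.ofReal a + 2 * ENNReal.ofReal (b - a) := by
  rw [← ofReal_norm, Real.norm_eq_abs, ← ENNReal.ofReal_add (abs_nonneg _) hb,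
    ← ENNReal.ofReal_ofNat 2, ← ENNReal.ofReal_mul (by norm_num)]
  rcases le_total a b with h | h
  · rw [← ENNReal.ofReal_add ha (by linarith), abs_of_nonpos (by linarith)]
    exact ENNReal.ofReal_le_ofReal (by linarith)
  · rw [abs_of_nonneg (by linarith)]
    refine le_add_right (ENNReal.ofReal_le_ofReal (by linarith))

namespace IsFlatCover

variable {V Y : Type*} [NormedAddCommGroup V] [InnerProductSpace ℝ V] [FiniteDimensional ℝ V]
  [MeasurableSpace V] [BorelSpace V] [EMetricSpace Y] [MeasurableSpace Y] [BorelSpace Y]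
  {p : V → Y} {D Λ : Set V}

lemma mollify_periodic (hp : IsFlatCover p D Λ) (φ : ContDiffBump (0 : V)) (U : Set Y)
    {l : V} (hl : l ∈ Λ) (x : V) : mollify φ (p ⁻¹' U) (x + l) = mollify φ (p ⁻¹' U) x := by
  rw [mollify_apply, mollify_apply]
  congr 1; ext t
  congr 1
  have : x + l - t ∈ p ⁻¹' U ↔ x - t ∈ p ⁻¹' U := by
    rw [mem_preimage, show x + l - t = x - t + l by abel, hp.periodic l hl]; rfl
  by_cases h : x - t ∈ p ⁻¹' U
  · rw [indicator_of_mem h, indicator_of_mem (this.mpr h)]; rfl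
  · rw [indicator_of_notMem h, indicator_of_notMem (mt this.mp h)]

lemma isAdmissible_mollify_mul (hp : IsFlatCover p D Λ) (φ : ContDiffBump (0 : V)) {U : Set Y}
    (hU : MeasurableSet U) {ζ : V → ℝ} (hζ : IsAdmissible D Λ ζ) :
    IsAdmissible D Λ (fun x => mollify φ (p ⁻¹' U) x * ζ x) where
  contDiff := (contDiff_mollify φ (hp.lipschitz.continuous.measurable hU)).mul hζ.contDiff
  periodic l hl x := by rw [hp.mollify_periodic φ U hl, hζ.periodic l hl]
  support r := by
    obtain ⟨R, hR⟩ := hζ.support r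
    exact ⟨R, fun x hx b hb hx' => by rw [hR x hx b hb hx', mul_zero]⟩

lemma lintegral_fderiv_mollify_mul_le (hp : IsFlatCover p D Λ) {m : ℕ}
    (hV : Module.finrank ℝ V = m + 1) (φ : ContDiffBump (0 : V)) {U : Set Y}
    (hU : MeasurableSet U) (hfin : μHE[m] (frontier U) ≠ ∞) {ζ : V → ℝ} (hζ : ContDiff ℝ 1 ζ)
    (hζ0 : ∀ x, 0 ≤ ζ x) (hζ1 : ∀ x, ζ x ≤ 1) {ε : ℝ} (hε : ∀ x, ‖fderiv ℝ ζ x‖ ≤ ε) :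
    ∫⁻ x in D, ‖fderiv ℝ (fun x => mollify φ (p ⁻¹' U) x * ζ x) x‖ₑ ≤
      μHE[m] (frontier U) + μHE[m + 1] U * ENNReal.ofReal ε := by
  have hA : MeasurableSet (p ⁻¹' U) := hp.lipschitz.continuous.measurable hU
  have hf := contDiff_mollify φ hA
  rw [← hp.lintegral_mollify_eq hV φ hU]
  calc _ ≤ ∫⁻ x in D, (‖fderiv ℝ (mollify φ (p ⁻¹' U)) x‖ₑ +
        ENNReal.ofReal (mollify φ (p ⁻¹' U) x) * ENNReal.ofReal ε) := by
        refine lintegral_mono fun x => ?_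
        have h1 : fderiv ℝ (fun x => mollify φ (p ⁻¹' U) x * ζ x) x =
            mollify φ (p ⁻¹' U) x • fderiv ℝ ζ x + ζ x • fderiv ℝ (mollify φ (p ⁻¹' U)) x :=
          fderiv_fun_mul (hf.differentiable one_ne_zero x) (hζ.differentiable one_ne_zero x)
        dsimp only
        rw [h1, add_comm]
        refine (enorm_add_le (ζ x • fderiv ℝ (mollify φ (p ⁻¹' U)) x)
          (mollify φ (p ⁻¹' U) x • fderiv ℝ ζ x)).trans (add_le_add ?_ ?_)
        · rw [enorm_smul]
          refine mul_le_of_le_one_left' ?_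
          rw [Real.enorm_of_nonneg (hζ0 x)]
          exact ENNReal.ofReal_le_one.mpr (hζ1 x)
        · rw [enorm_smul, Real.enorm_of_nonneg (mollify_nonneg φ _ x), ← ofReal_norm]
          gcongr
          exact hε x
    _ = (∫⁻ x in D, ‖fderiv ℝ (mollify φ (p ⁻¹' U)) x‖ₑ) +
        (∫⁻ x in D, ENNReal.ofReal (mollify φ (p ⁻¹' U) x)) * ENNReal.ofReal ε := by
        rw [lintegral_add_left (hf.continuous_fderiv one_ne_zero).enorm.measurable,
          lintegral_mul_const' _ _ ENNReal.ofReal_ne_top]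
    _ ≤ _ := by
        gcongr
        exact hp.lintegral_fderiv_mollify_le hV φ hU hfin

/-- The mollifier used at stage `k`. -/
def _root_.shrinkingBump (V : Type*) [NormedAddCommGroup V] (k : ℕ) : ContDiffBump (0 : V) where
  rIn := 1 / (2 * (k + 1))
  rOut := 1 / (k + 1)
  rIn_pos := by positivity
  rIn_lt_rOut := by
    apply one_div_lt_one_div_of_lt <;> nlinarith [(Nat.cast_nonneg k : (0 : ℝ) ≤ k)]

lemma tendsto_mollify_mul (hp : IsFlatCover p D Λ) {m : ℕ}
    (hV : Module.finrank ℝ V = m + 1) {U : Set Y}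
    (hU : MeasurableSet U) (hfin : μHE[m] (frontier U) ≠ ∞) (hfinU : μHE[m + 1] U ≠ ∞)
    {ζ : ℕ → V → ℝ} (hζ : ∀ k, Continuous (ζ k))
    (hζ0 : ∀ k x, 0 ≤ ζ k x) (hζ1 : ∀ k x, ζ k x ≤ 1)
    (hlim : ∀ x, Tendsto (fun k => ζ k x) atTop (𝓝 1)) :
    Tendsto (fun k => ∫⁻ x in D, ‖mollify (shrinkingBump V k) (p ⁻¹' U) x * ζ k x -
      (p ⁻¹' U).indicator 1 x‖ₑ) atTop (𝓝 0) := by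
  have hc := hp.lipschitz.continuous
  have hA : MeasurableSet (p ⁻¹' U) := hc.measurable hU
  set χ : V → ℝ := (p ⁻¹' U).indicator 1 with hχ
  have hχ0 : ∀ x, 0 ≤ χ x := fun x => indicator_nonneg (by simp) x
  have hχm : Measurable χ := measurable_one.indicator hA
  set g : ℕ → V → ℝ := fun k x => mollify (shrinkingBump V k) (p ⁻¹' U) x * ζ k x with hg
  have hg0 : ∀ k x, 0 ≤ g k x := fun k x => mul_nonneg (mollify_nonneg _ _ _) (hζ0 k x)
  have hgm : ∀ k, Measurable (g k) := fun k =>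
    ((contDiff_mollify _ hA).continuous.mul (hζ k)).measurable
  have hχint : ∫⁻ x in D, ENNReal.ofReal (χ x) = μHE[m + 1] U := by
    have : ∀ x, ENNReal.ofReal (χ x) = (p ⁻¹' U).indicator 1 x := by
      intro x
      by_cases h : x ∈ p ⁻¹' U <;> simp [hχ, h]
    simp only [this]
    rw [lintegral_indicator_one hA, Measure.restrict_apply hA,
      ← InnerProductSpace.euclideanHausdorffMeasure_eq_volume, hV,
      hp.hausdorffMeasure_preimage_inter' _ hU]
  have h1 : Tendsto (fun k => ∫⁻ x in D, ENNReal.ofReal (χ x - g k x)) atTop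
      (𝓝 (∫⁻ x in D, 0)) := by
    refine tendsto_lintegral_of_dominated_convergence (fun x => ENNReal.ofReal (χ x))
      (fun k => (hχm.sub (hgm k)).ennreal_ofReal)
      (fun k => ae_of_all _ fun x => ENNReal.ofReal_le_ofReal (by linarith [hg0 k x]))
      (by rwa [hχint]) ?_
    refine ae_restrict_of_ae ?_
    have hnull : volume (frontier (p ⁻¹' U)) = 0 := measure_mono_null
      (hc.frontier_preimage_subset U)
      (hp.volume_preimage_eq_zero hV isClosed_frontier.measurableSet hfin)
    filter_upwards [compl_mem_ae_iff.mpr hnull] with x hx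
    obtain ⟨r, hr, hx'⟩ := mollify_eq_of_notMem_frontier hx
    have h2 : ∀ᶠ k : ℕ in atTop, (1 : ℝ) / (k + 1) ≤ r :=
      (tendsto_one_div_add_atTop_nhds_zero_nat).eventually_le_const hr
    have h3 : Tendsto (fun k => ENNReal.ofReal (χ x - χ x * ζ k x)) atTop (𝓝 0) := by
      have := ((hlim x).const_mul (χ x)).const_sub (χ x)
      simpa using ENNReal.tendsto_ofReal this
    refine h3.congr' ?_
    filter_upwards [h2] with k hk
    simp only [hg]
    rw [hx' (shrinkingBump V k) hk]
  have h2 : Tendsto (fun k => 2 * ∫⁻ x in D, ENNReal.ofReal (χ x - g k x)) atTop (𝓝 0) := by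
    simpa using ENNReal.Tendsto.const_mul h1 (Or.inr ENNReal.ofNat_ne_top)
  refine tendsto_of_tendsto_of_tendsto_of_le_of_le tendsto_const_nhds h2
    (fun _ => zero_le) fun k => ?_
  have h3 : (∫⁻ x in D, ‖g k x - χ x‖ₑ) + μHE[m + 1] U ≤
      2 * (∫⁻ x in D, ENNReal.ofReal (χ x - g k x)) + μHE[m + 1] U := by
    calc _ = ∫⁻ x in D, (‖g k x - χ x‖ₑ + ENNReal.ofReal (χ x)) := by
          rw [lintegral_add_right _ hχm.ennreal_ofReal, hχint]
      _ ≤ ∫⁻ x in D, (ENNReal.ofReal (g k x) + 2 * ENNReal.ofReal (χ x - g k x)) :=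
          lintegral_mono fun x => enorm_sub_add_le (hg0 k x) (hχ0 x)
      _ = (∫⁻ x in D, ENNReal.ofReal (g k x)) +
          2 * ∫⁻ x in D, ENNReal.ofReal (χ x - g k x) := by
          rw [lintegral_add_left (hgm k).ennreal_ofReal,
            lintegral_const_mul' _ _ ENNReal.ofNat_ne_top]
      _ ≤ μHE[m + 1] U + 2 * ∫⁻ x in D, ENNReal.ofReal (χ x - g k x) := by
          gcongr
          rw [← hp.lintegral_mollify_eq hV (shrinkingBump V k) hU]
          refine lintegral_mono fun x => ENNReal.ofReal_le_ofReal ?_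
          exact mul_le_of_le_one_right (mollify_nonneg _ _ _) (hζ1 k x)
      _ = _ := add_comm _ _
  exact (ENNReal.add_le_add_iff_right hfinU).mp h3

/-- A relaxed isoperimetric inequality upstairs bounds the perimeter of sets downstairs. -/
theorem le_of_relaxedIso (hp : IsFlatCover p D Λ) {m : ℕ}
    (hV : Module.finrank ℝ V = m + 1) {Ψ : ℝ → ℝ} (hiso : RelaxedIso D Λ Ψ) {U : Set Y}
    (hU : MeasurableSet U) (hfinU : μHE[m + 1] U ≠ ∞) :
    ENNReal.ofReal (Ψ (μHE[m + 1] U).toReal) ≤ μHE[m] (frontier U) := by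
  by_cases hfin : μHE[m] (frontier U) = ∞
  · rw [hfin]; exact le_top
  obtain ⟨ζ, ε, hadm, hζ0, hζ1, hε, hε0, hlim⟩ := hp.exists_cutoff
  have hA : MeasurableSet (p ⁻¹' U) := hp.lipschitz.continuous.measurable hU
  have hvol : volume (p ⁻¹' U ∩ D) = μHE[m + 1] U := by
    rw [← InnerProductSpace.euclideanHausdorffMeasure_eq_volume, hV,
      hp.hausdorffMeasure_preimage_inter' _ hU]
  have hconv := hp.tendsto_mollify_mul hV hU hfin hfinU (fun k => (hadm k).contDiff.continuous)
    hζ0 hζ1 hlim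
  refine ENNReal.le_of_forall_pos_le_add fun δ hδ _ => ?_
  have h1 : Tendsto (fun k => μHE[m + 1] U * ENNReal.ofReal (ε k)) atTop (𝓝 0) := by
    simpa using ENNReal.Tendsto.const_mul (ENNReal.tendsto_ofReal hε0) (Or.inr hfinU)
  obtain ⟨K, hK⟩ := (h1.eventually_le_const (ENNReal.coe_pos.mpr hδ)).exists_forall_of_atTop
  have := hiso (p ⁻¹' U)
    (fun k x => mollify (shrinkingBump V (k + K)) (p ⁻¹' U) x * ζ (k + K) x)
    (μHE[m] (frontier U) + δ) hA (by rwa [hvol])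
    (fun k => hp.isAdmissible_mollify_mul _ hU (hadm _))
    ((tendsto_add_atTop_iff_nat K).mpr hconv) ?_
  · rwa [Measure.real, hvol] at this
  · intro k
    refine (hp.lintegral_fderiv_mollify_mul_le hV _ hU hfin (hadm _).contDiff (hζ0 _) (hζ1 _)
      (hε _)).trans ?_
    gcongr
    exact hK _ (Nat.le_add_left K k)

end IsFlatCover

lemma isFlatCover_id (V : Type*) [NormedAddCommGroup V] [InnerProductSpace ℝ V]
    [FiniteDimensional ℝ V] [MeasurableSpace V] : IsFlatCover (id : V → V) univ ∅ where
  lipschitz := LipschitzWith.id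
  isOpenMap := IsOpenMap.id
  exists_isometric := ⟨1, one_pos, fun _ _ _ => rfl⟩
  measurableSet := MeasurableSet.univ
  bijOn z := by simpa using bijOn_id (univ : Set V)
  periodic := by simp
  exists_cutoff := by
    let φ : ContDiffBump (0 : V) := ⟨1, 2, one_pos, one_lt_two⟩
    have hφc : ContDiff ℝ 1 φ := φ.contDiff
    obtain ⟨C, hC⟩ := hφc.lipschitzWith_of_hasCompactSupport φ.hasCompactSupport one_ne_zero
    have hpos : ∀ k : ℕ, (0 : ℝ) < k + 1 := fun k => by positivity
    refine ⟨fun k x => φ (((k : ℝ) + 1)⁻¹ • x), fun k => C * ((k : ℝ) + 1)⁻¹, fun k => ⟨?_, by simp,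
      fun r => ⟨r + 2 * (k + 1), fun x _ b hb hx => ?_⟩⟩, fun k x => φ.nonneg, fun k x => φ.le_one,
      fun k x => ?_, ?_, fun x => ?_⟩
    · exact hφc.comp (contDiff_const_smul _)
    · refine φ.zero_of_le_dist ?_
      rw [dist_zero_right, norm_smul, norm_inv, Real.norm_of_nonneg (hpos k).le]
      have h1 : ‖x‖ ≤ ‖x + b‖ + ‖b‖ := by simpa using norm_sub_le (x + b) b
      have h2 : 2 * ((k : ℝ) + 1) ≤ ‖x + b‖ := by linarith
      show (2 : ℝ) ≤ _
      rw [inv_mul_eq_div, le_div_iff₀ (hpos k)]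
      exact h2
    · have hL : LipschitzWith (C * ‖((k : ℝ) + 1)⁻¹‖₊) fun x : V => φ (((k : ℝ) + 1)⁻¹ • x) :=
        hC.comp (lipschitzWith_smul _)
      refine (norm_fderiv_le_of_lipschitz ℝ hL).trans_eq ?_
      rw [NNReal.coe_mul, coe_nnnorm, norm_inv, Real.norm_of_nonneg (hpos k).le]
    · have := (tendsto_one_div_add_atTop_nhds_zero_nat (𝕜 := ℝ)).const_mul (C : ℝ)
      simpa using this
    · refine tendsto_const_nhds.congr' ?_
      obtain ⟨K, hK⟩ := exists_nat_ge ‖x‖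
      filter_upwards [eventually_ge_atTop K] with k hk
      refine (φ.one_of_mem_closedBall ?_).symm
      rw [mem_closedBall_zero_iff, norm_smul, norm_inv, Real.norm_of_nonneg (hpos k).le]
      show _ ≤ (1 : ℝ)
      rw [inv_mul_le_one₀ (hpos k)]
      have : (K : ℝ) ≤ k := by exact_mod_cast hk
      linarith

lemma circle_dist_eq {L : ℝ} (hL : 0 < L) {x y : ℝ} (h : dist x y ≤ L / 2) :
    edist (x : AddCircle L) (y : AddCircle L) = edist x y := by
  rw [edist_dist, edist_dist, dist_eq_norm, dist_eq_norm, ← AddCircle.coe_sub,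
    (AddCircle.norm_coe_eq_abs_iff L hL.ne').mpr, Real.norm_eq_abs]
  rwa [abs_of_pos hL, ← Real.dist_eq]

lemma circle_edist_le {L : ℝ} (x y : ℝ) :
    edist (x : AddCircle L) (y : AddCircle L) ≤ edist x y := by
  rw [edist_dist, edist_dist, dist_eq_norm, dist_eq_norm, ← AddCircle.coe_sub]
  exact ENNReal.ofReal_le_ofReal QuotientAddGroup.norm_mk_le_norm

/-- Multiply a covering map by the universal cover of a circle of length `L`. -/
def circleCover {V Y : Type*} (L : ℝ) (p : V → Y) (q : WithLp 2 (ℝ × V)) :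
    WithLp 2 (AddCircle L × Y) := WithLp.toLp 2 ((q.fst : AddCircle L), p q.snd)

lemma IsFlatCover.circleCover {V Y : Type*} [NormedAddCommGroup V] [InnerProductSpace ℝ V]
    [FiniteDimensional ℝ V] [MeasurableSpace V] [BorelSpace V] [EMetricSpace Y]
    {p : V → Y} {D Λ : Set V} (hp : IsFlatCover p D Λ) {L : ℝ} (hL : 0 < L) :
    IsFlatCover (V := LineProd V) (circleCover L p) (prodDom (Ico 0 L) D) (prodPer {L} Λ) where
  lipschitz := by
    intro q q'
    rw [ENNReal.coe_one, one_mul, WithLp.prod_edist_eq_add (by norm_num),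
      WithLp.prod_edist_eq_add (by norm_num)]
    have h := hp.lipschitz q.snd q'.snd
    rw [ENNReal.coe_one, one_mul] at h
    have h' := circle_edist_le (L := L) q.fst q'.fst
    gcongr
    · exact h'
    · exact h
  isOpenMap := by
    have h1 : IsOpenMap (Prod.map ((↑) : ℝ → AddCircle L) p) :=
      QuotientAddGroup.isOpenMap_coe.prodMap hp.isOpenMap
    intro s hs
    have e1 : IsOpen (WithLp.toLp 2 ⁻¹' s : Set (ℝ × V)) :=
      hs.preimage (WithLp.prod_continuous_toLp 2 ℝ V)
    have e2 := (h1 _ e1).preimage (WithLp.prod_continuous_ofLp 2 (AddCircle L) Y)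
    have e3 : _root_.circleCover L p '' s = WithLp.ofLp ⁻¹'
        (Prod.map ((↑) : ℝ → AddCircle L) p '' (WithLp.toLp 2 ⁻¹' s)) := by
      refine Set.ext fun y => ⟨?_, ?_⟩
      · rintro ⟨q, hq, rfl⟩
        exact ⟨q.ofLp, hq, rfl⟩
      · rintro ⟨q, hq, hqy⟩
        exact ⟨WithLp.toLp 2 q, hq, congrArg (WithLp.toLp 2) hqy⟩
    rw [e3]
    exact e2
  exists_isometric := by
    obtain ⟨δ, hδ, hiso⟩ := hp.exists_isometric
    refine ⟨min δ (L / 2), lt_min hδ (half_pos hL), fun q q' h => ?_⟩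
    have h1 : dist q.fst q'.fst ≤ L / 2 := by
      have := norm_fst_le_lineProd (q - q').fst (q - q').snd
      rw [dist_eq_norm] at h ⊢
      exact (this.trans_lt (h.trans_le (min_le_right _ _))).le
    have h2 : dist q.snd q'.snd < δ := by
      have := norm_snd_le_lineProd (q - q').fst (q - q').snd
      rw [dist_eq_norm] at h ⊢
      exact (this.trans_lt (h.trans_le (min_le_left _ _)))
    rw [WithLp.prod_edist_eq_add (by norm_num), WithLp.prod_edist_eq_add (by norm_num)]
    have e1 := circle_dist_eq hL h1
    have e2 := hiso _ _ h2
    show (edist (q.fst : AddCircle L) (q'.fst : AddCircle L) ^ _ + edist (p q.snd) (p q'.snd) ^ _) ^ _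
      = _
    rw [e1, e2]
  measurableSet := measurableSet_prodDom measurableSet_Ico hp.measurableSet
  bijOn z := by
    have : Fact (0 < L) := ⟨hL⟩
    have hmem : ∀ q : LineProd V, z + q ∈ prodDom (Ico 0 L) D →
        q.fst ∈ Ico (-z.fst) (-z.fst + L) ∧ q.snd ∈ {y | z.snd + y ∈ D} := by
      rintro q ⟨⟨h1, h2⟩, h3⟩
      have e : (z + q).fst = z.fst + q.fst := rfl
      rw [e] at h1 h2
      exact ⟨⟨by linarith, by linarith⟩, h3⟩
    refine ⟨fun _ _ => mem_univ _, ?_, ?_⟩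
    · intro q hq q' hq' h
      have h1 := hmem q hq
      have h2 := hmem q' hq'
      have e1 : (q.fst : AddCircle L) = q'.fst := congrArg (fun t => t.fst) h
      have e2 : p q.snd = p q'.snd := congrArg (fun t => t.snd) h
      have e1' := (AddCircle.coe_eq_coe_iff_of_mem_Ico h1.1 h2.1).mp e1
      have e2' := (hp.bijOn z.snd).injOn h1.2 h2.2 e2
      exact congrArg (WithLp.toLp 2) (Prod.ext e1' e2')
    · intro y _
      obtain ⟨a, ha, ha'⟩ : y.fst ∈ ((↑) : ℝ → AddCircle L) '' Ico (-z.fst) (-z.fst + L) := by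
        rw [AddCircle.coe_image_Ico_eq]; trivial
      obtain ⟨b, hb, hb'⟩ := (hp.bijOn z.snd).surjOn (mem_univ y.snd)
      refine ⟨WithLp.toLp 2 (a, b), ⟨?_, hb⟩, congrArg (WithLp.toLp 2) (Prod.ext ha' hb')⟩
      show z.fst + a ∈ Ico 0 L
      exact ⟨by linarith [ha.1], by linarith [ha.2]⟩
  periodic := by
    rintro l (⟨h1, h2⟩ | ⟨h1, h2⟩) x
    · refine congrArg (WithLp.toLp 2) (Prod.ext ?_ ?_)
      · show ((x.fst + l.fst : ℝ) : AddCircle L) = x.fst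
        rw [h1, AddCircle.coe_add_period]
      · show p (x.snd + l.snd) = p x.snd
        rw [h2, add_zero]
    · refine congrArg (WithLp.toLp 2) (Prod.ext ?_ ?_)
      · show ((x.fst + l.fst : ℝ) : AddCircle L) = x.fst
        rw [h1, add_zero]
      · exact hp.periodic _ h2 _
  exists_cutoff := by
    obtain ⟨ζ, ε, hadm, h0, h1, hd, hε, hlim⟩ := hp.exists_cutoff
    let S : LineProd V →L[ℝ] V := LinearMap.toContinuousLinearMap
      { toFun := fun q => q.snd, map_add' := fun _ _ => rfl, map_smul' := fun _ _ => rfl }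
    have hS : ‖S‖ ≤ 1 := S.opNorm_le_bound zero_le_one fun q => by
      rw [one_mul]; exact norm_snd_le_lineProd q.fst q.snd
    refine ⟨fun k q => ζ k (S q), ε, fun k => ⟨(hadm k).contDiff.comp S.contDiff, ?_, fun r => ?_⟩,
      fun k q => h0 k _, fun k q => h1 k _, fun k q => ?_, hε, fun q => hlim _⟩
    · rintro l (⟨_, h2⟩ | ⟨_, h2⟩) x
      · show ζ k (x.snd + l.snd) = ζ k x.snd
        rw [h2, add_zero]
      · exact (hadm k).periodic _ h2 _
    · obtain ⟨R, hR⟩ := (hadm k).support r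
      refine ⟨R + L, fun q hq b hb hq' => hR q.snd hq.2 b.snd
        ((norm_snd_le_lineProd b.fst b.snd).trans hb) ?_⟩
      have h2 := lineProd_norm_le q.fst q.snd
      have h3 : |q.fst| ≤ L := by rw [abs_of_nonneg hq.1.1]; exact hq.1.2.le
      have h4 : ‖q‖ ≤ |q.fst| + ‖q.snd‖ := h2
      linarith
    · have : fderiv ℝ (fun q => ζ k (S q)) q = (fderiv ℝ (ζ k) (S q)).comp S := by
        have hdiff : DifferentiableAt ℝ (ζ k) (S q) :=
          (hadm k).contDiff.differentiable one_ne_zero _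
        exact (hdiff.hasFDerivAt.comp q S.hasFDerivAt).fderiv
      rw [this]
      refine (ContinuousLinearMap.opNorm_comp_le _ _).trans ?_
      have := hd k (S q)
      nlinarith [norm_nonneg (fderiv ℝ (ζ k) (S q)), norm_nonneg S]

section Sphere

variable {V : Type*} [NormedAddCommGroup V] [InnerProductSpace ℝ V]

lemma orthonormal_singleton_of_norm_eq_one (m : ℕ) {u : V} (hu : ‖u‖ = 1) :
    Orthonormal ℝ (({0} : Set (Fin (m + 1))).domRestrict fun _ => u) :=
  ⟨fun _ => hu, fun _ _ hij => (hij (Subsingleton.elim _ _)).elim⟩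

lemma exists_linearIsometryEquiv_map_eq {W : Type*} [NormedAddCommGroup W] [InnerProductSpace ℝ W]
    [FiniteDimensional ℝ V] [FiniteDimensional ℝ W] {m : ℕ} (hV : Module.finrank ℝ V = m + 1)
    (hW : Module.finrank ℝ W = m + 1) {u : V} {w : W} (hu : ‖u‖ = 1) (hw : ‖w‖ = 1) :
    ∃ J : V ≃ₗᵢ[ℝ] W, J u = w := by
  obtain ⟨b, hb⟩ := (orthonormal_singleton_of_norm_eq_one m hu).exists_orthonormalBasis_extension_of_card_eq (by simpa using hV)
  obtain ⟨c, hc⟩ := (orthonormal_singleton_of_norm_eq_one m hw).exists_orthonormalBasis_extension_of_card_eq (by simpa using hW)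
  refine ⟨b.repr.trans c.repr.symm, ?_⟩
  rw [← hb 0 rfl, ← hc 0 rfl, LinearIsometryEquiv.trans_apply, b.repr_self, c.repr_symm_single]

lemma exists_isometry_lineProd [FiniteDimensional ℝ V] {m : ℕ} (hV : Module.finrank ℝ V = m + 1)
    {u : V} (hu : ‖u‖ = 1) :
    ∃ J : V ≃ₗᵢ[ℝ] LineProd (EucSp m), ∀ x, (J x).fst = inner ℝ u x := by
  have hw : ‖(WithLp.toLp 2 ((1 : ℝ), (0 : EucSp m)) : LineProd (EucSp m))‖ = 1 := by
    have := WithLp.prod_norm_sq_eq_of_L2 (WithLp.toLp 2 ((1 : ℝ), (0 : EucSp m)))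
    change _ = ‖(1 : ℝ)‖ ^ 2 + ‖(0 : EucSp m)‖ ^ 2 at this
    rw [norm_zero, norm_one] at this
    nlinarith [norm_nonneg (WithLp.toLp 2 ((1 : ℝ), (0 : EucSp m)) : LineProd (EucSp m))]
  obtain ⟨J, hJ⟩ := exists_linearIsometryEquiv_map_eq hV
    (by rw [finrank_lineProd, finrank_euclideanSpace_fin]) hu hw
  refine ⟨J, fun x => ?_⟩
  rw [← J.inner_map_map, hJ, WithLp.prod_inner_apply]
  show (J x).fst = inner ℝ (1 : ℝ) (J x).fst + inner ℝ (0 : EucSp m) _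
  simp

lemma radial_projection_ineq {R : ℝ} (hR : 0 < R) {a b : V} (ha : R ≤ ‖a‖) (hb : R ≤ ‖b‖) :
    ‖(R / ‖a‖) • a - (R / ‖b‖) • b‖ ^ 2 + (‖a‖ - ‖b‖) ^ 2 ≤ ‖a - b‖ ^ 2 := by
  have ha0 := hR.trans_le ha
  have hb0 := hR.trans_le hb
  rw [norm_sub_sq_real, norm_sub_sq_real, inner_smul_left, inner_smul_right, norm_smul, norm_smul,
    Real.norm_of_nonneg (by positivity), Real.norm_of_nonneg (by positivity),
    div_mul_cancel₀ _ ha0.ne', div_mul_cancel₀ _ hb0.ne']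
  have hab := real_inner_le_norm a b
  have h1 : R / ‖a‖ * (R / ‖b‖) ≤ 1 := by
    have := (div_le_one ha0).mpr ha
    have := (div_le_one hb0).mpr hb
    have : 0 ≤ R / ‖b‖ := by positivity
    nlinarith [div_nonneg hR.le ha0.le]
  have h2 : R ^ 2 = R / ‖a‖ * (R / ‖b‖) * (‖a‖ * ‖b‖) := by field_simp
  simp only [conj_trivial]
  nlinarith [mul_nonneg (sub_nonneg.mpr h1) (sub_nonneg.mpr hab)]

/-- Move the `P`-component of a point radially onto the sphere of radius `R`. -/
def radialRetract (P : V →L[ℝ] V) (R : ℝ) (x : V) : V := x - P x + (R / ‖P x‖) • P x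

variable {P : V →L[ℝ] V} {R : ℝ}

lemma norm_sq_sub_add_of_inner (hP : ∀ x y, inner ℝ (P x) y = inner ℝ (P x) (P y)) (d : V) {z : V}
    (hz : inner ℝ z d = inner ℝ z (P d)) : ‖d - P d + z‖ ^ 2 = ‖d‖ ^ 2 - ‖P d‖ ^ 2 + ‖z‖ ^ 2 := by
  have h1 : inner ℝ (d - P d) z = (0 : ℝ) := by
    rw [real_inner_comm, inner_sub_right, hz, sub_self]
  rw [norm_add_sq_real, norm_sub_sq_real, h1, real_inner_comm, hP, real_inner_self_eq_norm_sq]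
  ring

lemma radialRetract_ineq (hP : ∀ x y, inner ℝ (P x) y = inner ℝ (P x) (P y)) (hR : 0 < R) {x y : V}
    (hx : R ≤ ‖P x‖) (hy : R ≤ ‖P y‖) :
    ‖radialRetract P R x - radialRetract P R y‖ ^ 2 + (‖P x‖ - ‖P y‖) ^ 2 ≤ ‖x - y‖ ^ 2 := by
  have e : radialRetract P R x - radialRetract P R y = (x - y) - P (x - y) +
      ((R / ‖P x‖) • P x - (R / ‖P y‖) • P y) := by
    rw [radialRetract, radialRetract, map_sub]; abel
  have h := radial_projection_ineq hR hx hy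
  rw [e, norm_sq_sub_add_of_inner hP, map_sub]
  · linarith
  · rw [inner_sub_left, inner_sub_left, inner_smul_left, inner_smul_left, inner_smul_left,
      inner_smul_left, hP x, hP y]

lemma abs_inner_sub_le (hP : ∀ x y, inner ℝ (P x) y = inner ℝ (P x) (P y)) {δ : ℝ} {x y z : V}
    (hx : ‖P x‖ = ‖P y‖) (hxz : ‖x - z‖ ≤ δ) (hyz : ‖y - z‖ ≤ δ) :
    |inner ℝ (P z) (x - y)| ≤ δ * ‖x - y‖ := by
  have hPn : ∀ d, ‖P d‖ ≤ ‖d‖ := by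
    intro d
    have h1 := real_inner_le_norm (P d) d
    rw [hP, real_inner_self_eq_norm_sq] at h1
    by_contra! h
    nlinarith [norm_nonneg d]
  have h0 : inner ℝ (P x + P y) (P (x - y)) = (0 : ℝ) := by
    rw [map_sub, inner_add_left, inner_sub_right, inner_sub_right, real_inner_comm (P x) (P y),
      real_inner_self_eq_norm_sq, real_inner_self_eq_norm_sq, hx]
    ring
  have h1 : (2 : ℝ) * inner ℝ (P z) (x - y) = -inner ℝ (P (x - z) + P (y - z)) (P (x - y)) := by
    have e : P (x - z) + P (y - z) = (P x + P y) - (2 : ℝ) • P z := by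
      rw [map_sub, map_sub, two_smul]; abel
    rw [e, inner_sub_left, h0, inner_smul_left, hP z]
    simp
  have h2 : |inner ℝ (P (x - z) + P (y - z)) (P (x - y))| ≤ (2 * δ) * ‖x - y‖ := by
    refine (abs_real_inner_le_norm _ _).trans ?_
    have h3 := (norm_add_le (P (x - z)) (P (y - z))).trans
      (add_le_add ((hPn _).trans hxz) ((hPn _).trans hyz))
    have := hPn (x - y)
    have hδ : 0 ≤ δ := (norm_nonneg _).trans hxz
    calc _ ≤ (δ + δ) * ‖x - y‖ := by gcongr
      _ = _ := by ring
  have h4 : |(2 : ℝ) * inner ℝ (P z) (x - y)| = 2 * |inner ℝ (P z) (x - y)| := by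
    rw [abs_mul, abs_two]
  rw [h1, abs_neg] at h4
  linarith

end Sphere

lemma LipschitzOnWith.euclideanHausdorffMeasure_image_le {X Y : Type*} [EMetricSpace X]
    [EMetricSpace Y] [MeasurableSpace X] [BorelSpace X] [MeasurableSpace Y] [BorelSpace Y]
    {K : ℝ≥0} {f : X → Y} {s : Set X} (hf : LipschitzOnWith K f s) (d : ℕ) :
    μHE[d] (f '' s) ≤ (K : ℝ≥0∞) ^ d * μHE[d] s := by
  have h := hf.hausdorffMeasure_image_le (Nat.cast_nonneg d)
  rw [ENNReal.rpow_natCast] at h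
  rw [Measure.euclideanHausdorffMeasure_def, Measure.euclideanHausdorffMeasure_def,
    Measure.smul_apply, Measure.smul_apply, ENNReal.smul_def, ENNReal.smul_def, smul_eq_mul,
    smul_eq_mul, mul_left_comm]
  gcongr

section Sphere

variable {V : Type*} [NormedAddCommGroup V] [InnerProductSpace ℝ V] [FiniteDimensional ℝ V]
  [MeasurableSpace V] [BorelSpace V]

lemma euclideanHausdorffMeasure_eq_volume_of_finrank {d : ℕ} (hV : Module.finrank ℝ V = d) :
    (μHE[d] : Measure V) = volume := by
  rw [← hV, InnerProductSpace.euclideanHausdorffMeasure_eq_volume]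

lemma volume_prodDom' (I : Set ℝ) (D : Set V) :
    volume (prodDom I D) = volume I * volume D := by
  have h : MeasurePreserving (MeasurableEquiv.toLp 2 (ℝ × V)) volume volume :=
    WithLp.volume_preserving_toLp ℝ V
  have := h.measure_preimage_equiv (prodDom I D)
  rw [← this]
  have e : (MeasurableEquiv.toLp 2 (ℝ × V)) ⁻¹' prodDom I D = I ×ˢ D := rfl
  rw [e, Measure.volume_eq_prod, Measure.prod_prod]

lemma lineProd_norm_sq (q : LineProd V) : ‖q‖ ^ 2 = q.fst ^ 2 + ‖q.snd‖ ^ 2 := by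
  have := WithLp.prod_norm_sq_eq_of_L2 q
  change _ = ‖q.fst‖ ^ 2 + ‖q.snd‖ ^ 2 at this
  rw [this, Real.norm_eq_abs, sq_abs]

variable {P : V →L[ℝ] V} {R : ℝ}

lemma euclideanHausdorffMeasure_mul_le_of_small {m : ℕ} (hV : Module.finrank ℝ V = m + 1)
    (hP : ∀ x y, inner ℝ (P x) y = inner ℝ (P x) (P y)) (hP2 : ∀ x, P (P x) = P x) (hR : 0 < R)
    {A : Set V} (hA : ∀ x ∈ A, ‖P x‖ = R) {ε : ℝ} (hε : 0 < ε) (hε1 : ε < 1)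
    (hdiam : ∀ x ∈ A, ∀ y ∈ A, ‖x - y‖ ≤ ε * R) {h : ℝ} :
    μHE[m] A * ENNReal.ofReal h ≤ (Real.toNNReal (√(1 - ε ^ 2))⁻¹ : ℝ≥0∞) ^ m *
      volume {x | R ≤ ‖P x‖ ∧ ‖P x‖ ≤ R + h ∧ radialRetract P R x ∈ A} := by
  rcases A.eq_empty_or_nonempty with rfl | ⟨z, hz⟩
  · simp
  have hu : ‖R⁻¹ • P z‖ = 1 := by
    rw [norm_smul, hA z hz, norm_inv, Real.norm_of_nonneg hR.le, inv_mul_cancel₀ hR.ne']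
  obtain ⟨J, hJ⟩ := exists_isometry_lineProd hV hu
  set c : ℝ≥0 := Real.toNNReal (√(1 - ε ^ 2))⁻¹ with hc
  have hε2 : 0 < 1 - ε ^ 2 := by nlinarith
  have hJn : ∀ x y, ‖x - y‖ ^ 2 = (J (x - y)).fst ^ 2 + ‖(J x).snd - (J y).snd‖ ^ 2 := by
    intro x y
    rw [← J.norm_map, lineProd_norm_sq]
    have : (J (x - y)).snd = (J x).snd - (J y).snd := by rw [map_sub]; rfl
    rw [this]
  have hanti : ∀ x ∈ A, ∀ y ∈ A, ‖x - y‖ ≤ c * ‖(J x).snd - (J y).snd‖ := by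
    intro x hx y hy
    have h1 := abs_inner_sub_le hP ((hA x hx).trans (hA y hy).symm) (hdiam x hx z hz)
      (hdiam y hy z hz)
    have h2 : |(J (x - y)).fst| ≤ ε * ‖x - y‖ := by
      rw [hJ, inner_smul_left, abs_mul, conj_trivial, abs_of_pos (inv_pos.mpr hR),
        inv_mul_le_iff₀ hR]
      linarith
    have h3 : (J (x - y)).fst ^ 2 ≤ (ε * ‖x - y‖) ^ 2 := by
      rw [← sq_abs]; gcongr
    have h4 := hJn x y
    have h5 : (√(1 - ε ^ 2) * ‖x - y‖) ^ 2 ≤ ‖(J x).snd - (J y).snd‖ ^ 2 := by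
      rw [mul_pow, Real.sq_sqrt hε2.le]; nlinarith
    have h6 := (sq_le_sq₀ (by positivity) (norm_nonneg _)).mp h5
    rw [hc, Real.coe_toNNReal _ (by positivity), le_inv_mul_iff₀ (Real.sqrt_pos.mpr hε2)]
    exact h6
  set B : Set (EucSp m) := (fun x => (J x).snd) '' A with hB
  have hAB : μHE[m] A ≤ (c : ℝ≥0∞) ^ m * μHE[m] B := by
    have hinj : InjOn (fun x => (J x).snd) A := by
      intro x hx y hy hxy
      have := hanti x hx y hy
      change (J x).snd = (J y).snd at hxy
      rw [hxy, sub_self, norm_zero, mul_zero] at this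
      exact sub_eq_zero.mp (norm_le_zero_iff.mp this)
    have hL : LipschitzOnWith c (Function.invFunOn (fun x => (J x).snd) A) B := by
      refine LipschitzOnWith.of_dist_le_mul ?_
      rintro _ ⟨x, hx, rfl⟩ _ ⟨y, hy, rfl⟩
      rw [hinj.leftInvOn_invFunOn hx, hinj.leftInvOn_invFunOn hy, dist_eq_norm, dist_eq_norm]
      exact hanti x hx y hy
    have := hL.euclideanHausdorffMeasure_image_le m
    rwa [hB, hinj.leftInvOn_invFunOn.image_image] at this
  have hvolB : μHE[m] B = volume B := by
    rw [euclideanHausdorffMeasure_eq_volume_of_finrank finrank_euclideanSpace_fin]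
  set Sh := {x | R ≤ ‖P x‖ ∧ ‖P x‖ ≤ R + h ∧ radialRetract P R x ∈ A} with hSh
  let Φ : V → LineProd (EucSp m) := fun x =>
    WithLp.toLp 2 (‖P x‖ - R, (J (radialRetract P R x)).snd)
  have hΦ : LipschitzOnWith 1 Φ Sh := by
    refine LipschitzOnWith.of_dist_le_mul fun x hx y hy => ?_
    rw [NNReal.coe_one, one_mul, dist_eq_norm, dist_eq_norm]
    refine (sq_le_sq₀ (norm_nonneg _) (norm_nonneg _)).mp ?_
    rw [lineProd_norm_sq]
    have h1 := radialRetract_ineq hP hR hx.1 hy.1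
    have h2 := hJn (radialRetract P R x) (radialRetract P R y)
    show ((‖P x‖ - R) - (‖P y‖ - R)) ^ 2 +
      ‖(J (radialRetract P R x)).snd - (J (radialRetract P R y)).snd‖ ^ 2 ≤ _
    nlinarith [sq_nonneg (J (radialRetract P R x - radialRetract P R y)).fst]
  have hsub : prodDom (Icc 0 h) B ⊆ Φ '' Sh := by
    rintro q ⟨⟨h1, h2⟩, x, hx, hxq⟩
    have hs : 0 < 1 + q.fst / R := by have := div_nonneg h1 hR.le; linarith
    have hPy : P (x + (q.fst / R) • P x) = (1 + q.fst / R) • P x := by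
      rw [map_add, map_smul, hP2, add_smul, one_smul]
    have hn : ‖P (x + (q.fst / R) • P x)‖ = R + q.fst := by
      rw [hPy, norm_smul, hA x hx, Real.norm_of_nonneg hs.le]; field_simp
    have hr : radialRetract P R (x + (q.fst / R) • P x) = x := by
      have e : R / (R + q.fst) * (1 + q.fst / R) = 1 := by
        have : R + q.fst ≠ 0 := by positivity
        field_simp
      rw [radialRetract, hn, hPy, smul_smul, e, add_smul, one_smul]
      abel
    refine ⟨x + (q.fst / R) • P x, ⟨?_, ?_, ?_⟩, ?_⟩
    · rw [hn]; linarith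
    · rw [hn]; linarith
    · rwa [hr]
    · refine congrArg (WithLp.toLp 2) (Prod.ext ?_ ?_)
      · show ‖P (x + (q.fst / R) • P x)‖ - R = q.fst
        rw [hn]; ring
      · show (J (radialRetract P R (x + (q.fst / R) • P x))).snd = q.snd
        rw [hr]; exact hxq
  have hvol : ENNReal.ofReal h * volume B ≤ volume Sh := by
    have h1 := hΦ.euclideanHausdorffMeasure_image_le (m + 1)
    have h2 : Module.finrank ℝ (LineProd (EucSp m)) = m + 1 := by
      rw [finrank_lineProd, finrank_euclideanSpace_fin]
    rw [euclideanHausdorffMeasure_eq_volume_of_finrank hV,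
      euclideanHausdorffMeasure_eq_volume_of_finrank h2, ENNReal.coe_one, one_pow, one_mul] at h1
    refine le_trans ?_ ((measure_mono hsub).trans h1)
    rw [volume_prodDom', Real.volume_Icc, sub_zero]
  calc μHE[m] A * ENNReal.ofReal h ≤ (c : ℝ≥0∞) ^ m * μHE[m] B * ENNReal.ofReal h := by gcongr
    _ = (c : ℝ≥0∞) ^ m * (ENNReal.ofReal h * volume B) := by rw [hvolB]; ring
    _ ≤ _ := by gcongr

lemma measurable_radialRetract (P : V →L[ℝ] V) (R : ℝ) : Measurable (radialRetract P R) := by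
  have h := P.continuous.measurable
  exact (measurable_id.sub h).add ((measurable_const.div h.norm).smul h)

/-- The cylinder-like hypersurface `‖P x‖ = R` has measure at most the volume of an outer shell
divided by its thickness. -/
lemma euclideanHausdorffMeasure_mul_le_shell {m : ℕ} (hV : Module.finrank ℝ V = m + 1)
    (hP : ∀ x y, inner ℝ (P x) y = inner ℝ (P x) (P y)) (hP2 : ∀ x, P (P x) = P x) (hR : 0 < R)
    {Q : Set V} (hQ : MeasurableSet Q) {h : ℝ} :
    μHE[m] (Q ∩ {x | ‖P x‖ = R}) * ENNReal.ofReal h ≤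
      volume {x | R ≤ ‖P x‖ ∧ ‖P x‖ ≤ R + h ∧ radialRetract P R x ∈ Q} := by
  have hPn : Measurable fun x => ‖P x‖ := P.continuous.measurable.norm
  have key : ∀ ε : ℝ, 0 < ε → ε < 1 → μHE[m] (Q ∩ {x | ‖P x‖ = R}) * ENNReal.ofReal h ≤
      (Real.toNNReal (√(1 - ε ^ 2))⁻¹ : ℝ≥0∞) ^ m *
      volume {x | R ≤ ‖P x‖ ∧ ‖P x‖ ≤ R + h ∧ radialRetract P R x ∈ Q} := by
    intro ε hε hε1
    obtain ⟨B, hBm, hBd, hBu, hB⟩ := exists_small_partition (V := V) (mul_pos hε hR)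
    have e1 : Q ∩ {x | ‖P x‖ = R} = ⋃ i, B i ∩ (Q ∩ {x | ‖P x‖ = R}) := by
      rw [← iUnion_inter, hBu, univ_inter]
    have hpiece := fun i => euclideanHausdorffMeasure_mul_le_of_small (m := m) hV hP hP2 hR
      (A := B i ∩ (Q ∩ {x | ‖P x‖ = R})) (fun x hx => hx.2.2) hε hε1
      (fun x hx y hy => by rw [← dist_eq_norm]; exact (hB i x hx.1 y hy.1).le) (h := h)
    set c := (Real.toNNReal (√(1 - ε ^ 2))⁻¹ : ℝ≥0∞) ^ m
    set T : ℕ → Set V := fun i => {x | R ≤ ‖P x‖ ∧ ‖P x‖ ≤ R + h ∧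
      radialRetract P R x ∈ B i ∩ (Q ∩ {x | ‖P x‖ = R})} with hT
    have hTm : ∀ i, MeasurableSet (T i) := fun i =>
      (measurableSet_le measurable_const hPn).inter ((measurableSet_le hPn measurable_const).inter
        (measurable_radialRetract P R ((hBm i).inter (hQ.inter
          (measurableSet_eq_fun hPn measurable_const)))))
    have hTd : Pairwise (Function.onFun Disjoint T) := by
      intro i j hij
      refine Set.disjoint_left.mpr fun x hx hx' => ?_
      exact Set.disjoint_left.mp (hBd hij) hx.2.2.1 hx'.2.2.1
    calc μHE[m] (Q ∩ {x | ‖P x‖ = R}) * ENNReal.ofReal h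
        ≤ (∑' i, μHE[m] (B i ∩ (Q ∩ {x | ‖P x‖ = R}))) * ENNReal.ofReal h := by
          gcongr
          conv_lhs => rw [e1]
          exact measure_iUnion_le _
      _ = ∑' i, μHE[m] (B i ∩ (Q ∩ {x | ‖P x‖ = R})) * ENNReal.ofReal h :=
          ENNReal.tsum_mul_right.symm
      _ ≤ ∑' i, c * volume (T i) := ENNReal.tsum_le_tsum hpiece
      _ = c * volume (⋃ i, T i) := by rw [ENNReal.tsum_mul_left, measure_iUnion hTd hTm]
      _ ≤ _ := by
          gcongr
          exact iUnion_subset fun i x hx => ⟨hx.1, hx.2.1, hx.2.2.2.1⟩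
  have hlim : Tendsto (fun ε : ℝ => (Real.toNNReal (√(1 - ε ^ 2))⁻¹ : ℝ≥0∞) ^ m) (𝓝[>] 0)
      (𝓝 1) := by
    have h1 : ContinuousAt (fun ε : ℝ => (√(1 - ε ^ 2))⁻¹) 0 := by
      refine ContinuousAt.inv₀ (by fun_prop) (by norm_num)
    have h2 : Tendsto (fun ε : ℝ => (√(1 - ε ^ 2))⁻¹) (𝓝[>] 0) (𝓝 1) := by
      have := h1.tendsto.mono_left (nhdsWithin_le_nhds (s := Ioi (0 : ℝ)))
      simpa using this
    have h3 := ENNReal.Tendsto.pow (n := m) (ENNReal.tendsto_ofReal h2)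
    rw [ENNReal.ofReal_one, one_pow] at h3
    exact h3
  have h5 := ENNReal.Tendsto.mul_const (b := volume {x | R ≤ ‖P x‖ ∧ ‖P x‖ ≤ R + h ∧
    radialRetract P R x ∈ Q}) hlim (Or.inl one_ne_zero)
  rw [one_mul] at h5
  refine ge_of_tendsto h5 ?_
  filter_upwards [Ioo_mem_nhdsGT (zero_lt_one' ℝ)] with ε hε
  exact key ε hε.1 hε.2

end Sphere

lemma le_of_mul_le_pow_sub {a : ℝ≥0∞} {C R : ℝ} {n : ℕ}
    (H : ∀ h : ℝ, 0 < h → a * ENNReal.ofReal h ≤ ENNReal.ofReal (C * ((R + h) ^ n - R ^ n))) :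
    a ≤ ENNReal.ofReal (C * (n * R ^ (n - 1))) := by
  have h1 : HasDerivAt (fun x : ℝ => C * x ^ n) (C * (n * R ^ (n - 1))) R :=
    (hasDerivAt_pow n R).const_mul C
  have h2 : Tendsto (fun h : ℝ => h⁻¹ • (C * (R + h) ^ n - C * R ^ n)) (𝓝[>] 0)
      (𝓝 (C * (n * R ^ (n - 1)))) :=
    (hasDerivAt_iff_tendsto_slope_zero.mp h1).mono_left
      (nhdsWithin_mono _ fun x hx => ne_of_gt hx)
  refine ge_of_tendsto (ENNReal.tendsto_ofReal h2) ?_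
  filter_upwards [self_mem_nhdsWithin] with h hh
  have hh' : (0 : ℝ) < h := hh
  have h3 := H h hh'
  rw [← ENNReal.le_div_iff_mul_le (Or.inl (by simpa using hh')) (Or.inl ENNReal.ofReal_ne_top),
    ← ENNReal.ofReal_div_of_pos hh'] at h3
  refine h3.trans_eq ?_
  congr 1
  rw [smul_eq_mul]; ring

section Shell

variable {V : Type*} [NormedAddCommGroup V] [InnerProductSpace ℝ V] [FiniteDimensional ℝ V]
  [MeasurableSpace V] [BorelSpace V]

lemma volume_closedBall_eq {N : ℕ} (hN : 1 ≤ N) (hV : Module.finrank ℝ V = N) {R : ℝ}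
    (hR : 0 ≤ R) : volume (Metric.closedBall (0 : V) R) = ENNReal.ofReal (ballConst N * R ^ N) := by
  have : Nontrivial V := Module.nontrivial_of_finrank_pos (R := ℝ) (by omega)
  have h1 := volume_real_ball_one V
  rw [Measure.addHaar_closedBall _ _ hR, hV, mul_comm (ballConst N), ENNReal.ofReal_mul (by positivity),
    ← hV, ← h1, ofReal_measureReal Metric.isBounded_ball.measure_lt_top.ne]

lemma volume_shell_le {N : ℕ} (hN : 1 ≤ N) (hV : Module.finrank ℝ V = N) {R h : ℝ}
    (hR : 0 < R) (hh : 0 < h) :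
    volume {x : V | R ≤ ‖x‖ ∧ ‖x‖ ≤ R + h} ≤
      ENNReal.ofReal (ballConst N * ((R + h) ^ N - R ^ N)) := by
  have : Nontrivial V := Module.nontrivial_of_finrank_pos (R := ℝ) (by omega)
  have e : {x : V | R ≤ ‖x‖ ∧ ‖x‖ ≤ R + h} = Metric.closedBall 0 (R + h) \ Metric.ball 0 R := by
    ext x; simp [and_comm]
  have hb := ballConst_pos N
  rw [e, measure_sdiff ((Metric.ball_subset_ball (by linarith)).trans Metric.ball_subset_closedBall)
    Metric.isOpen_ball.measurableSet.nullMeasurableSet Metric.isBounded_ball.measure_lt_top.ne,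
    ← Measure.addHaar_closedBall_eq_addHaar_ball, volume_closedBall_eq hN hV (by linarith),
    volume_closedBall_eq hN hV hR.le, ← ENNReal.ofReal_sub _ (by positivity), mul_sub]

lemma euclideanHausdorffMeasure_sphere_le {m : ℕ} (hV : Module.finrank ℝ V = m + 1) {R : ℝ}
    (hR : 0 < R) : μHE[m] (Metric.sphere (0 : V) R) ≤
      ENNReal.ofReal (ballConst (m + 1) * ((m + 1 : ℕ) * R ^ m)) := by
  refine le_of_mul_le_pow_sub (n := m + 1) fun h hh => ?_
  have h1 := euclideanHausdorffMeasure_mul_le_shell (P := ContinuousLinearMap.id ℝ V) hV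
    (fun _ _ => rfl) (fun _ => rfl) hR MeasurableSet.univ (h := h)
  have e : univ ∩ {x : V | ‖ContinuousLinearMap.id ℝ V x‖ = R} = Metric.sphere 0 R := by
    ext x; simp
  rw [e] at h1
  refine h1.trans (le_trans (measure_mono fun x hx => ?_) (volume_shell_le le_add_self hV hR hh))
  exact ⟨hx.1, hx.2.1⟩

end Shell

/-- Orthogonal projection of `ℝ × ℝ × ℝⁿ` onto its last factor. -/
def lastProj (n : ℕ) : LineProd (LineProd (EucSp n)) →L[ℝ] LineProd (LineProd (EucSp n)) :=
  LinearMap.toContinuousLinearMap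
    { toFun := fun q => WithLp.toLp 2 (0, WithLp.toLp 2 (0, q.snd.snd))
      map_add' := fun _ _ => congrArg (WithLp.toLp 2) (Prod.ext (add_zero 0).symm
        (congrArg (WithLp.toLp 2) (Prod.ext (add_zero 0).symm rfl)))
      map_smul' := fun c _ => congrArg (WithLp.toLp 2) (Prod.ext (smul_zero c).symm
        (congrArg (WithLp.toLp 2) (Prod.ext (smul_zero c).symm rfl))) }

lemma lastProj_apply (n : ℕ) (q : LineProd (LineProd (EucSp n))) :
    lastProj n q = WithLp.toLp 2 (0, WithLp.toLp 2 (0, q.snd.snd)) := rfl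

lemma norm_lastProj (n : ℕ) (q : LineProd (LineProd (EucSp n))) :
    ‖lastProj n q‖ = ‖q.snd.snd‖ := by
  have h1 := lineProd_norm_sq (lastProj n q)
  have h2 := lineProd_norm_sq (lastProj n q).snd
  change _ = (0 : ℝ) ^ 2 + _ at h1
  change _ = (0 : ℝ) ^ 2 + ‖q.snd.snd‖ ^ 2 at h2
  rw [h2] at h1
  exact (sq_eq_sq₀ (norm_nonneg _) (norm_nonneg _)).mp (by linarith)

lemma inner_lastProj (n : ℕ) (x y : LineProd (LineProd (EucSp n))) :
    inner ℝ (lastProj n x) y = (inner ℝ (lastProj n x) (lastProj n y) : ℝ) := by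
  simp only [WithLp.prod_inner_apply, lastProj_apply]
  simp

lemma euclideanHausdorffMeasure_tube_le {n : ℕ} (hn : 1 ≤ n) {L₁ L₂ R : ℝ} (hR : 0 < R)
    (h₁ : 0 < L₁) (h₂ : 0 < L₂) :
    μHE[n + 1] {q : LineProd (LineProd (EucSp n)) |
        q ∈ prodDom (Ico 0 L₁) (prodDom (Ico 0 L₂) univ) ∧ ‖q.snd.snd‖ = R} ≤
      ENNReal.ofReal (L₁ * L₂ * ballConst n * (n * R ^ (n - 1))) := by
  refine le_of_mul_le_pow_sub (n := n) fun h hh => ?_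
  have hV : Module.finrank ℝ (LineProd (LineProd (EucSp n))) = n + 1 + 1 := by
    rw [finrank_lineProd, finrank_lineProd, finrank_euclideanSpace_fin]
  have h1 := euclideanHausdorffMeasure_mul_le_shell (P := lastProj n) hV (inner_lastProj n)
    (fun _ => rfl) hR (measurableSet_prodDom (measurableSet_Ico (a := 0) (b := L₁))
      (measurableSet_prodDom (measurableSet_Ico (a := 0) (b := L₂)) MeasurableSet.univ)) (h := h)
  have e : {q : LineProd (LineProd (EucSp n)) |
      q ∈ prodDom (Ico 0 L₁) (prodDom (Ico 0 L₂) univ) ∧ ‖q.snd.snd‖ = R} =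
      prodDom (Ico 0 L₁) (prodDom (Ico 0 L₂) univ) ∩ {x | ‖lastProj n x‖ = R} := by
    ext q; simp only [norm_lastProj]; rfl
  rw [e]
  refine h1.trans ?_
  have hsub : {x | R ≤ ‖lastProj n x‖ ∧ ‖lastProj n x‖ ≤ R + h ∧ radialRetract (lastProj n) R x ∈
      prodDom (Ico 0 L₁) (prodDom (Ico 0 L₂) univ)} ⊆
      prodDom (Ico 0 L₁) (prodDom (Ico 0 L₂) {x : EucSp n | R ≤ ‖x‖ ∧ ‖x‖ ≤ R + h}) := by
    rintro q ⟨hq1, hq2, hq3, hq4, -⟩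
    have e1 : (radialRetract (lastProj n) R q).fst = q.fst := by
      show q.fst - 0 + (R / ‖lastProj n q‖) • 0 = q.fst
      simp
    have e2 : (radialRetract (lastProj n) R q).snd.fst = q.snd.fst := by
      show q.snd.fst - 0 + (R / ‖lastProj n q‖) • 0 = q.snd.fst
      simp
    rw [norm_lastProj] at hq1 hq2
    rw [e1] at hq3
    rw [e2] at hq4
    exact ⟨hq3, hq4, hq1, hq2⟩
  refine (measure_mono hsub).trans ?_
  rw [volume_prodDom', volume_prodDom', Real.volume_Ico, Real.volume_Ico, sub_zero, sub_zero,
    mul_assoc (L₁ * L₂), ENNReal.ofReal_mul (by positivity), ENNReal.ofReal_mul h₁.le, mul_assoc]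
  gcongr
  exact volume_shell_le hn finrank_euclideanSpace_fin hR hh

/-- The ratio between Lebesgue measure and Mathlib's Hausdorff measure in dimension `d`. -/
def hausScale (d : ℕ) : ℝ≥0 :=
  Measure.addHaarScalarFactor (volume : Measure (EucSp d)) (μH[(d : ℝ)] : Measure (EucSp d))

lemma hausScale_ne_zero (d : ℕ) : hausScale d ≠ 0 :=
  Measure.addHaarScalarFactor_volume_hausdorffMeasure_ne_zero d

lemma hausScale_pos (d : ℕ) : (0 : ℝ) < hausScale d :=
  NNReal.coe_pos.mpr (pos_iff_ne_zero.mpr (hausScale_ne_zero d))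

lemma hausScale_mul_haus {Y : Type*} [EMetricSpace Y] [hm : MeasurableSpace Y] [BorelSpace Y] (d : ℕ)
    (s : Set Y) : (hausScale d : ℝ≥0∞) * haus Y d s = μHE[d] s := by
  have hb : hm = borel Y := BorelSpace.measurable_eq
  have h : haus Y d s = μH[(d : ℝ)] s := by subst hb; rfl
  rw [Measure.euclideanHausdorffMeasure_def, h]
  rfl

lemma hausScale_mul_inj {d : ℕ} {a b : ℝ≥0∞}
    (h : (hausScale d : ℝ≥0∞) * a = hausScale d * b) : a = b :=
  (ENNReal.mul_right_inj (by exact_mod_cast hausScale_ne_zero d) ENNReal.coe_ne_top).mp h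

lemma haus_eq_iff {Y : Type*} [EMetricSpace Y] [MeasurableSpace Y] [BorelSpace Y] {d : ℕ}
    {s : Set Y} {v : ℝ} :
    haus Y d s = ENNReal.ofReal v ↔ μHE[d] s = ENNReal.ofReal (hausScale d * v) := by
  rw [← hausScale_mul_haus, ENNReal.ofReal_mul (hausScale_pos d).le, ENNReal.ofReal_coe_nnreal]
  exact ⟨fun h => by rw [h], hausScale_mul_inj⟩

lemma le_haus_iff {Y : Type*} [EMetricSpace Y] [MeasurableSpace Y] [BorelSpace Y] {d : ℕ}
    {s : Set Y} {a : ℝ≥0∞} : a / hausScale d ≤ haus Y d s ↔ a ≤ μHE[d] s := by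
  rw [← hausScale_mul_haus, ENNReal.div_le_iff_le_mul
    (Or.inl (by exact_mod_cast hausScale_ne_zero d)) (Or.inl ENNReal.coe_ne_top), mul_comm]

lemma haus_le_iff {Y : Type*} [EMetricSpace Y] [MeasurableSpace Y] [BorelSpace Y] {d : ℕ}
    {s : Set Y} {a : ℝ≥0∞} : haus Y d s ≤ a / hausScale d ↔ μHE[d] s ≤ a := by
  rw [← hausScale_mul_haus, ENNReal.le_div_iff_mul_le
    (Or.inl (by exact_mod_cast hausScale_ne_zero d)) (Or.inl ENNReal.coe_ne_top), mul_comm]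

namespace IsFlatCover

variable {V Y : Type*} [NormedAddCommGroup V] [InnerProductSpace ℝ V] [FiniteDimensional ℝ V]
  [MeasurableSpace V] [BorelSpace V] [EMetricSpace Y] {p : V → Y} {D Λ : Set V}

lemma le_isoProfile (hp : IsFlatCover p D Λ) {m : ℕ} (hV : Module.finrank ℝ V = m + 1)
    {Ψ : ℝ → ℝ} (hiso : RelaxedIso D Λ Ψ) {v : ℝ} (hv : 0 ≤ v) :
    ENNReal.ofReal (Ψ (hausScale (m + 1) * v)) / hausScale m ≤
      isoProfile Y (m + 1) (ENNReal.ofReal v) := by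
  let _ : MeasurableSpace Y := borel Y
  have _ : BorelSpace Y := ⟨rfl⟩
  refine le_iInf₂ fun U hU => ?_
  obtain ⟨⟨W, -, hWU⟩, hvol⟩ := hU
  rw [haus_eq_iff] at hvol
  rw [Nat.add_sub_cancel, le_haus_iff]
  have h := hp.le_of_relaxedIso hV hiso (U := U) (by rw [hWU]; exact isClosed_closure.measurableSet)
    (by rw [hvol]; exact ENNReal.ofReal_ne_top)
  rwa [hvol, ENNReal.toReal_ofReal (mul_nonneg (hausScale_pos _).le hv)] at h

lemma isoProfile_le_of_small (hp : IsFlatCover p D Λ) {m : ℕ} (hV : Module.finrank ℝ V = m + 1) :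
    ∃ v₀ : ℝ, 0 < v₀ ∧ ∀ v, 0 < v → v ≤ v₀ → isoProfile Y (m + 1) (ENNReal.ofReal v) ≤
      ENNReal.ofReal (eucIso (m + 1) (hausScale (m + 1) * v)) / hausScale m := by
  let _ : MeasurableSpace Y := borel Y
  have _ : BorelSpace Y := ⟨rfl⟩
  obtain ⟨δ, hδ, hiso⟩ := hp.exists_isometric
  have hk := hausScale_pos (m + 1)
  have hb := ballConst_pos (m + 1)
  refine ⟨ballConst (m + 1) * (δ / 3) ^ (m + 1) / hausScale (m + 1), by positivity,
    fun v hv hv₀ => ?_⟩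
  rw [le_div_iff₀ hk, mul_comm] at hv₀
  have hkv : 0 < hausScale (m + 1) * v := mul_pos hk hv
  set ρ := ballRadius (m + 1) (hausScale (m + 1) * v) with hρ
  have hρ0 : 0 < ρ := ballRadius_pos hkv
  have hρv : ballConst (m + 1) * ρ ^ (m + 1) = hausScale (m + 1) * v :=
    ballConst_mul_ballRadius_pow le_add_self hkv.le
  have hρδ : ρ ≤ δ / 3 := by
    rw [← hρv] at hv₀
    exact (pow_le_pow_iff_left₀ hρ0.le (by positivity) (Nat.succ_ne_zero m)).mp
      (le_of_mul_le_mul_left hv₀ hb)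
  have hc := hp.lipschitz.continuous
  have hclosed : IsClosed (p '' Metric.closedBall 0 ρ) :=
    ((isCompact_closedBall _ _).image hc).isClosed
  have hclosure : p '' Metric.closedBall 0 ρ = closure (p '' Metric.ball 0 ρ) := by
    refine Subset.antisymm ?_ (closure_minimal (image_mono Metric.ball_subset_closedBall) hclosed)
    rw [← closure_ball _ hρ0.ne']
    exact image_closure_subset_closure_image hc
  have hinj : InjOn p (Metric.closedBall 0 ρ) := by
    intro x hx y hy hxy
    rw [mem_closedBall_zero_iff] at hx hy
    have hd : dist x y < δ := by
      rw [dist_eq_norm]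
      exact (norm_sub_le x y).trans_lt (by linarith)
    rw [← edist_eq_zero, ← hiso x y hd, hxy, edist_self]
  have hvol : μHE[m + 1] (p '' Metric.closedBall 0 ρ) =
      ENNReal.ofReal (hausScale (m + 1) * v) := by
    rw [← hρv, ← volume_closedBall_eq le_add_self hV hρ0.le,
      ← euclideanHausdorffMeasure_eq_volume_of_finrank hV, Measure.euclideanHausdorffMeasure_def,
      Measure.euclideanHausdorffMeasure_def, Measure.smul_apply, Measure.smul_apply,
      hausdorffMeasure_image_of_local_isometry hc hδ hiso (Nat.cast_nonneg _)
        Metric.isClosed_closedBall.measurableSet hinj]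
  refine (iInf₂_le (p '' Metric.closedBall 0 ρ)
    ⟨⟨_, hp.isOpenMap _ Metric.isOpen_ball, hclosure⟩, haus_eq_iff.mpr hvol⟩).trans ?_
  rw [Nat.add_sub_cancel, haus_le_iff]
  have hfr : frontier (p '' Metric.closedBall 0 ρ) ⊆ p '' Metric.sphere 0 ρ := by
    rw [hclosed.frontier_eq]
    rintro _ ⟨⟨x, hx, rfl⟩, hx'⟩
    refine ⟨x, le_antisymm hx (not_lt.mp fun hlt => hx' ?_), rfl⟩
    exact interior_maximal (image_mono Metric.ball_subset_closedBall)
      (hp.isOpenMap _ Metric.isOpen_ball) ⟨x, hlt, rfl⟩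
  have h1 := (hp.lipschitz.lipschitzOnWith (s := Metric.sphere (0 : V) ρ)).euclideanHausdorffMeasure_image_le m
  rw [ENNReal.coe_one, one_pow, one_mul] at h1
  refine (measure_mono hfr).trans (h1.trans
    ((euclideanHausdorffMeasure_sphere_le hV hρ0).trans_eq ?_))
  rw [eucIso_eq_radius le_add_self hkv, Nat.add_sub_cancel, ← hρ]
  congr 1
  ring

lemma isoProfile_eq_of_small (hp : IsFlatCover p D Λ) {m : ℕ} (hV : Module.finrank ℝ V = m + 1)
    {c : ℝ} (hc : 0 < c) (hiso : RelaxedIso D Λ (smallIso (m + 1) c)) :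
    ∃ v₀ : ℝ, 0 < v₀ ∧ ∀ v, 0 < v → v ≤ v₀ → isoProfile Y (m + 1) (ENNReal.ofReal v) =
      ENNReal.ofReal (eucIso (m + 1) (hausScale (m + 1) * v)) / hausScale m := by
  obtain ⟨v₁, hv₁, h₁⟩ := hp.isoProfile_le_of_small hV
  have hk := hausScale_pos (m + 1)
  refine ⟨min v₁ (c / hausScale (m + 1)), by positivity, fun v hv hv₀ =>
    le_antisymm (h₁ v hv (hv₀.trans (min_le_left _ _))) ?_⟩
  have h2 := hp.le_isoProfile hV hiso hv.le
  have h3 := hv₀.trans (min_le_right _ _)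
  rw [le_div_iff₀ hk, mul_comm] at h3
  rwa [smallIso, if_pos h3] at h2

end IsFlatCover

section Torus

variable {r1 r2 : ℝ} {n : ℕ}

lemma isFlatCover_S1R {r : ℝ} (hr : 0 < r) (m : ℕ) :
    IsFlatCover (Y := S1R r m) (circleCover (2 * Real.pi * r) (id : EucSp m → EucSp m))
      (prodDom (Ico 0 (2 * Real.pi * r)) univ) (prodPer {2 * Real.pi * r} ∅) :=
  (isFlatCover_id (EucSp m)).circleCover (by positivity)

lemma isFlatCover_T2R (hr1 : 0 < r1) (hr2 : 0 < r2) (n : ℕ) :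
    IsFlatCover (Y := T2R r1 r2 n) (circleCover (2 * Real.pi * r1)
      (circleCover (2 * Real.pi * r2) (id : EucSp n → EucSp n)))
      (prodDom (Ico 0 (2 * Real.pi * r1)) (prodDom (Ico 0 (2 * Real.pi * r2)) univ))
      (prodPer {2 * Real.pi * r1} (prodPer {2 * Real.pi * r2} ∅)) :=
  (isFlatCover_S1R hr2 n).circleCover (by positivity)

lemma continuous_t2euc : Continuous (t2euc : T2R r1 r2 n → EucSp n) :=
  continuous_snd.comp ((WithLp.homeomorphProd 2 (Circ r2) (EucSp n)).continuous.comp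
    (continuous_snd.comp (WithLp.homeomorphProd 2 (Circ r1) (S1R r2 n)).continuous))

lemma isOpenMap_t2euc : IsOpenMap (t2euc : T2R r1 r2 n → EucSp n) :=
  isOpenMap_snd.comp ((WithLp.homeomorphProd 2 (Circ r2) (EucSp n)).isOpenMap.comp
    (isOpenMap_snd.comp (WithLp.homeomorphProd 2 (Circ r1) (S1R r2 n)).isOpenMap))

lemma tball_eq_preimage (R : ℝ) : tball r1 r2 n R = t2euc ⁻¹' Metric.closedBall 0 R := by
  ext p; simp [tball]

lemma isClosedRegion_tball {R : ℝ} (hR : 0 < R) : IsClosedRegion (tball r1 r2 n R) := by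
  refine ⟨t2euc ⁻¹' Metric.ball 0 R, Metric.isOpen_ball.preimage continuous_t2euc, ?_⟩
  rw [tball_eq_preimage, ← closure_ball _ hR.ne',
    isOpenMap_t2euc.preimage_closure_eq_closure_preimage continuous_t2euc]

lemma frontier_tball {R : ℝ} (hR : 0 < R) :
    frontier (tball r1 r2 n R) = t2euc ⁻¹' Metric.sphere 0 R := by
  rw [tball_eq_preimage, ← isOpenMap_t2euc.preimage_frontier_eq_frontier_preimage continuous_t2euc,
    frontier_closedBall _ hR.ne']

lemma isoProfile_le_fA (v : ℝ≥0∞) : isoProfile (T2R r1 r2 n) (n + 2) v ≤ fA r1 r2 n v :=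
  le_iInf₂ fun R hR => iInf₂_le (tball r1 r2 n R) ⟨isClosedRegion_tball hR.1, hR.2⟩

lemma haus_tball (hr1 : 0 < r1) (hr2 : 0 < r2) (hn : 1 ≤ n) {R v : ℝ} (hR : 0 < R)
    (hRv : 2 * Real.pi * r1 * (2 * Real.pi * r2) * (ballConst n * R ^ n) = hausScale (n + 2) * v) :
    haus (T2R r1 r2 n) (n + 2) (tball r1 r2 n R) = ENNReal.ofReal v := by
  let _ : MeasurableSpace (T2R r1 r2 n) := borel _
  have _ : BorelSpace (T2R r1 r2 n) := ⟨rfl⟩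
  have hcl : IsClosed (tball r1 r2 n R) := by
    rw [tball_eq_preimage]; exact Metric.isClosed_closedBall.preimage continuous_t2euc
  have hV : Module.finrank ℝ (LineProd (LineProd (EucSp n))) = n + 2 := by
    rw [finrank_lineProd, finrank_lineProd, finrank_euclideanSpace_fin]
  rw [haus_eq_iff, ← (isFlatCover_T2R hr1 hr2 n).hausdorffMeasure_preimage_inter' _
    hcl.measurableSet, euclideanHausdorffMeasure_eq_volume_of_finrank hV, ← hRv]
  have e : circleCover (2 * Real.pi * r1) (circleCover (2 * Real.pi * r2) (id : EucSp n → EucSp n))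
      ⁻¹' tball r1 r2 n R ∩
      prodDom (Ico 0 (2 * Real.pi * r1)) (prodDom (Ico 0 (2 * Real.pi * r2)) univ) =
      prodDom (Ico 0 (2 * Real.pi * r1))
        (prodDom (Ico 0 (2 * Real.pi * r2)) (Metric.closedBall 0 R)) := by
    ext q
    constructor
    · rintro ⟨h1, h2, h3, -⟩
      exact ⟨h2, h3, mem_closedBall_zero_iff.mpr h1⟩
    · rintro ⟨h2, h3, h1⟩
      exact ⟨mem_closedBall_zero_iff.mp h1, h2, h3, trivial⟩
  rw [e, volume_prodDom', volume_prodDom', Real.volume_Ico, Real.volume_Ico, sub_zero, sub_zero,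
    volume_closedBall_eq hn finrank_euclideanSpace_fin hR.le, ← ENNReal.ofReal_mul (by positivity),
    ← ENNReal.ofReal_mul (by positivity), mul_assoc (2 * Real.pi * r1)]

lemma haus_frontier_tball_le (hr1 : 0 < r1) (hr2 : 0 < r2) (hn : 1 ≤ n) {R : ℝ} (hR : 0 < R) :
    haus (T2R r1 r2 n) (n + 1) (frontier (tball r1 r2 n R)) ≤
      ENNReal.ofReal (2 * Real.pi * r1 * (2 * Real.pi * r2) * ballConst n * (n * R ^ (n - 1))) /
        hausScale (n + 1) := by
  let _ : MeasurableSpace (T2R r1 r2 n) := borel _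
  have _ : BorelSpace (T2R r1 r2 n) := ⟨rfl⟩
  rw [haus_le_iff, ← (isFlatCover_T2R hr1 hr2 n).hausdorffMeasure_preimage_inter' _
    isClosed_frontier.measurableSet, frontier_tball hR]
  refine le_trans (measure_mono ?_) (euclideanHausdorffMeasure_tube_le hn hR
    (L₁ := 2 * Real.pi * r1) (L₂ := 2 * Real.pi * r2) (by positivity) (by positivity))
  rintro q ⟨h1, h2⟩
  exact ⟨h2, mem_sphere_zero_iff_norm.mp h1⟩

lemma mul_eucIso_div {N : ℕ} {L₁ L₂ w : ℝ} (h₁ : 0 < L₁) (h₂ : 0 < L₂) (hw : 0 < w) :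
    L₁ * L₂ * eucIso N (w / (L₁ * L₂)) =
      N * ballConst N ^ (1 / N : ℝ) * L₂ ^ (1 - ((N - 1) / N : ℝ)) *
        L₁ ^ (1 - ((N - 1) / N : ℝ)) * w ^ ((N - 1) / N : ℝ) := by
  rw [eucIso_of_pos (by positivity), Real.div_rpow hw.le (by positivity),
    Real.mul_rpow h₁.le h₂.le, Real.rpow_sub h₁, Real.rpow_sub h₂, Real.rpow_one, Real.rpow_one]
  ring

lemma fA_le (hr1 : 0 < r1) (hr2 : 0 < r2) (hn : 1 ≤ n) {v : ℝ} (hv : 0 < v) :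
    fA r1 r2 n (ENNReal.ofReal v) ≤ ENNReal.ofReal (n * ballConst n ^ (1 / n : ℝ) *
      (2 * Real.pi * r2) ^ (1 - ((n - 1) / n : ℝ)) * (2 * Real.pi * r1) ^ (1 - ((n - 1) / n : ℝ)) *
      (hausScale (n + 2) * v) ^ ((n - 1) / n : ℝ)) / hausScale (n + 1) := by
  have h₁ : 0 < 2 * Real.pi * r1 := by positivity
  have h₂ : 0 < 2 * Real.pi * r2 := by positivity
  have hkv := mul_pos (hausScale_pos (n + 2)) hv
  set a := hausScale (n + 2) * v / (2 * Real.pi * r1 * (2 * Real.pi * r2)) with ha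
  have ha0 : 0 < a := by positivity
  have hR := ballRadius_pos (m := n) ha0
  refine (iInf₂_le (ballRadius n a) ⟨hR, haus_tball hr1 hr2 hn hR ?_⟩).trans
    ((haus_frontier_tball_le hr1 hr2 hn hR).trans_eq ?_)
  · rw [← mul_eucIso_div h₁ h₂ hkv, ← ha, eucIso_eq_radius hn ha0]
    congr 2
    ring
  · rw [ballConst_mul_ballRadius_pow hn ha0.le, ha]
    field_simp

lemma isoProfile_eq_fA_of_large (hr1 : 0 < r1) (hr2 : 0 < r2) (hn : 1 ≤ n) :
    ∃ v₀ : ℝ, 0 < v₀ ∧ ∀ v, v₀ ≤ v →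
      isoProfile (T2R r1 r2 n) (n + 2) (ENNReal.ofReal v) = fA r1 r2 n (ENNReal.ofReal v) := by
  obtain ⟨c, hc, hiso⟩ := relaxedIso_torus_large (L₁ := 2 * Real.pi * r1) (L₂ := 2 * Real.pi * r2)
    hn (by positivity) (by positivity)
  have hk := hausScale_pos (n + 2)
  refine ⟨c / hausScale (n + 2), by positivity, fun v hv => le_antisymm (isoProfile_le_fA _) ?_⟩
  have hv0 : 0 < v := lt_of_lt_of_le (by positivity) hv
  have hV : Module.finrank ℝ (LineProd (LineProd (EucSp n))) = n + 1 + 1 := by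
    rw [finrank_lineProd, finrank_lineProd, finrank_euclideanSpace_fin]
  have h := (isFlatCover_T2R hr1 hr2 n).le_isoProfile hV hiso hv0.le
  rw [div_le_iff₀ hk, mul_comm] at hv
  rw [largeIso, if_pos hv, max_eq_left (by positivity)] at h
  exact (fA_le hr1 hr2 hn hv0).trans h

end Torus

end

/-- Theorem 2 of the paper.
Let `0 < r1 ≤ r2` and `2 ≤ n ≤ 5`.  Then there are `0 < ṽ* ≤ ṽ**` such that the
isoperimetric profile of `T² × ℝⁿ = S¹_{r1} × S¹_{r2} × ℝⁿ` satisfies: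
for `0 < v ≤ ṽ*` it equals the isoperimetric profile of `S¹_{r1} × ℝ^{n+1}`,
and for `v ≥ ṽ**` it equals `f_n(v)`. -/
theorem isoperimetric_profile_T2xRn (r1 r2 : ℝ) (hr1 : 0 < r1) (hr12 : r1 ≤ r2)
    (n : ℕ) (hn2 : 2 ≤ n) (hn5 : n ≤ 5) :
    ∃ vs vss : ℝ, 0 < vs ∧ vs ≤ vss ∧
      (∀ v : ℝ, 0 < v → v ≤ vs →
        isoProfile (T2R r1 r2 n) (n+2) (ENNReal.ofReal v)
          = isoProfile (S1R r1 (n+1)) (n+2) (ENNReal.ofReal v)) ∧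
      (∀ v : ℝ, vss ≤ v →
        isoProfile (T2R r1 r2 n) (n+2) (ENNReal.ofReal v)
          = fA r1 r2 n (ENNReal.ofReal v)) := by
  have hr2 : 0 < r2 := hr1.trans_le hr12
  have hn : 1 ≤ n := by omega
  obtain ⟨c, hc, hiso⟩ := relaxedIso_torus_small (L₁ := 2 * Real.pi * r1) (L₂ := 2 * Real.pi * r2)
    hn (by positivity) (by positivity)
  obtain ⟨c', hc', hiso'⟩ := relaxedIso_cylinder_small (m := n + 1) (L := 2 * Real.pi * r1)
    (by omega) (by positivity)
  obtain ⟨v₁, hv₁, h₁⟩ := (isFlatCover_T2R hr1 hr2 n).isoProfile_eq_of_small (m := n + 1)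
    (by rw [finrank_lineProd, finrank_lineProd, finrank_euclideanSpace_fin]) hc hiso
  obtain ⟨v₂, hv₂, h₂⟩ := (isFlatCover_S1R hr1 (n + 1)).isoProfile_eq_of_small (m := n + 1)
    (by rw [finrank_lineProd, finrank_euclideanSpace_fin]) hc' hiso'
  obtain ⟨v₃, hv₃, h₃⟩ := isoProfile_eq_fA_of_large hr1 hr2 hn
  exact ⟨min v₁ v₂, max (min v₁ v₂) v₃, lt_min hv₁ hv₂, le_max_left _ _,
    fun v hv hv' => (h₁ v hv (hv'.trans (min_le_left _ _))).trans
      (h₂ v hv (hv'.trans (min_le_right _ _))).symm,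
    fun v hv => h₃ v ((le_max_right _ _).trans hv)⟩

end
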